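/- arXiv:0902.0132 — 2 statements merged into one kernel-verified Lean document; each statement's English description precedes it below -/
import Mathlib

section
/- Sample concentration, local version: let f be a graph parameter (a real-valued isomorphism-invariant function on finite simple graphs) such that |f(G) − f(G')| ≤ 1 whenever G and G' are graphs on the same vertex set that differ only in edges incident with a single node. Then for every finite simple graph G and every integer 1 ≤ k ≤ |V(G)| there is a real number f_0 such that for every t > 0, if S is a uniformly random k-element subset of V(G), then |f(G[S]) − f_0| < √(2tk) with probability at least 1 − e^{−t}. -/
open Finset
open scoped Classical

-- The subgraph of `G` induced by the vertex subset `S`, presented as a graph on `Fin S.card`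
-- (via the order isomorphism between `Fin S.card` and `S`).
noncomputable def inducedCopy {n : ℕ} (G : SimpleGraph (Fin n)) (S : Finset (Fin n)) :
    SimpleGraph (Fin S.card) :=
  SimpleGraph.comap (fun i => (S.orderIsoOfFin rfl i).1) G

open MeasureTheory ProbabilityTheory Real
open scoped BigOperators NNReal

/-!
Decompose a uniform `k`-subset into a uniform first element and a uniform `(k - 1)`-subset of the
rest. Exchanging one vertex changes `X S = f (G[S])` by at most `1`, so the conditional means given
the first element differ by at most `1`, and Hoeffding's lemma with induction on `k` makes `X - 𝔼 X`
sub-Gaussian with variance proxy `k / 4`.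

A two-sided Chernoff bound would give `1 - 2 exp (-t)`; the factor `2` is removed by the choice of
the center `f₀`. After rescaling to proxy `1/4`, suppose that each atom `y` of the law has a
deficient radius `ρ`, one for which the ball around `y` has mass less than `1 - exp (-ρ² / 2)`.
Moving greedily outwards from `0` over deficient balls shows that the law puts too little mass near
`0` on either half-line, so its second moment exceeds `1/4`, whereas a sub-Gaussian variable has
variance at most its proxy.
-/

section RealEstimates

/-- The mass that a light point `y` (see `IsLight`) may have on `[0, y)`, as a function of `s = y²`.
It is quadratic in `s` so that it dominates `1 - exp (-s / 2)` on `[0, 11/25]` while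
`y ↦ massBudget (y²)` stays superadditive. -/
noncomputable def massBudget (s : ℝ) : ℝ := s / 2 - s ^ 2 / 12

lemma massBudget_mono {r s : ℝ} (hrs : r ≤ s) (hs : s ≤ 3) : massBudget r ≤ massBudget s := by
  unfold massBudget
  nlinarith

lemma one_sub_exp_neg_half_le_massBudget {r : ℝ} (h0 : 0 ≤ r) (hr : r ≤ 11 / 25) :
    1 - exp (-(r / 2)) ≤ massBudget r := by
  have h_exp : (1 - r / 2 / (4 : ℕ)) ^ 4 ≤ exp (-(r / 2)) :=
    one_sub_div_pow_le_exp_neg (by push_cast; linarith)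
  have h_poly : 1 - massBudget r ≤ (1 - r / 2 / (4 : ℕ)) ^ 4 := by
    unfold massBudget
    push_cast
    nlinarith [pow_nonneg h0 2, pow_nonneg h0 3, pow_nonneg h0 4,
      mul_nonneg (sub_nonneg.2 hr) (pow_nonneg h0 2)]
  linarith

lemma massBudget_sq_add_le {a b : ℝ} (ha : 0 ≤ a) (hb : 0 ≤ b) (hab : (a + b) ^ 2 ≤ 3 / 2) :
    massBudget (a ^ 2) + massBudget (b ^ 2) ≤ massBudget ((a + b) ^ 2) := by
  unfold massBudget
  nlinarith [mul_nonneg ha hb, mul_nonneg (mul_nonneg ha hb) (sub_nonneg.2 hab)]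

lemma two_mul_negMulLog_one_half : 2 * negMulLog (1 / 2) = log 2 := by
  simp [negMulLog]

lemma two_mul_negMulLog_one_quarter : 2 * negMulLog (1 / 4) = log 2 := by
  rw [negMulLog, one_div, log_inv, log_four_eq]
  ring

lemma le_two_mul_negMulLog_two_thirds : 8 / 15 ≤ 2 * negMulLog (2 / 3) := by
  have h_log : 2 / 5 ≤ log (3 / 2) := by
    convert le_log_one_add_of_nonneg (x := 1 / 2) (by norm_num) using 1 <;> norm_num
  have h_inv : log (2 / 3) = -log (3 / 2) := by
    rw [← log_inv]; norm_num
  rw [negMulLog, h_inv]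
  linarith

lemma chord_le_negMulLog {a b e : ℝ} (ha : 0 ≤ a) (hab : a < b) (he : e ∈ Set.Icc a b) :
    (b - e) * negMulLog a + (e - a) * negMulLog b ≤ (b - a) * negMulLog e := by
  have hba : 0 < b - a := sub_pos.2 hab
  have h := concaveOn_negMulLog.2 (Set.mem_Ici.2 ha) (Set.mem_Ici.2 (ha.trans hab.le))
    (div_nonneg (sub_nonneg.2 he.2) hba.le) (div_nonneg (sub_nonneg.2 he.1) hba.le)
    (by field_simp; ring)
  have h_point : (b - e) / (b - a) * a + (e - a) / (b - a) * b = e := by field_simp; ring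
  simp only [smul_eq_mul] at h
  rw [h_point] at h
  calc (b - e) * negMulLog a + (e - a) * negMulLog b
      = (b - a) * ((b - e) / (b - a) * negMulLog a + (e - a) / (b - a) * negMulLog b) := by
        field_simp
    _ ≤ _ := by gcongr

lemma one_sub_le_of_negMulLog_lt {s e : ℝ} (hs : s < 11 / 25) (he : e ∈ Set.Ioc (1 / 4) 1)
    (h : 2 * negMulLog e < 1 / 4 + s) :
    1 - e ≤ 1 / 25 + 21 / 20 * s ∨ 1 - e ≤ 5 / 32 + 5 / 8 * s := by
  have h_log := log_two_gt_d9
  have h_half := two_mul_negMulLog_one_half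
  have h_quarter := two_mul_negMulLog_one_quarter
  have h_thirds := le_two_mul_negMulLog_two_thirds
  -- By concavity `negMulLog` lies above its chords between the nodes `1/4, 1/2, 2/3, 1`.
  rcases le_or_gt e (1 / 2) with he_half | he_half
  · have h_chord := chord_le_negMulLog (a := 1 / 4) (b := 1 / 2) (by norm_num) (by norm_num)
      ⟨he.1.le, he_half⟩
    nlinarith [he.1]
  rcases le_or_gt e (2 / 3) with he_thirds | he_thirds
  · left
    have h_chord := chord_le_negMulLog (a := 1 / 2) (b := 2 / 3) (by norm_num) (by norm_num)
      ⟨he_half.le, he_thirds⟩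
    nlinarith
  · right
    have h_chord := chord_le_negMulLog (a := 2 / 3) (b := 1) (by norm_num) (by norm_num)
      ⟨he_thirds.le, he.2⟩
    rw [negMulLog_one] at h_chord
    nlinarith [mul_le_mul_of_nonneg_left h_thirds (sub_nonneg.2 he.2)]

lemma mul_massBudget_add_mul_one_sub_lt {s e : ℝ} (hs0 : 0 ≤ s) (hs : s < 11 / 25)
    (he : e ∈ Set.Ioc (1 / 4) 1) (h : 2 * negMulLog e < 1 / 4 + s) :
    s * massBudget s + (11 / 25 - s) * (1 - e) < 19 / 200 := by
  unfold massBudget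
  have hs' : 0 ≤ 11 / 25 - s := by linarith
  rcases one_sub_le_of_negMulLog_lt hs he h with h_le | h_le
  · nlinarith [mul_le_mul_of_nonneg_left h_le hs', sq_nonneg (s - 8 / 25),
      mul_nonneg hs0 (sq_nonneg (s - 8 / 25)), pow_nonneg hs0 3]
  · nlinarith [mul_le_mul_of_nonneg_left h_le hs', sq_nonneg (s - 2 / 5),
      mul_nonneg hs0 (sq_nonneg (s - 2 / 5)), pow_nonneg hs0 3]

lemma mul_massBudget_add_mul_massBudget_lt {s : ℝ} :
    11 / 25 * massBudget s + (11 / 25 - s) * massBudget (11 / 25) < 19 / 200 := by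
  unfold massBudget
  nlinarith [sq_nonneg (s - 11 / 50)]

end RealEstimates

section Moments

lemma two_add_sq_le_exp_add_exp_neg (u : ℝ) : 2 + u ^ 2 ≤ exp u + exp (-u) := by
  have h_abs : 0 ≤ |u| / 2 := by positivity
  have h_sinh : |u| / 2 ≤ sinh (|u| / 2) := self_le_sinh_iff.2 h_abs
  have h_cosh : cosh u = 1 + 2 * sinh (|u| / 2) ^ 2 := by
    rw [← cosh_abs, ← mul_div_cancel₀ |u| (two_ne_zero' ℝ), cosh_two_mul, cosh_sq]
    ring_nf
  nlinarith [cosh_eq u, pow_le_pow_left₀ h_abs h_sinh 2, sq_abs u]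

lemma le_of_forall_mul_le_exp_mul_sub_one {a c : ℝ}
    (h : ∀ r : ℝ, 0 < r → a * r ≤ exp (c * r) - 1) : a ≤ c := by
  have h_deriv : HasDerivAt (fun r ↦ exp (c * r)) c 0 := by
    simpa using ((hasDerivAt_id (0 : ℝ)).const_mul c).exp
  refine ge_of_tendsto h_deriv.tendsto_slope_zero_right ?_
  filter_upwards [self_mem_nhdsWithin] with r (hr : 0 < r)
  rw [smul_eq_mul, inv_mul_eq_div, le_div_iff₀ hr]
  simpa using h r hr

variable {Ω : Type*} {mΩ : MeasurableSpace Ω} {μ : Measure Ω} [IsProbabilityMeasure μ]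
  {X : Ω → ℝ} {c : ℝ≥0}

lemma integral_eq_zero_of_hasSubgaussianMGF (h : HasSubgaussianMGF X c μ) : ∫ ω, X ω ∂μ = 0 := by
  have h_interior : 0 ∈ interior (integrableExpSet X μ) := by
    simp [h.integrableExpSet_eq_univ]
  have h_mgf : HasDerivAt (mgf X μ) (∫ ω, X ω ∂μ) 0 := by
    simpa using hasDerivAt_mgf h_interior
  have h_exp : HasDerivAt (fun t : ℝ ↦ exp (c * t ^ 2 / 2)) 0 0 := by
    simpa using ((((hasDerivAt_id (0 : ℝ)).pow 2).const_mul (c : ℝ)).div_const 2).exp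
  have h_min : IsLocalMin (fun t ↦ exp (c * t ^ 2 / 2) - mgf X μ t) 0 :=
    .of_forall fun t ↦ by simpa using h.mgf_le t
  simpa using h_min.hasDerivAt_eq_zero (h_exp.sub h_mgf)

lemma integral_sq_le_of_hasSubgaussianMGF (h : HasSubgaussianMGF X c μ) :
    ∫ ω, X ω ^ 2 ∂μ ≤ c := by
  have h_sq : Integrable (fun ω ↦ X ω ^ 2) μ := (h.memLp 2).integrable_sq
  have h_quadratic (t : ℝ) : 2 + t ^ 2 * ∫ ω, X ω ^ 2 ∂μ ≤ 2 * exp (c * t ^ 2 / 2) :=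
    calc 2 + t ^ 2 * ∫ ω, X ω ^ 2 ∂μ = ∫ ω, (2 + t ^ 2 * X ω ^ 2) ∂μ := by
          rw [integral_add (integrable_const _) (h_sq.const_mul _), integral_const_mul]
          simp
      _ ≤ ∫ ω, (exp (t * X ω) + exp (-t * X ω)) ∂μ := by
          refine integral_mono ((integrable_const _).add (h_sq.const_mul _))
            ((h.integrable_exp_mul t).add (h.integrable_exp_mul (-t))) fun ω ↦ ?_
          simpa [mul_pow] using two_add_sq_le_exp_add_exp_neg (t * X ω)
      _ = mgf X μ t + mgf X μ (-t) :=
          integral_add (h.integrable_exp_mul t) (h.integrable_exp_mul (-t))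
      _ ≤ 2 * exp (c * t ^ 2 / 2) := by
          have h_neg := h.mgf_le (-t)
          rw [neg_sq] at h_neg
          linarith [h.mgf_le t]
  refine le_of_forall_mul_le_exp_mul_sub_one fun r hr ↦ ?_
  have h_sqrt := h_quadratic √(2 * r)
  rw [sq_sqrt (by positivity), mul_left_comm, mul_div_cancel_left₀ _ (two_ne_zero' ℝ)]
    at h_sqrt
  linarith

end Moments

section Deficient

/-- The radius `ρ` witnesses that `y` is not a center of `ν`: the ball of radius `ρ` around `y`
misses more than the admissible mass `exp (-ρ² / 2)`. -/
def IsDeficientRadius (ν : Measure ℝ) (y ρ : ℝ) : Prop :=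
  0 < ρ ∧ ν.real (Metric.ball y ρ) < 1 - exp (-(ρ ^ 2 / 2))

variable {ν : Measure ℝ} {c : ℝ≥0} {y ρ : ℝ}

lemma IsDeficientRadius.map_neg (hρ : IsDeficientRadius ν y ρ) :
    IsDeficientRadius (ν.map Neg.neg) (-y) ρ := by
  have h_preimage : Neg.neg ⁻¹' Metric.ball (-y) ρ = Metric.ball y ρ := by
    ext x; simp
  refine ⟨hρ.1, ?_⟩
  rw [map_measureReal_apply measurable_neg measurableSet_ball, h_preimage]
  exact hρ.2

lemma measureReal_le_abs_sub_le [IsFiniteMeasure ν] (h : HasSubgaussianMGF id c ν) (hy : |y| ≤ ρ) :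
    ν.real {x | ρ ≤ |x - y|} ≤
      exp (-(ρ + y) ^ 2 / (2 * c)) + exp (-(ρ - y) ^ 2 / (2 * c)) := by
  have h_right := h.measure_ge_le (ε := ρ + y) (by linarith [neg_abs_le y])
  have h_left := h.neg.measure_ge_le (ε := ρ - y) (by linarith [le_abs_self y])
  refine le_trans ?_ (add_le_add h_right h_left)
  refine (measureReal_mono fun x (hx : ρ ≤ |x - y|) ↦ ?_).trans (measureReal_union_le _ _)
  rcases le_abs.1 hx with hx | hx
  · left; change ρ + y ≤ x; linarith
  · right; change ρ - y ≤ -x; linarith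

variable [IsProbabilityMeasure ν]

lemma integral_sub_sq_le_of_hasSubgaussianMGF (h : HasSubgaussianMGF id c ν) (y : ℝ) :
    ∫ x, (x - y) ^ 2 ∂ν ≤ c + y ^ 2 := by
  have h_id : Integrable (fun x : ℝ ↦ x) ν := h.integrable
  have h_sq : Integrable (fun x : ℝ ↦ x ^ 2) ν := (h.memLp 2).integrable_sq
  have h_centered : Integrable (fun x : ℝ ↦ x ^ 2 - 2 * y * x) ν := h_sq.sub (h_id.const_mul _)
  have h_mean : ∫ x, x ∂ν = 0 := integral_eq_zero_of_hasSubgaussianMGF h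
  have h_expand (x : ℝ) : (x - y) ^ 2 = x ^ 2 - 2 * y * x + y ^ 2 := by ring
  simp only [h_expand]
  rw [integral_add h_centered (integrable_const _), integral_sub h_sq (h_id.const_mul _),
    integral_const_mul, h_mean]
  simpa using integral_sq_le_of_hasSubgaussianMGF h

lemma measureReal_ball_eq_one_sub :
    ν.real (Metric.ball y ρ) = 1 - ν.real {x | ρ ≤ |x - y|} := by
  have h_compl : {x | ρ ≤ |x - y|} = (Metric.ball y ρ)ᶜ := by
    ext x; simp [Real.dist_eq]
  rw [h_compl, probReal_compl_eq_one_sub measurableSet_ball, sub_sub_cancel]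

lemma IsDeficientRadius.exp_lt_measureReal (hρ : IsDeficientRadius ν y ρ) :
    exp (-(ρ ^ 2 / 2)) < ν.real {x | ρ ≤ |x - y|} := by
  linarith [hρ.2, measureReal_ball_eq_one_sub (ν := ν) (y := y) (ρ := ρ)]

lemma IsDeficientRadius.two_mul_negMulLog_exp_lt (hρ : IsDeficientRadius ν y ρ)
    (h : HasSubgaussianMGF id c ν) : 2 * negMulLog (exp (-(ρ ^ 2 / 2))) < c + y ^ 2 := by
  have h_int : Integrable (fun x ↦ (x - y) ^ 2) ν :=
    ((h.memLp 2).sub (memLp_const y)).integrable_sq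
  have h_markov := mul_meas_ge_le_integral_of_nonneg
    (.of_forall fun x ↦ sq_nonneg (x - y)) h_int (ρ ^ 2)
  simp only [sq_le_sq, abs_of_pos hρ.1] at h_markov
  calc 2 * negMulLog (exp (-(ρ ^ 2 / 2))) = ρ ^ 2 * exp (-(ρ ^ 2 / 2)) := by
        rw [negMulLog, log_exp]; ring
    _ < ρ ^ 2 * ν.real {x | ρ ≤ |x - y|} := by
        gcongr
        · exact pow_pos hρ.1 2
        · exact hρ.exp_lt_measureReal
    _ ≤ ∫ x, (x - y) ^ 2 ∂ν := h_markov
    _ ≤ c + y ^ 2 := integral_sub_sq_le_of_hasSubgaussianMGF h y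

lemma IsDeficientRadius.quarter_lt_exp (hρ : IsDeficientRadius ν y ρ)
    (h : HasSubgaussianMGF id (1 / 4) ν) (hy0 : 0 ≤ y) (hy : y ^ 2 < 11 / 25) :
    1 / 4 < exp (-(ρ ^ 2 / 2)) := by
  by_contra! h_exp
  have h_large : 277 / 100 ≤ ρ ^ 2 := by
    have h_exponent : -(ρ ^ 2 / 2) ≤ -log 4 := by
      rw [← log_inv, le_log_iff_exp_le (by norm_num)]; simpa using h_exp
    linarith [log_two_gt_d9, log_four_eq]
  have h_rho : 83 / 50 ≤ ρ := by nlinarith [hρ.1]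
  have h_y : y ≤ 133 / 200 := by nlinarith
  have h_half : exp (-(1 / 2)) ≤ 2 / 3 := by
    rw [exp_neg]
    exact inv_le_of_inv_le₀ (by norm_num) (by linarith [add_one_le_exp (1 / 2 : ℝ)])
  have h_four : exp (-4) ≤ 1 / 5 := by
    rw [exp_neg]
    exact inv_le_of_inv_le₀ (by norm_num) (by linarith [add_one_le_exp (4 : ℝ)])
  have h_right : exp (-(ρ + y) ^ 2 / (2 * (1 / 4))) ≤ exp (-(ρ ^ 2 / 2)) * exp (-4) := by
    rw [← exp_add, exp_le_exp, div_le_iff₀ (by norm_num)]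
    linarith [mul_nonneg hρ.1.le hy0, sq_nonneg y]
  have h_left : exp (-(ρ - y) ^ 2 / (2 * (1 / 4))) ≤ exp (-(ρ ^ 2 / 2)) * exp (-(1 / 2)) := by
    rw [← exp_add, exp_le_exp, div_le_iff₀ (by norm_num)]
    have h_prod : 8 / 25 * (8 / 5) ≤ (ρ - 2 * y) * (3 / 2 * ρ - y) := by gcongr <;> linarith
    linarith
  have h_tail := hρ.exp_lt_measureReal.trans_le
    (measureReal_le_abs_sub_le h (by rw [abs_of_nonneg hy0]; linarith))
  push_cast at h_tail
  nlinarith [exp_pos (-(ρ ^ 2 / 2))]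

end Deficient

section Light

/-- A point `y ≥ 0` is light when `[0, y)` has mass at most `massBudget (y²)`. Passing from a light
point over one of its deficient radii and then over a gap of `ν` leads to a light point again. -/
def IsLight (ν : Measure ℝ) (y : ℝ) : Prop := ν.real (Set.Ico 0 y) ≤ massBudget (y ^ 2)

variable {ν : Measure ℝ} {F : Finset ℝ} {y z ρ : ℝ}

lemma measureReal_eq_zero_of_ae_mem {s : Set ℝ} (hF : ∀ᵐ x ∂ν, x ∈ F)
    (h_disj : ∀ x ∈ F, x ∉ s) : ν.real s = 0 := by
  have h_null : ν s = 0 := measure_eq_zero_iff_ae_notMem.2 (hF.mono h_disj)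
  rw [measureReal_def, h_null, ENNReal.toReal_zero]

lemma exists_isLight (hF : ∀ᵐ x ∂ν, x ∈ F) (h_ne : ∃ x ∈ F, 0 ≤ x ∧ x ^ 2 < 11 / 25) :
    ∃ y ∈ F, (0 ≤ y ∧ y ^ 2 < 11 / 25) ∧ IsLight ν y := by
  obtain ⟨y, hy, hy_min⟩ := {x ∈ F | 0 ≤ x ∧ x ^ 2 < 11 / 25}.exists_min_image id
    (h_ne.imp fun x hx ↦ mem_filter.2 hx)
  obtain ⟨hyF, hy0, hy_lt⟩ := mem_filter.1 hy
  refine ⟨y, hyF, ⟨hy0, hy_lt⟩, ?_⟩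
  have h_empty : ν.real (Set.Ico 0 y) = 0 := by
    refine measureReal_eq_zero_of_ae_mem hF fun x hxF hx ↦ ?_
    have hxy : x ^ 2 ≤ y ^ 2 := pow_le_pow_left₀ hx.1 hx.2.le 2
    exact hx.2.not_ge (hy_min x (mem_filter.2 ⟨hxF, hx.1, hxy.trans_lt hy_lt⟩))
  rw [IsLight, h_empty, massBudget]
  nlinarith [sq_nonneg y]

variable [IsFiniteMeasure ν]

lemma IsLight.measureReal_Ico_add_le (hy : IsLight ν y) (hρ : IsDeficientRadius ν y ρ)
    (hρ_le : ρ ^ 2 ≤ 11 / 25) :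
    ν.real (Set.Ico 0 (y + ρ)) ≤ massBudget (y ^ 2) + massBudget (ρ ^ 2) := by
  have h_cover : Set.Ico 0 (y + ρ) ⊆ Set.Ico 0 y ∪ Metric.ball y ρ := by
    intro x ⟨hx0, hxρ⟩
    rw [Real.ball_eq_Ioo]
    rcases lt_or_ge x y with hxy | hyx
    · exact .inl ⟨hx0, hxy⟩
    · exact .inr ⟨by linarith [hρ.1], hxρ⟩
  calc ν.real (Set.Ico 0 (y + ρ)) ≤ ν.real (Set.Ico 0 y) + ν.real (Metric.ball y ρ) :=
        (measureReal_mono h_cover).trans (measureReal_union_le _ _)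
    _ ≤ massBudget (y ^ 2) + massBudget (ρ ^ 2) :=
        add_le_add hy (hρ.2.le.trans (one_sub_exp_neg_half_le_massBudget (sq_nonneg ρ) hρ_le))

lemma IsLight.of_gap (hy : IsLight ν y) (hy0 : 0 ≤ y) (hρ : IsDeficientRadius ν y ρ)
    (hyz : y + ρ ≤ z) (hz : z ^ 2 ≤ 11 / 25) (h_gap : ν.real (Set.Ico (y + ρ) z) = 0) :
    IsLight ν z := by
  have hρ0 : 0 < ρ := hρ.1
  have hρz : ρ ^ 2 ≤ z ^ 2 := by gcongr; linarith
  have hyρz : (y + ρ) ^ 2 ≤ z ^ 2 := by gcongr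
  calc ν.real (Set.Ico 0 z)
      ≤ ν.real (Set.Ico 0 (y + ρ)) + ν.real (Set.Ico (y + ρ) z) :=
        (measureReal_mono Set.Ico_subset_Ico_union_Ico).trans (measureReal_union_le _ _)
    _ ≤ massBudget (y ^ 2) + massBudget (ρ ^ 2) := by
        rw [h_gap, add_zero]
        exact hy.measureReal_Ico_add_le hρ (hρz.trans hz)
    _ ≤ massBudget ((y + ρ) ^ 2) := massBudget_sq_add_le hy0 hρ0.le (by linarith)
    _ ≤ massBudget (z ^ 2) := massBudget_mono hyρz (by linarith)

lemma exists_isLight_gap (hF : ∀ᵐ x ∂ν, x ∈ F)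
    (h_deficient : ∀ y ∈ F, ∃ ρ, IsDeficientRadius ν y ρ)
    (h_ne : ∃ x ∈ F, 0 ≤ x ∧ x ^ 2 < 11 / 25) :
    ∃ y ρ, 0 ≤ y ∧ y ^ 2 < 11 / 25 ∧ IsLight ν y ∧ IsDeficientRadius ν y ρ ∧
      ∀ᵐ x ∂ν, y + ρ ≤ x → 11 / 25 ≤ x ^ 2 := by
  let P : Finset ℝ := {x ∈ F | 0 ≤ x ∧ x ^ 2 < 11 / 25}
  have hP {x : ℝ} : x ∈ P ↔ x ∈ F ∧ 0 ≤ x ∧ x ^ 2 < 11 / 25 := mem_filter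
  -- Take the largest light point of `F`; the greedy step cannot continue beyond it.
  obtain ⟨y, hy, hy_max⟩ := {x ∈ P | IsLight ν x}.exists_max_image id
    ((exists_isLight hF h_ne).imp fun x hx ↦
      mem_filter.2 ⟨hP.2 ⟨hx.1, hx.2.1⟩, hx.2.2⟩)
  obtain ⟨hyP, hy_light⟩ := mem_filter.1 hy
  obtain ⟨hyF, hy0, hy_lt⟩ := hP.1 hyP
  obtain ⟨ρ, hρ⟩ := h_deficient y hyF
  have h_gap : ∀ x ∈ P, x < y + ρ := by
    by_contra! h_far
    obtain ⟨z, hz, hz_min⟩ := {x ∈ P | y + ρ ≤ x}.exists_min_image id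
      (h_far.imp fun x hx ↦ mem_filter.2 hx)
    obtain ⟨hzP, hyz⟩ := mem_filter.1 hz
    have hz_lt : z ^ 2 < 11 / 25 := (hP.1 hzP).2.2
    have h_empty : ν.real (Set.Ico (y + ρ) z) = 0 := by
      refine measureReal_eq_zero_of_ae_mem hF fun x hxF hx ↦ hx.2.not_ge ?_
      have hx0 : 0 ≤ x := by linarith [hρ.1, hx.1]
      have hxz : x ^ 2 ≤ z ^ 2 := pow_le_pow_left₀ hx0 hx.2.le 2
      exact hz_min x (mem_filter.2 ⟨hP.2 ⟨hxF, hx0, hxz.trans_lt hz_lt⟩, hx.1⟩)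
    have h_light := hy_light.of_gap hy0 hρ hyz hz_lt.le h_empty
    have hzy : z ≤ y := hy_max z (mem_filter.2 ⟨hzP, h_light⟩)
    linarith [hρ.1]
  refine ⟨y, ρ, hy0, hy_lt, hy_light, hρ, hF.mono fun x hxF hx ↦ ?_⟩
  by_contra! hx_lt
  exact (h_gap x (hP.2 ⟨hxF, by linarith [hρ.1], hx_lt⟩)).not_ge hx

end Light

section HalfLineDeficit

/-- The part of `∫ (11/25 - x²)₊ ∂ν` coming from `[0, ∞)`. The level `11/25` is a choice: it exceeds
`1/4`, and if both half-lines contribute less than `19/200 = (11/25 - 1/4) / 2`, then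
`∫ x² ∂ν > 1/4`. -/
noncomputable def halfLineDeficit (ν : Measure ℝ) : ℝ :=
  ∫ x in Set.Ici 0, max (11 / 25 - x ^ 2) 0 ∂ν

variable {ν : Measure ℝ} {F : Finset ℝ} {y ρ : ℝ}

lemma halfLineDeficit_le_of_gap [IsFiniteMeasure ν] (hy0 : 0 ≤ y) (hy : y ^ 2 ≤ 11 / 25)
    (hρ : 0 ≤ ρ) (h_gap : ∀ᵐ x ∂ν, y + ρ ≤ x → 11 / 25 ≤ x ^ 2) :
    halfLineDeficit ν ≤
      y ^ 2 * ν.real (Set.Ico 0 y) + (11 / 25 - y ^ 2) * ν.real (Set.Ico 0 (y + ρ)) := by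
  rw [halfLineDeficit, ← integral_indicator measurableSet_Ici]
  calc ∫ x, (Set.Ici 0).indicator (fun x ↦ max (11 / 25 - x ^ 2) 0) x ∂ν
      ≤ ∫ x, ((Set.Ico 0 y).indicator (fun _ ↦ y ^ 2) x +
          (Set.Ico 0 (y + ρ)).indicator (fun _ ↦ 11 / 25 - y ^ 2) x) ∂ν := by
        refine integral_mono_of_nonneg (.of_forall fun x ↦ ?_)
          (.add (.indicator (integrable_const _) measurableSet_Ico)
            (.indicator (integrable_const _) measurableSet_Ico)) ?_
        · exact Set.indicator_nonneg (fun _ _ ↦ le_max_right _ _) x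
        filter_upwards [h_gap] with x hx
        simp only [Set.indicator_apply, Set.mem_Ici, Set.mem_Ico]
        rcases lt_or_ge x 0 with hx0 | hx0
        · simp [hx0.not_ge]
        rcases lt_or_ge x y with hxy | hyx
        · simp only [hx0, hxy, show x < y + ρ by linarith, and_self, if_true]
          exact max_le (by linarith [sq_nonneg x]) (by linarith)
        rcases lt_or_ge x (y + ρ) with hxρ | hρx
        · simp only [hx0, hxρ, hyx.not_gt, and_self, and_false, if_true, if_false]
          exact max_le (by nlinarith) (by linarith)
        · simp only [hx0, hρx.not_gt, hyx.not_gt, and_false, if_true, if_false]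
          exact max_le (by linarith [hx hρx]) (by linarith)
    _ = _ := by
        rw [integral_add (.indicator (integrable_const _) measurableSet_Ico)
            (.indicator (integrable_const _) measurableSet_Ico),
          integral_indicator_const _ measurableSet_Ico,
          integral_indicator_const _ measurableSet_Ico, smul_eq_mul, smul_eq_mul,
          mul_comm, mul_comm (ν.real _)]

variable [IsProbabilityMeasure ν]

lemma halfLineDeficit_lt (h : HasSubgaussianMGF id (1 / 4) ν) (hF : ∀ᵐ x ∂ν, x ∈ F)
    (h_deficient : ∀ y ∈ F, ∃ ρ, IsDeficientRadius ν y ρ) : halfLineDeficit ν < 19 / 200 := by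
  by_cases h_ne : ∃ x ∈ F, 0 ≤ x ∧ x ^ 2 < 11 / 25
  swap
  · push Not at h_ne
    have h_le := halfLineDeficit_le_of_gap (ν := ν) (y := 0) (ρ := 0) le_rfl (by norm_num) le_rfl
      (hF.mono fun x hxF hx ↦ h_ne x hxF (by simpa using hx))
    norm_num at h_le
    linarith
  obtain ⟨y, ρ, hy0, hy_lt, hy, hρ, h_gap⟩ := exists_isLight_gap hF h_deficient h_ne
  have h_le := halfLineDeficit_le_of_gap hy0 hy_lt.le hρ.1.le h_gap
  have h_left : y ^ 2 * ν.real (Set.Ico 0 y) ≤ y ^ 2 * massBudget (y ^ 2) := by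
    gcongr
    exact hy
  have hy_le : 0 ≤ 11 / 25 - y ^ 2 := by linarith
  rcases le_or_gt (ρ ^ 2) (11 / 25) with hρ_le | hρ_gt
  · have h_mass : ν.real (Set.Ico 0 (y + ρ)) ≤ massBudget (y ^ 2) + massBudget (11 / 25) :=
      (hy.measureReal_Ico_add_le hρ hρ_le).trans <|
        add_le_add_right (massBudget_mono hρ_le (by norm_num)) _
    linarith [mul_le_mul_of_nonneg_left h_mass hy_le,
      mul_massBudget_add_mul_massBudget_lt (s := y ^ 2)]
  · have hyρ : y < ρ := lt_of_pow_lt_pow_left₀ 2 hρ.1.le (hy_lt.trans hρ_gt)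
    have h_sub : Set.Ico 0 (y + ρ) ⊆ Metric.ball y ρ := by
      rw [Real.ball_eq_Ioo]
      exact Set.Ico_subset_Ioo_left (by linarith)
    have h_mass : ν.real (Set.Ico 0 (y + ρ)) ≤ 1 - exp (-(ρ ^ 2 / 2)) :=
      (measureReal_mono h_sub).trans hρ.2.le
    have h_chebyshev := hρ.two_mul_negMulLog_exp_lt h
    push_cast at h_chebyshev
    linarith [mul_le_mul_of_nonneg_left h_mass hy_le,
      mul_massBudget_add_mul_one_sub_lt (sq_nonneg y) hy_lt
        ⟨hρ.quarter_lt_exp h hy0 hy_lt, exp_le_one_iff.2 (by linarith [sq_nonneg ρ])⟩ h_chebyshev]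

lemma le_integral_sq_add_halfLineDeficit_add (h : Integrable (fun x ↦ x ^ 2) ν) :
    11 / 25 ≤ ∫ x, x ^ 2 ∂ν + (halfLineDeficit ν + halfLineDeficit (ν.map Neg.neg)) := by
  have h_int : Integrable (fun x : ℝ ↦ max (11 / 25 - x ^ 2) 0) ν :=
    ((integrable_const _).sub h).pos_part
  have h_reflect : halfLineDeficit (ν.map Neg.neg) =
      ∫ x in Set.Iic 0, max (11 / 25 - x ^ 2) 0 ∂ν := by
    rw [halfLineDeficit,
      setIntegral_map measurableSet_Ici (by fun_prop) measurable_neg.aemeasurable]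
    simp
  have h_split : ∫ x, max (11 / 25 - x ^ 2) 0 ∂ν ≤
      halfLineDeficit ν + halfLineDeficit (ν.map Neg.neg) := by
    rw [h_reflect, ← integral_add_compl measurableSet_Ici h_int, Set.compl_Ici, halfLineDeficit]
    gcongr 1
    refine setIntegral_mono_set h_int.integrableOn (.of_forall fun x ↦ le_max_right _ _) ?_
    exact Set.Iio_subset_Iic_self.eventuallyLE
  have h_pointwise : ∫ x : ℝ, 11 / 25 ∂ν ≤ ∫ x, (x ^ 2 + max (11 / 25 - x ^ 2) 0) ∂ν :=
    integral_mono (integrable_const _) (h.add h_int) fun x ↦ by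
      linarith [le_max_left (11 / 25 - x ^ 2) 0]
  rw [integral_add h h_int, integral_const, probReal_univ, one_smul] at h_pointwise
  linarith

theorem exists_forall_one_sub_exp_le_measureReal_ball (h : HasSubgaussianMGF id (1 / 4) ν)
    (hF : ∀ᵐ x ∂ν, x ∈ F) :
    ∃ y ∈ F, ∀ ρ, 0 < ρ → 1 - exp (-(ρ ^ 2 / 2)) ≤ ν.real (Metric.ball y ρ) := by
  by_contra! h_deficient
  have h_neg : HasSubgaussianMGF id (1 / 4) (ν.map Neg.neg) :=
    (HasSubgaussianMGF.id_map_iff measurable_neg.aemeasurable).2 h.neg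
  have hF_neg : ∀ᵐ x ∂ν.map Neg.neg, x ∈ F.image Neg.neg :=
    (ae_map_iff measurable_neg.aemeasurable (F.image Neg.neg).measurableSet).2 <|
      hF.mono fun x hx ↦ mem_image_of_mem _ hx
  have := Measure.isProbabilityMeasure_map (μ := ν) measurable_neg.aemeasurable
  have h_right := halfLineDeficit_lt h hF h_deficient
  have h_left := halfLineDeficit_lt h_neg hF_neg <| forall_mem_image.2 fun y hy ↦
    (h_deficient y hy).imp fun ρ hρ ↦ IsDeficientRadius.map_neg hρ
  have h_sq : ∫ x, x ^ 2 ∂ν ≤ 1 / 4 := by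
    simpa using integral_sq_le_of_hasSubgaussianMGF h
  linarith [le_integral_sq_add_halfLineDeficit_add (h.memLp 2).integrable_sq]

theorem exists_center_of_hasSubgaussianMGF {Ω : Type*} {mΩ : MeasurableSpace Ω} {μ : Measure Ω}
    [IsProbabilityMeasure μ] {X : Ω → ℝ} {c : ℝ≥0} (h : HasSubgaussianMGF X c μ) (hc : 0 < c)
    (hF : ∀ᵐ ω ∂μ, X ω ∈ F) :
    ∃ y ∈ F, ∀ ρ, 0 < ρ → 1 - exp (-(ρ ^ 2 / (8 * c))) ≤ μ.real {ω | |X ω - y| < ρ} := by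
  set r : ℝ := (√(4 * c))⁻¹
  have hr : 0 < r := by positivity
  have hr_sq : r ^ 2 = (4 * c : ℝ)⁻¹ := by rw [inv_pow, sq_sqrt (by positivity)]
  have h_meas : AEMeasurable (fun ω ↦ r * X ω) μ := h.aemeasurable.const_mul r
  have := Measure.isProbabilityMeasure_map h_meas
  have h_scaled : HasSubgaussianMGF id (1 / 4) (μ.map fun ω ↦ r * X ω) := by
    rw [HasSubgaussianMGF.id_map_iff h_meas]
    convert h.const_mul r
    ext
    change (1 / 4 : ℝ) = r ^ 2 * c
    rw [hr_sq]
    field_simp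
  have hF_scaled : ∀ᵐ x ∂μ.map fun ω ↦ r * X ω, x ∈ F.image (r * ·) :=
    (ae_map_iff h_meas (F.image (r * ·)).measurableSet).2 <|
      hF.mono fun ω hω ↦ mem_image_of_mem _ hω
  obtain ⟨_, h_mem, h_center⟩ := exists_forall_one_sub_exp_le_measureReal_ball h_scaled hF_scaled
  obtain ⟨y, hy, rfl⟩ := mem_image.1 h_mem
  refine ⟨y, hy, fun ρ hρ ↦ ?_⟩
  have h_preimage : (fun ω ↦ r * X ω) ⁻¹' Metric.ball (r * y) (r * ρ) = {ω | |X ω - y| < ρ} := by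
    ext ω
    simp [Real.dist_eq, ← mul_sub, abs_mul, abs_of_pos hr, hr]
  have h_ball := h_center (r * ρ) (mul_pos hr hρ)
  rw [map_measureReal_apply_of_aemeasurable h_meas measurableSet_ball, h_preimage,
    mul_pow, hr_sq] at h_ball
  convert h_ball using 4
  field_simp
  norm_num

end HalfLineDeficit

section UniformMeasure

variable {α : Type*} [MeasurableSpace α] [MeasurableSingletonClass α] {s : Finset α}

lemma uniformOn_restrict_self (s : Finset α) :
    (uniformOn (s : Set α)).restrict s = uniformOn (s : Set α) :=
  Measure.restrict_eq_self_of_ae_mem (ae_cond_mem s.measurableSet)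

lemma integrable_uniformOn (hs : s.Nonempty) (g : α → ℝ) :
    Integrable g (uniformOn (s : Set α)) := by
  have := isProbabilityMeasure_uniformOn s.finite_toSet hs
  rw [← uniformOn_restrict_self]
  exact IntegrableOn.finset

lemma integral_uniformOn (hs : s.Nonempty) (g : α → ℝ) :
    ∫ x, g x ∂uniformOn (s : Set α) = 𝔼 x ∈ s, g x := by
  have := isProbabilityMeasure_uniformOn s.finite_toSet hs
  rw [← uniformOn_restrict_self, setIntegral_finset s .finset, expect_eq_sum_div_card, sum_div]
  refine sum_congr rfl fun x hx ↦ ?_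
  have h_mass : uniformOn (s : Set α) {x} = 1 / #s := by
    rw [← coe_singleton, uniformOn_apply_finset, inter_singleton_of_mem hx, card_singleton,
      Nat.cast_one]
  simp [measureReal_def, h_mass, div_eq_inv_mul]

lemma measureReal_uniformOn (p : α → Prop) :
    (uniformOn (s : Set α)).real {x | p x} = #{x ∈ s | p x} / #s := by
  have h_inter : (s : Set α) ∩ {x | p x} = (s : Set α) ∩ ({x ∈ s | p x} : Finset α) := by
    ext x; simp
  rw [measureReal_def, ← uniformOn_inter_self s.finite_toSet, h_inter,
    uniformOn_inter_self s.finite_toSet, uniformOn_apply_finset,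
    inter_eq_right.2 (filter_subset _ _)]
  simp

end UniformMeasure

section Sampling

lemma expect_exp_le_of_abs_sub_le {ι : Type*} {s : Finset ι} (hs : s.Nonempty) {g : ι → ℝ}
    (hg : ∀ v ∈ s, ∀ w ∈ s, |g v - g w| ≤ 1) (t : ℝ) :
    𝔼 v ∈ s, exp (t * g v) ≤ exp (t * 𝔼 v ∈ s, g v + t ^ 2 / 8) := by
  let _ : MeasurableSpace ι := ⊤
  have := isProbabilityMeasure_uniformOn s.finite_toSet hs
  obtain ⟨u, hu, hu_min⟩ := s.exists_min_image g hs
  have h_range : ∀ᵐ v ∂uniformOn (s : Set ι), g v ∈ Set.Icc (g u) (g u + 1) := by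
    filter_upwards [ae_cond_mem s.measurableSet] with v hv
    exact ⟨hu_min v hv, by linarith [(abs_le.1 (hg v hv u hu)).2]⟩
  have h_mgf := (hasSubgaussianMGF_of_mem_Icc measurable_from_top.aemeasurable h_range).mgf_le t
  simp only [mgf, integral_uniformOn hs, mul_sub, exp_sub, ← expect_div] at h_mgf
  rw [div_le_iff₀ (exp_pos _), ← exp_add] at h_mgf
  refine h_mgf.trans_eq (congrArg exp ?_)
  norm_num
  ring

variable {V : Type*} [DecidableEq V] {U : Finset V} {X : Finset V → ℝ}

lemma sum_sum_powersetCard_erase (U : Finset V) (k : ℕ) (X : Finset V → ℝ) :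
    ∑ v ∈ U, ∑ T ∈ powersetCard k (U.erase v), X (insert v T) =
      (k + 1) * ∑ S ∈ powersetCard (k + 1) U, X S := by
  have h_swap : ∑ v ∈ U, ∑ T ∈ powersetCard k (U.erase v), X (insert v T) =
      ∑ S ∈ powersetCard (k + 1) U, ∑ _v ∈ S, X S := by
    rw [sum_sigma', sum_sigma']
    refine sum_bij' (fun p _ ↦ ⟨insert p.1 p.2, p.1⟩) (fun p _ ↦ ⟨p.2, p.1.erase p.2⟩)
      ?_ ?_ ?_ ?_ ?_
    all_goals simp only [mem_sigma, mem_powersetCard, subset_erase]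
    · rintro ⟨v, T⟩ ⟨hv, ⟨hTU, hvT⟩, hT⟩
      exact ⟨⟨insert_subset hv hTU, by rw [card_insert_of_notMem hvT, hT]⟩, mem_insert_self v T⟩
    · rintro ⟨S, v⟩ ⟨⟨hSU, hS⟩, hv⟩
      exact ⟨hSU hv, ⟨(erase_subset v S).trans hSU, notMem_erase v S⟩,
        by rw [card_erase_of_mem hv, hS, Nat.add_sub_cancel]⟩
    · rintro ⟨v, T⟩ ⟨-, ⟨-, hvT⟩, -⟩
      simp [erase_insert hvT]
    · rintro ⟨S, v⟩ ⟨-, hv⟩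
      simp [insert_erase hv]
    · simp
  rw [h_swap, mul_sum]
  refine sum_congr rfl fun S hS ↦ ?_
  rw [sum_const, (mem_powersetCard.1 hS).2, nsmul_eq_mul]
  push_cast
  rfl

lemma expect_powersetCard_succ (U : Finset V) (k : ℕ) (X : Finset V → ℝ) :
    𝔼 S ∈ powersetCard (k + 1) U, X S =
      𝔼 v ∈ U, 𝔼 T ∈ powersetCard k (U.erase v), X (insert v T) := by
  have h_inner : ∀ v ∈ U, 𝔼 T ∈ powersetCard k (U.erase v), X (insert v T) =
      (∑ T ∈ powersetCard k (U.erase v), X (insert v T)) / (#U - 1).choose k := fun v hv ↦ by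
    rw [expect_eq_sum_div_card, card_powersetCard, card_erase_of_mem hv]
  rw [expect_congr rfl h_inner, ← expect_div, expect_eq_sum_div_card, expect_eq_sum_div_card,
    sum_sum_powersetCard_erase, card_powersetCard, div_div]
  rcases U.eq_empty_or_nonempty with rfl | hU
  · simp
  have h_choose : (#U : ℝ) * (#U - 1).choose k = (#U).choose (k + 1) * (k + 1) := by
    obtain ⟨m, hm⟩ := Nat.exists_eq_add_of_lt hU.card_pos
    rw [hm]
    exact_mod_cast Nat.add_one_mul_choose_eq (0 + m) k
  rw [h_choose, mul_comm, mul_div_mul_right _ _ (by positivity)]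

/-- Exchanging one element of a subset of `U` for another changes `X` by at most `1`. The two sets
are encoded by their common part `T` and the exchanged elements. -/
def IsExchangeLipschitzOn (U : Finset V) (X : Finset V → ℝ) : Prop :=
  ∀ T ⊆ U, ∀ v ∈ U, ∀ w ∈ U, v ∉ T → w ∉ T → |X (insert v T) - X (insert w T)| ≤ 1

lemma IsExchangeLipschitzOn.insert_erase (hX : IsExchangeLipschitzOn U X) {v : V} (hv : v ∈ U) :
    IsExchangeLipschitzOn (U.erase v) fun T ↦ X (insert v T) := by
  intro T hT a ha b hb haT hbT
  beta_reduce
  rw [insert_comm v a, insert_comm v b]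
  refine hX _ (insert_subset hv (hT.trans (erase_subset v U))) a (mem_of_mem_erase ha) b
    (mem_of_mem_erase hb) ?_ ?_
  · exact mt (mem_of_mem_insert_of_ne · (ne_of_mem_erase ha)) haT
  · exact mt (mem_of_mem_insert_of_ne · (ne_of_mem_erase hb)) hbT

lemma map_swap_of_notMem {v w : V} {T : Finset V} (hv : v ∉ T) (hw : w ∉ T) :
    T.map (Equiv.swap v w).toEmbedding = T := by
  rw [map_eq_image]
  exact (image_congr fun x hx ↦ Equiv.swap_apply_of_ne_of_ne
    (ne_of_mem_of_not_mem hx hv) (ne_of_mem_of_not_mem hx hw)).trans image_id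

lemma map_swap_of_mem {v w : V} {S : Finset V} (hv : v ∈ S) (hw : w ∈ S) :
    S.map (Equiv.swap v w).toEmbedding = S := by
  refine eq_of_subset_of_card_le (fun x hx ↦ ?_) (card_map _).ge
  obtain ⟨y, hy, rfl⟩ := mem_map.1 hx
  rw [Equiv.coe_toEmbedding, Equiv.swap_apply_def]
  split_ifs
  exacts [hw, hv, hy]

lemma map_swap_mem_powersetCard_erase {v w : V} (hv : v ∈ U) (hw : w ∈ U) {k : ℕ} {T : Finset V}
    (hT : T ∈ powersetCard k (U.erase v)) :
    T.map (Equiv.swap v w).toEmbedding ∈ powersetCard k (U.erase w) := by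
  obtain ⟨hTU, hT_card⟩ := mem_powersetCard.1 hT
  refine mem_powersetCard.2 ⟨?_, (card_map _).trans hT_card⟩
  have h_map : (U.erase v).map (Equiv.swap v w).toEmbedding = U.erase w := by
    rw [map_erase, map_swap_of_mem hv hw, Equiv.coe_toEmbedding, Equiv.swap_apply_left]
  exact h_map ▸ map_subset_map.2 hTU

lemma IsExchangeLipschitzOn.abs_sub_map_swap_le (hX : IsExchangeLipschitzOn U X) {v w : V}
    (hv : v ∈ U) (hw : w ∈ U) {T : Finset V} (hT : T ⊆ U.erase v) :
    |X (insert v T) - X (insert w (T.map (Equiv.swap v w).toEmbedding))| ≤ 1 := by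
  obtain ⟨hTU, hvT⟩ := subset_erase.1 hT
  by_cases hwT : w ∈ T
  · have h_map : insert w (T.map (Equiv.swap v w).toEmbedding) = insert v T := by
      rw [← map_swap_of_mem (mem_insert_self v T) (mem_insert_of_mem hwT), map_insert,
        Equiv.coe_toEmbedding, Equiv.swap_apply_left]
    simp [h_map]
  · rw [map_swap_of_notMem hvT hwT]
    exact hX T hTU v hv w hw hvT hwT

lemma IsExchangeLipschitzOn.abs_expect_insert_sub_le (hX : IsExchangeLipschitzOn U X) {k : ℕ}
    (hk : k < #U) {v w : V} (hv : v ∈ U) (hw : w ∈ U) :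
    |(𝔼 T ∈ powersetCard k (U.erase v), X (insert v T)) -
      𝔼 T ∈ powersetCard k (U.erase w), X (insert w T)| ≤ 1 := by
  set σ := (Equiv.swap v w).toEmbedding
  have h_involutive : ∀ T : Finset V, (T.map σ).map σ = T := fun T ↦ by
    ext x
    simp [σ, mem_map_equiv]
  have h_reindex : 𝔼 T ∈ powersetCard k (U.erase w), X (insert w T) =
      𝔼 T ∈ powersetCard k (U.erase v), X (insert w (T.map σ)) :=
    (expect_nbij' (·.map σ) (·.map σ) (fun _ ↦ map_swap_mem_powersetCard_erase hv hw)
      (fun _ hT ↦ by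
        simpa only [σ, Equiv.swap_comm v w] using map_swap_mem_powersetCard_erase hw hv hT)
      (fun T _ ↦ h_involutive T) (fun T _ ↦ h_involutive T) fun _ _ ↦ rfl).symm
  have h_nonempty : (powersetCard k (U.erase v)).Nonempty :=
    powersetCard_nonempty.2 (by rw [card_erase_of_mem hv]; omega)
  rw [h_reindex, ← expect_sub_distrib]
  exact (abs_expect_le _ _).trans <| expect_le h_nonempty fun T hT ↦
    hX.abs_sub_map_swap_le hv hw (mem_powersetCard.1 hT).1

lemma IsExchangeLipschitzOn.expect_exp_le (hX : IsExchangeLipschitzOn U X) {k : ℕ} (hk : k ≤ #U)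
    (t : ℝ) :
    𝔼 S ∈ powersetCard k U, exp (t * X S) ≤
      exp (t * 𝔼 S ∈ powersetCard k U, X S + k * (t ^ 2 / 8)) := by
  induction k generalizing U X with
  | zero => simp
  | succ k ih =>
    have hU : U.Nonempty := card_pos.1 (by omega)
    set a : V → ℝ := fun v ↦ 𝔼 T ∈ powersetCard k (U.erase v), X (insert v T)
    have h_conditional : ∀ v ∈ U, 𝔼 T ∈ powersetCard k (U.erase v), exp (t * X (insert v T)) ≤
        exp (t * a v) * exp (k * (t ^ 2 / 8)) := fun v hv ↦ by
      rw [← exp_add]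
      exact ih (hX.insert_erase hv) (by rw [card_erase_of_mem hv]; omega)
    calc 𝔼 S ∈ powersetCard (k + 1) U, exp (t * X S)
      _ = 𝔼 v ∈ U, 𝔼 T ∈ powersetCard k (U.erase v), exp (t * X (insert v T)) :=
        expect_powersetCard_succ U k fun S ↦ exp (t * X S)
      _ ≤ 𝔼 v ∈ U, exp (t * a v) * exp (k * (t ^ 2 / 8)) := expect_le_expect h_conditional
      _ = (𝔼 v ∈ U, exp (t * a v)) * exp (k * (t ^ 2 / 8)) := (expect_mul ..).symm
      _ ≤ exp (t * 𝔼 v ∈ U, a v + t ^ 2 / 8) * exp (k * (t ^ 2 / 8)) := by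
        gcongr
        exact expect_exp_le_of_abs_sub_le hU
          (fun v hv w hw ↦ hX.abs_expect_insert_sub_le (by omega) hv hw) t
      _ = exp (t * 𝔼 S ∈ powersetCard (k + 1) U, X S + (k + 1 : ℕ) * (t ^ 2 / 8)) := by
        rw [← exp_add, expect_powersetCard_succ, Nat.cast_succ]
        congr 1
        ring

lemma IsExchangeLipschitzOn.hasSubgaussianMGF [MeasurableSpace (Finset V)]
    [MeasurableSingletonClass (Finset V)] (hX : IsExchangeLipschitzOn U X) {k : ℕ} (hk : k ≤ #U) :
    HasSubgaussianMGF (fun S ↦ X S - 𝔼 S ∈ powersetCard k U, X S) (k / 4 : ℝ≥0)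
      (uniformOn (powersetCard k U : Set (Finset V))) := by
  have h_nonempty := powersetCard_nonempty.2 hk
  refine ⟨fun t ↦ integrable_uniformOn h_nonempty _, fun t ↦ ?_⟩
  simp only [mgf, integral_uniformOn h_nonempty, mul_sub, exp_sub, ← expect_div]
  rw [div_le_iff₀ (exp_pos _), ← exp_add]
  refine (hX.expect_exp_le hk t).trans_eq (congrArg exp ?_)
  push_cast
  ring

theorem IsExchangeLipschitzOn.exists_center (hX : IsExchangeLipschitzOn U X) {k : ℕ} (hk₀ : 0 < k)
    (hk : k ≤ #U) :
    ∃ f₀ : ℝ, ∀ t, 0 < t → (1 - exp (-t)) * #(powersetCard k U) ≤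
      #{S ∈ powersetCard k U | |X S - f₀| < √(2 * t * k)} := by
  let _ : MeasurableSpace (Finset V) := ⊤
  have h_nonempty := powersetCard_nonempty.2 hk
  have := isProbabilityMeasure_uniformOn (powersetCard k U).finite_toSet h_nonempty
  set m := 𝔼 S ∈ powersetCard k U, X S
  have hF : ∀ᵐ S ∂uniformOn (powersetCard k U : Set (Finset V)),
      X S - m ∈ (powersetCard k U).image (X · - m) :=
    (ae_cond_mem (powersetCard k U).measurableSet).mono fun S hS ↦ mem_image_of_mem _ hS
  obtain ⟨y, -, hy⟩ :=
    exists_center_of_hasSubgaussianMGF (hX.hasSubgaussianMGF hk) (by positivity) hF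
  refine ⟨m + y, fun t ht ↦ ?_⟩
  have h_exponent : √(2 * t * k) ^ 2 / (8 * (k / 4 : ℝ≥0)) = t := by
    rw [sq_sqrt (by positivity)]
    push_cast
    field_simp
    norm_num
  have h_center := hy √(2 * t * k) (by positivity)
  rw [h_exponent, measureReal_uniformOn, le_div_iff₀ (by exact_mod_cast h_nonempty.card_pos)]
    at h_center
  simpa only [sub_sub] using h_center

end Sampling

section InducedSubgraph

variable {f : ∀ n : ℕ, SimpleGraph (Fin n) → ℝ} {m n : ℕ}

lemma apply_inducedCopy_eq_apply_comap
    (hiso : ∀ (n : ℕ) (G G' : SimpleGraph (Fin n)), Nonempty (G ≃g G') → f n G = f n G')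
    (G : SimpleGraph (Fin n)) {x : Fin m → Fin n} (hx : Function.Injective x)
    {S : Finset (Fin n)} (hxS : univ.image x = S) :
    f #S (inducedCopy G S) = f m (G.comap x) := by
  obtain rfl : #S = m := by rw [← hxS, card_image_of_injective _ hx, card_fin]
  have h_mem : ∀ i, x i ∈ S := fun i ↦ hxS ▸ mem_image_of_mem x (mem_univ i)
  let e : Fin #S ≃ (S : Set (Fin n)) := .ofBijective (fun i ↦ ⟨x i, h_mem i⟩)
    ⟨fun _ _ h ↦ hx (congrArg Subtype.val h), fun ⟨y, hy⟩ ↦ by simpa [← hxS] using hy⟩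
  exact hiso _ _ _ ⟨(SimpleGraph.Iso.comap (S.orderIsoOfFin rfl).toEquiv (G.induce S)).trans
    (SimpleGraph.Iso.comap e (G.induce S)).symm⟩

lemma isExchangeLipschitzOn_apply_inducedCopy
    (hiso : ∀ (n : ℕ) (G G' : SimpleGraph (Fin n)), Nonempty (G ≃g G') → f n G = f n G')
    (hsmooth : ∀ (n : ℕ) (G G' : SimpleGraph (Fin n)),
      (∃ v : Fin n, ∀ i j : Fin n, i ≠ v → j ≠ v → (G.Adj i j ↔ G'.Adj i j)) →
      |f n G - f n G'| ≤ 1)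
    (G : SimpleGraph (Fin n)) (U : Finset (Fin n)) :
    IsExchangeLipschitzOn U fun S ↦ f #S (inducedCopy G S) := by
  intro T _ v _ w _ hvT hwT
  -- Enumerating the exchanged vertex first makes the two graphs differ only at index `0`.
  have h_cons : ∀ u ∉ T, f #(insert u T) (inducedCopy G (insert u T)) =
      f (#T + 1) (G.comap (Fin.cons u (T.orderEmbOfFin rfl))) := fun u hu ↦ by
    refine apply_inducedCopy_eq_apply_comap hiso G ?_ ?_
    · exact Fin.cons_injective_iff.2 ⟨by simpa using hu, (T.orderEmbOfFin rfl).injective⟩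
    · simp [← coe_inj, Fin.range_cons]
  beta_reduce
  rw [h_cons v hvT, h_cons w hwT]
  refine hsmooth _ _ _ ⟨0, fun i j hi hj ↦ ?_⟩
  obtain ⟨i, rfl⟩ := Fin.exists_succ_eq.2 hi
  obtain ⟨j, rfl⟩ := Fin.exists_succ_eq.2 hj
  rfl

end InducedSubgraph

/-- Sample concentration, local version: if a graph parameter changes by at most 1 when edges
incident with a single node are changed, then its value on a random `k`-node induced subgraph
is highly concentrated. -/
theorem sample_concentration_local (f : ∀ n : ℕ, SimpleGraph (Fin n) → ℝ)
    (hiso : ∀ (n : ℕ) (G G' : SimpleGraph (Fin n)), Nonempty (G ≃g G') → f n G = f n G')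
    (hsmooth : ∀ (n : ℕ) (G G' : SimpleGraph (Fin n)),
      (∃ v : Fin n, ∀ i j : Fin n, i ≠ v → j ≠ v → (G.Adj i j ↔ G'.Adj i j)) →
      |f n G - f n G'| ≤ 1)
    (n : ℕ) (G : SimpleGraph (Fin n)) (k : ℕ) (hk1 : 1 ≤ k) (hkn : k ≤ n) :
    ∃ f₀ : ℝ, ∀ t : ℝ, 0 < t →
      (1 - Real.exp (-t)) *
          ((Finset.powersetCard k (Finset.univ : Finset (Fin n))).card : ℝ) ≤
        (((Finset.powersetCard k (Finset.univ : Finset (Fin n))).filter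
            (fun S : Finset (Fin n) =>
              |f S.card (inducedCopy G S) - f₀| < Real.sqrt (2 * t * k))).card : ℝ) := by
  exact (isExchangeLipschitzOn_apply_inducedCopy hiso hsmooth G univ).exists_center hk1
    (hkn.trans_eq (card_fin n).symm)
end

section
/- Alon–Shapira theorem: every hereditary graph property P is testable, i.e., there exists a graph property P' such that: (a) if a finite simple graph G has property P, then for every 1 ≤ k ≤ |V(G)|, at least 2/3 of the k-element subsets S ⊆ V(G) induce a subgraph G[S] having property P'; and (b) for every ε > 0 there is an integer k_ε ≥ 1 such that if G is a finite simple graph whose edit distance from P is at least ε|V(G)|² (i.e., every graph on V(G) with property P differs from G in at least ε|V(G)|² adjacencies), then for every k_ε ≤ k ≤ |V(G)|, at most 1/3 of the k-element subsets S ⊆ V(G) induce a subgraph G[S] having property P'. -/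
open Finset
open scoped Classical symmDiff

-- A graph property: an isomorphism-closed class of finite simple graphs.
def IsGraphProperty (P : ∀ n : ℕ, Set (SimpleGraph (Fin n))) : Prop :=
  ∀ (n : ℕ) (G G' : SimpleGraph (Fin n)), Nonempty (G ≃g G') → (G ∈ P n → G' ∈ P n)

-- A hereditary graph property: closed under taking induced subgraphs.
def IsHereditary (P : ∀ n : ℕ, Set (SimpleGraph (Fin n))) : Prop :=
  IsGraphProperty P ∧
    ∀ (n : ℕ) (G : SimpleGraph (Fin n)), G ∈ P n →
      ∀ S : Finset (Fin n), inducedCopy G S ∈ P S.card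

/-! By the strong regularity lemma, the vertices of a large graph `G` can be colored with boundedly
many colors in such a way that the colors have large representatives `W i` which are pairwise
regular and whose densities reflect the pairs of colors up to a few pairs of vertices. Ramsey's
theorem and supersaturation select for each `i` a sign, edge or non-edge, such that many tuples
inside `W i` are homogeneous of that sign. Changing only a few pairs turns `G` into a graph which
uses between any two colors only signs that are not rare between the representatives, and inside
each color only the selected sign. If `G` is far from `P`, this graph is not in `P`. As there are
only finitely many patterns of signs, some graph of *bounded* size outside `P` then follows the same
pattern, and the counting lemma finds it in a positive proportion of all tuples of some bounded
length. Disjoint blocks of coordinates boost this proportion for long tuples, and since `P` is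
hereditary, the proportion of `k`-sets inducing a graph in `P` decreases with `k` by the local LYM
inequality. -/

universe u

/-! ### Regular partitions -/

section
variable {V : Type*}

/-- The pair `(X, Y)` is regular in the cut norm: up to an error `η |X| |Y|`, every subrectangle
contains as many edges as the density of `(X, Y)` predicts. In contrast with
`SimpleGraph.IsUniform`, small subrectangles are included. -/
def IsCutRegular (G : SimpleGraph V) (η : ℝ) (X Y : Finset V) : Prop :=
  ∀ A ⊆ X, ∀ B ⊆ Y,
    |(#(G.interedges A B) : ℝ) - G.edgeDensity X Y * (#A * #B)| ≤ η * (#X * #Y)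

lemma card_interedges_eq (G : SimpleGraph V) (X Y : Finset V) :
    (#(G.interedges X Y) : ℝ) = G.edgeDensity X Y * (#X * #Y) := by
  have h := Rat.cast_injective (α := ℝ) |>.eq_iff.2 (G.edgeDensity_def X Y)
  push_cast at h
  rcases eq_or_ne ((#X : ℝ) * #Y) 0 with h0 | h0
  · have : #(G.interedges X Y) ≤ #X * #Y := G.card_interedges_le_mul X Y
    have h0' : #X * #Y = 0 := by exact_mod_cast h0
    rw [h0, mul_zero]
    exact_mod_cast Nat.le_zero.1 (h0' ▸ this)
  · rw [h, div_mul_cancel₀ _ h0]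

lemma edgeDensity_mem_Icc (G : SimpleGraph V) (X Y : Finset V) :
    (G.edgeDensity X Y : ℝ) ∈ Set.Icc 0 1 :=
  ⟨mod_cast G.edgeDensity_nonneg X Y, mod_cast G.edgeDensity_le_one X Y⟩

lemma abs_edgeDensity_sub_le_one (G : SimpleGraph V) (X Y A B : Finset V) :
    |(G.edgeDensity A B : ℝ) - G.edgeDensity X Y| ≤ 1 := by
  obtain ⟨h₁, h₂⟩ := edgeDensity_mem_Icc G X Y
  obtain ⟨h₃, h₄⟩ := edgeDensity_mem_Icc G A B
  exact abs_le.2 ⟨by linarith, by linarith⟩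

lemma abs_card_interedges_sub (G : SimpleGraph V) (X Y A B : Finset V) :
    |(#(G.interedges A B) : ℝ) - G.edgeDensity X Y * (#A * #B)| =
      |(G.edgeDensity A B : ℝ) - G.edgeDensity X Y| * (#A * #B) := by
  rw [card_interedges_eq G A B, ← sub_mul, abs_mul,
    abs_of_nonneg (a := (#A * #B : ℝ)) (by positivity)]

lemma IsCutRegular.mono {G : SimpleGraph V} {η η' : ℝ} {X Y : Finset V} (hη : η ≤ η')
    (h : IsCutRegular G η X Y) : IsCutRegular G η' X Y :=
  fun A hA B hB ↦ (h A hA B hB).trans (by gcongr)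

lemma isCutRegular_of_isUniform {G : SimpleGraph V} {ε : ℝ} {X Y : Finset V}
    (h : G.IsUniform ε X Y) : IsCutRegular G ε X Y := by
  intro A hA B hB
  have hε := h.pos
  have hAX : (#A : ℝ) ≤ #X := mod_cast card_le_card hA
  have hBY : (#B : ℝ) ≤ #Y := mod_cast card_le_card hB
  rw [abs_card_interedges_sub]
  have hsmall := abs_edgeDensity_sub_le_one G X Y A B
  by_cases hX : #X * ε ≤ #A
  · by_cases hY : #Y * ε ≤ #B
    · have := (h hA hB hX hY).le
      gcongr
    · calc
        _ ≤ 1 * (#X * (#Y * ε)) := by gcongr; exact (not_le.1 hY).le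
        _ = ε * (#X * #Y) := by ring
  · calc
      _ ≤ 1 * (#X * ε * #Y) := by gcongr; exact (not_le.1 hX).le
      _ = ε * (#X * #Y) := by ring

lemma isCutRegular_subpair_of_isUniform {G : SimpleGraph V} {ε γ : ℝ} {X Y X' Y' : Finset V}
    (h : G.IsUniform ε X Y) (hγ₀ : 0 < γ) (hγ₁ : γ ≤ 1) (hεγ : ε ≤ γ)
    (hX : X' ⊆ X) (hY : Y' ⊆ Y) (hX' : γ * #X ≤ #X') (hY' : γ * #Y ≤ #Y') :
    IsCutRegular G (2 * ε / γ ^ 2) X' Y' := by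
  intro A hA B hB
  have hε := h.pos
  have hcut := isCutRegular_of_isUniform h A (hA.trans hX) B (hB.trans hY)
  have hdens : |(G.edgeDensity X Y : ℝ) - G.edgeDensity X' Y'| ≤ ε := by
    rw [abs_sub_comm]
    refine (h hX hY ?_ ?_).le <;>
      nlinarith [Nat.cast_nonneg (α := ℝ) #X, Nat.cast_nonneg (α := ℝ) #Y]
  have hγ : ε ≤ ε / γ ^ 2 := le_div_self hε.le (by positivity) (pow_le_one₀ hγ₀.le hγ₁)
  calc |(#(G.interedges A B) : ℝ) - G.edgeDensity X' Y' * (#A * #B)|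
      ≤ |(#(G.interedges A B) : ℝ) - G.edgeDensity X Y * (#A * #B)| +
        |(G.edgeDensity X Y : ℝ) - G.edgeDensity X' Y'| * (#A * #B) := by
        rw [← abs_of_nonneg (a := (#A * #B : ℝ)) (by positivity), ← abs_mul,
          abs_of_nonneg (a := (#A * #B : ℝ)) (by positivity), sub_mul]
        exact abs_sub_le _ _ _
    _ ≤ ε * (#X * #Y) + ε * (#X' * #Y') := by gcongr
    _ ≤ ε / γ ^ 2 * (#X' * #Y') + ε / γ ^ 2 * (#X' * #Y') := by
        refine add_le_add ?_ (by gcongr)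
        calc ε * (#X * #Y) = ε / γ ^ 2 * (γ * #X * (γ * #Y)) := by field_simp
          _ ≤ _ := by gcongr
    _ = 2 * ε / γ ^ 2 * (#X' * #Y') := by ring

end

section
variable {V : Type u} [Fintype V]

/-- The ordered pairs of distinct vertices which a vertex partition `P` does not control: pairs
inside a part and pairs in `P.part u × P.part v` for a non-regular pair of parts. -/
noncomputable def irregularPairs (G : SimpleGraph V) (η : ℝ) (P : Finpartition (univ : Finset V)) :
    Finset (V × V) :=
  {e | e.1 ≠ e.2 ∧
    (P.part e.1 = P.part e.2 ∨ ¬ IsCutRegular G η (P.part e.1) (P.part e.2))}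

lemma irregularPairs_anti (G : SimpleGraph V) (P : Finpartition (univ : Finset V)) {η η' : ℝ}
    (h : η ≤ η') : irregularPairs G η' P ⊆ irregularPairs G η P := by
  intro e he
  simp only [irregularPairs, mem_filter, mem_univ, true_and] at he ⊢
  exact ⟨he.1, he.2.imp_right (mt (IsCutRegular.mono h))⟩

lemma part_inf (P Q : Finpartition (univ : Finset V)) (v : V) :
    (P ⊓ Q).part v = P.part v ∩ Q.part v := by
  have hv : v ∈ P.part v ∩ Q.part v :=
    mem_inter.2 ⟨P.mem_part (mem_univ v), Q.mem_part (mem_univ v)⟩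
  refine Finpartition.part_eq_of_mem _ ?_ hv
  rw [Finpartition.parts_inf]
  exact mem_erase.2 ⟨ne_empty_of_mem hv, mem_image.2 ⟨(P.part v, Q.part v),
    mem_product.2 ⟨P.part_mem.2 (mem_univ v), Q.part_mem.2 (mem_univ v)⟩, rfl⟩⟩

lemma card_parts_inf_le (P Q : Finpartition (univ : Finset V)) :
    #(P ⊓ Q).parts ≤ #P.parts * #Q.parts := by
  rw [Finpartition.parts_inf, ← card_product]
  exact (card_erase_le).trans card_image_le

lemma card_small_part_inf_le (P Q : Finpartition (univ : Finset V)) {γ : ℝ} (hγ : 0 ≤ γ) :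
    (#{v | (#((P ⊓ Q).part v) : ℝ) < γ * #(P.part v)} : ℝ) ≤ γ * #Q.parts * Fintype.card V := by
  set small := {e ∈ P.parts ×ˢ Q.parts | (#(e.1 ∩ e.2) : ℝ) < γ * #e.1} with hsmall
  have hcover : ({v | (#((P ⊓ Q).part v) : ℝ) < γ * #(P.part v)} : Finset V) ⊆
      small.biUnion fun e ↦ e.1 ∩ e.2 := by
    intro v hv
    rw [mem_filter, part_inf] at hv
    exact mem_biUnion.2 ⟨(P.part v, Q.part v), mem_filter.2 ⟨mem_product.2
      ⟨P.part_mem.2 (mem_univ v), Q.part_mem.2 (mem_univ v)⟩, hv.2⟩,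
      mem_inter.2 ⟨P.mem_part (mem_univ v), Q.mem_part (mem_univ v)⟩⟩
  calc (#{v | (#((P ⊓ Q).part v) : ℝ) < γ * #(P.part v)} : ℝ)
      ≤ ∑ e ∈ small, (#(e.1 ∩ e.2) : ℝ) := mod_cast (card_le_card hcover).trans card_biUnion_le
    _ ≤ ∑ e ∈ small, γ * #e.1 := sum_le_sum fun e he ↦ (mem_filter.1 he).2.le
    _ ≤ ∑ e ∈ P.parts ×ˢ Q.parts, γ * #e.1 :=
        sum_le_sum_of_subset_of_nonneg (filter_subset _ _) fun _ _ _ ↦ by positivity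
    _ = γ * #Q.parts * ∑ U ∈ P.parts, (#U : ℝ) := by
        rw [sum_product, mul_sum]
        refine sum_congr rfl fun U _ ↦ ?_
        simp only [sum_const, nsmul_eq_mul]
        ring
    _ = γ * #Q.parts * Fintype.card V := by
        rw [← Nat.cast_sum, P.sum_card_parts, card_univ]

lemma irregularPairs_bot (G : SimpleGraph V) {η : ℝ} (hη : 0 < η) :
    irregularPairs G η (⊥ : Finpartition (univ : Finset V)) = ∅ := by
  have hpart (v : V) : (⊥ : Finpartition (univ : Finset V)).part v = {v} :=
    Finpartition.part_eq_of_mem _ (by simp) (mem_singleton_self v)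
  refine filter_eq_empty_iff.2 fun e _ ↦ not_and.2 fun hne ↦ not_or.2 ⟨?_, not_not.2 ?_⟩
  · rwa [hpart, hpart, singleton_inj]
  · rw [hpart, hpart]
    exact isCutRegular_of_isUniform (SimpleGraph.isUniform_singleton.2 hη)

lemma irregularPairs_inf_subset {G : SimpleGraph V} {P Q : Finpartition (univ : Finset V)}
    {ε γ η : ℝ} (hγ₀ : 0 < γ) (hγ₁ : γ ≤ 1) (hεγ : ε ≤ γ) (hη : 2 * ε / γ ^ 2 ≤ η) :
    irregularPairs G η (P ⊓ Q) ⊆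
      (P.parts.biUnion offDiag ∪ (P.nonUniforms G ε).biUnion fun (X, Y) ↦ X ×ˢ Y) ∪
      ((({v | (#((P ⊓ Q).part v) : ℝ) < γ * #(P.part v)} : Finset V) ×ˢ univ) ∪
        univ ×ˢ ({v | (#((P ⊓ Q).part v) : ℝ) < γ * #(P.part v)} : Finset V)) := by
  rintro ⟨u, v⟩ he
  obtain ⟨-, hne, hirr⟩ := mem_filter.1 he
  by_contra hout
  simp only [mem_union, mem_product, mem_filter, mem_univ, true_and, and_true, not_or,
    not_lt] at hout
  obtain ⟨⟨hdiag, hunif⟩, hu, hv⟩ := hout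
  have hpart (w : V) : w ∈ P.part w := P.mem_part (mem_univ w)
  have hparts (w : V) : P.part w ∈ P.parts := P.part_mem.2 (mem_univ w)
  have hPuv : P.part u ≠ P.part v := fun h ↦
    hdiag (mem_biUnion.2 ⟨_, hparts u, mem_offDiag.2 ⟨hpart u, h ▸ hpart v, hne⟩⟩)
  have hGuv : G.IsUniform ε (P.part u) (P.part v) := by
    by_contra h
    exact hunif (mem_biUnion.2 ⟨(P.part u, P.part v),
      (P.mk_mem_nonUniforms G).2 ⟨hparts u, hparts v, hPuv, h⟩,
      mem_product.2 ⟨hpart u, hpart v⟩⟩)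
  rw [part_inf] at hu hv
  simp only [part_inf] at hirr
  refine hirr.elim (fun h ↦ hPuv ?_) fun h ↦ h <| IsCutRegular.mono hη <|
    isCutRegular_subpair_of_isUniform hGuv hγ₀ hγ₁ hεγ inter_subset_left inter_subset_left hu hv
  have : u ∈ P.part v := by
    have hmem : u ∈ P.part u ∩ Q.part u := mem_inter.2 ⟨hpart u, Q.mem_part (mem_univ u)⟩
    exact (mem_inter.1 (h ▸ hmem)).1
  exact P.part_eq_of_mem (hparts v) this

lemma card_irregularPairs_inf_le {G : SimpleGraph V} {P Q : Finpartition (univ : Finset V)}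
    {ε γ η : ℝ} (hP : P.IsEquipartition) (hunif : P.IsUniform G ε) (hε : 0 < ε)
    (hγ₀ : 0 < γ) (hγ₁ : γ ≤ 1) (hεγ : ε ≤ γ) (hη : 2 * ε / γ ^ 2 ≤ η)
    (hcard : 4 / ε ≤ #P.parts) :
    (#(irregularPairs G η (P ⊓ Q)) : ℝ) ≤
      (5 * ε + 2 * γ * #Q.parts) * (Fintype.card V : ℝ) ^ 2 := by
  rcases isEmpty_or_nonempty V with hV | hV
  · simp [irregularPairs]
  have hdiag := hP.card_biUnion_offDiag_le hε hcard
  have hnon := (hP.sum_nonUniforms_lt univ_nonempty hε hunif).le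
  have hsmall := card_small_part_inf_le P Q hγ₀.le
  rw [card_univ] at hdiag hnon
  have hcover := (card_le_card (irregularPairs_inf_subset (G := G) (Q := Q) (P := P)
    hγ₀ hγ₁ hεγ hη)).trans <| (card_union_le _ _).trans <|
      add_le_add (card_union_le _ _) (card_union_le _ _)
  rw [card_product, card_product, card_univ] at hcover
  have hcover' := Nat.cast_le (α := ℝ) |>.2 hcover
  push_cast at hcover'
  set n : ℝ := (Fintype.card V : ℝ)
  have hn : 0 ≤ n := Nat.cast_nonneg _
  nlinarith [mul_le_mul_of_nonneg_right hsmall hn, mul_nonneg hε.le (sq_nonneg n)]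

end

theorem exists_regular_refinement (k : ℕ) {η : ℝ} (hη : 0 < η) :
    ∃ K : ℕ, ∀ (V : Type u) [Fintype V] (G : SimpleGraph V) (P : Finpartition (univ : Finset V)),
      #P.parts ≤ k → ∃ Q ≤ P, #Q.parts ≤ K ∧
        (#(irregularPairs G η Q) : ℝ) ≤ η * (Fintype.card V : ℝ) ^ 2 := by
  set η' := min η 1
  have hη' : 0 < η' := by positivity
  set γ := η' / (4 * (k + 1)) with hγ
  have hγ₀ : 0 < γ := by positivity
  have hγη : γ * (4 * (k + 1)) = η' := by rw [hγ]; field_simp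
  have hγ₁ : γ ≤ 1 / 4 := by
    nlinarith [min_le_right η 1, mul_nonneg hγ₀.le (Nat.cast_nonneg (α := ℝ) k)]
  set ε := η' * γ ^ 2 / 10 with hε
  have hε₀ : 0 < ε := by positivity
  have hη'₁ : η' ≤ 1 := min_le_right _ _
  have hγsq : γ ^ 2 ≤ γ := by nlinarith
  have hγsq' : η' * γ ^ 2 ≤ γ ^ 2 := mul_le_of_le_one_left (by positivity) hη'₁
  set l := ⌈4 / ε⌉₊
  refine ⟨max l (SzemerediRegularity.bound ε l * k), fun V _ G P hP ↦ ?_⟩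
  obtain hl | hl := lt_or_ge (Fintype.card V) l
  · refine ⟨⊥, bot_le, ?_, ?_⟩
    · rw [Finpartition.card_bot, card_univ]
      exact hl.le.trans (le_max_left _ _)
    · rw [irregularPairs_bot G hη, card_empty, Nat.cast_zero]
      positivity
  obtain ⟨S, hS, hlS, hSbound, hunif⟩ := szemeredi_regularity G hε₀ hl
  refine ⟨S ⊓ P, inf_le_right, ?_, ?_⟩
  · exact (card_parts_inf_le S P).trans ((Nat.mul_le_mul hSbound hP).trans (le_max_right _ _))
  have hεη : 2 * ε / γ ^ 2 ≤ η := by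
    rw [div_le_iff₀ (by positivity), hε]
    nlinarith [min_le_left η 1, sq_nonneg γ]
  refine (card_irregularPairs_inf_le hS hunif hε₀ hγ₀ (by linarith) (by linarith) hεη
    ((Nat.le_ceil _).trans (mod_cast hlS))).trans ?_
  gcongr
  have hk : (#P.parts : ℝ) ≤ k := mod_cast hP
  nlinarith [min_le_left η 1, mul_le_mul_of_nonneg_left hk hγ₀.le,
    mul_le_mul_of_nonneg_left hγsq hη'.le]

/-! ### Strong regularity -/

section
variable {V : Type u} [Fintype V] (G : SimpleGraph V) {P Q : Finpartition (univ : Finset V)}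

/-- The index of a vertex partition, normalized as the sum over all ordered pairs of vertices of
the squared density of the pair of parts containing them. -/
noncomputable def partitionEnergy (P : Finpartition (univ : Finset V)) : ℝ :=
  ∑ u, ∑ v, (G.edgeDensity (P.part u) (P.part v) : ℝ) ^ 2

lemma sum_sum_eq_sum_parts (P : Finpartition (univ : Finset V)) (g : V → V → ℝ) :
    ∑ u, ∑ v, g u v = ∑ X ∈ P.parts, ∑ Y ∈ P.parts, ∑ u ∈ X, ∑ v ∈ Y, g u v := by
  have hsum (f : V → ℝ) : ∑ u, f u = ∑ X ∈ P.parts, ∑ u ∈ X, f u := by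
    conv_lhs => rw [← P.biUnion_parts]
    exact sum_biUnion P.disjoint
  rw [hsum]
  refine sum_congr rfl fun X _ ↦ ?_
  rw [sum_comm, hsum]
  exact sum_congr rfl fun Y _ ↦ sum_comm

lemma sum_edgeDensity_part_mul (P : Finpartition (univ : Finset V)) (φ : V → V → ℝ)
    (hφ : ∀ u u' v v', P.part u = P.part u' → P.part v = P.part v' → φ u v = φ u' v') :
    ∑ u, ∑ v, (G.edgeDensity (P.part u) (P.part v) : ℝ) * φ u v =
      ∑ u, ∑ v, (if G.Adj u v then 1 else 0) * φ u v := by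
  rw [sum_sum_eq_sum_parts P, sum_sum_eq_sum_parts P]
  refine sum_congr rfl fun X hX ↦ sum_congr rfl fun Y hY ↦ ?_
  obtain ⟨x, hx⟩ := P.nonempty_of_mem_parts hX
  obtain ⟨y, hy⟩ := P.nonempty_of_mem_parts hY
  have hpart {Z : Finset V} (hZ : Z ∈ P.parts) {z : V} (hz : z ∈ Z) : P.part z = Z :=
    P.part_eq_of_mem hZ hz
  have hconst (u) (hu : u ∈ X) (v) (hv : v ∈ Y) : φ u v = φ x y :=
    hφ _ _ _ _ ((hpart hX hu).trans (hpart hX hx).symm) ((hpart hY hv).trans (hpart hY hy).symm)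
  have hedges : ∑ u ∈ X, ∑ v ∈ Y, (if G.Adj u v then (1 : ℝ) else 0) = #(G.interedges X Y) := by
    rw [← sum_product', SimpleGraph.interedges_def, sum_boole]
  calc ∑ u ∈ X, ∑ v ∈ Y, (G.edgeDensity (P.part u) (P.part v) : ℝ) * φ u v
      = ∑ _u ∈ X, ∑ _v ∈ Y, (G.edgeDensity X Y : ℝ) * φ x y :=
        sum_congr rfl fun u hu ↦ sum_congr rfl fun v hv ↦ by
          rw [hpart hX hu, hpart hY hv, hconst u hu v hv]
    _ = #(G.interedges X Y) * φ x y := by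
        simp only [sum_const, nsmul_eq_mul, card_interedges_eq]
        ring
    _ = ∑ u ∈ X, ∑ v ∈ Y, (if G.Adj u v then 1 else 0) * φ u v := by
        rw [← hedges, sum_mul]
        refine sum_congr rfl fun u hu ↦ ?_
        rw [sum_mul]
        exact sum_congr rfl fun v hv ↦ by rw [hconst u hu v hv]

lemma part_eq_of_le (h : Q ≤ P) {u v : V} (huv : Q.part u = Q.part v) : P.part u = P.part v := by
  obtain ⟨X, hX, hQX⟩ := h (Q.part_mem.2 (mem_univ u))
  have hu := hQX (Q.mem_part (mem_univ u))
  have hv := hQX (huv ▸ Q.mem_part (mem_univ v))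
  rw [P.part_eq_of_mem hX hu, P.part_eq_of_mem hX hv]

lemma sum_sq_edgeDensity_sub (h : Q ≤ P) :
    ∑ u, ∑ v, ((G.edgeDensity (Q.part u) (Q.part v) : ℝ) -
      G.edgeDensity (P.part u) (P.part v)) ^ 2 = partitionEnergy G Q - partitionEnergy G P := by
  set φ : V → V → ℝ := fun u v ↦ G.edgeDensity (P.part u) (P.part v) with hφ
  have hPφ := sum_edgeDensity_part_mul G P φ fun u u' v v' hu hv ↦ by simp only [hφ, hu, hv]
  have hQφ := sum_edgeDensity_part_mul G Q φ fun u u' v v' hu hv ↦ by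
    simp only [hφ, part_eq_of_le h hu, part_eq_of_le h hv]
  calc _ = partitionEnergy G Q + partitionEnergy G P -
          2 * ∑ u, ∑ v, (G.edgeDensity (Q.part u) (Q.part v) : ℝ) * φ u v := by
        simp only [partitionEnergy, mul_sum, ← sum_add_distrib, ← sum_sub_distrib]
        exact sum_congr rfl fun u _ ↦ sum_congr rfl fun v _ ↦ by ring
    _ = partitionEnergy G Q + partitionEnergy G P - 2 * partitionEnergy G P := by
        rw [hQφ, ← hPφ]
        simp only [partitionEnergy, hφ, sq]
    _ = _ := by ring

lemma partitionEnergy_nonneg (P : Finpartition (univ : Finset V)) : 0 ≤ partitionEnergy G P := by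
  unfold partitionEnergy
  positivity

lemma partitionEnergy_le (P : Finpartition (univ : Finset V)) :
    partitionEnergy G P ≤ (Fintype.card V : ℝ) ^ 2 := by
  calc partitionEnergy G P ≤ ∑ _u : V, ∑ _v : V, (1 : ℝ) := by
        refine sum_le_sum fun u _ ↦ sum_le_sum fun v _ ↦ ?_
        obtain ⟨h₀, h₁⟩ := edgeDensity_mem_Icc G (P.part u) (P.part v)
        exact pow_le_one₀ h₀ h₁
    _ = (Fintype.card V : ℝ) ^ 2 := by simp [sq]

end

lemma exists_pos_le_of_le (η : ℕ → ℝ) (hη : ∀ k, 0 < η k) (K : ℕ) :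
    ∃ η' > 0, ∀ k ≤ K, η' ≤ η k := by
  obtain ⟨j, -, hj⟩ := exists_min_image (range (K + 1)) η ⟨0, mem_range.2 K.succ_pos⟩
  exact ⟨η j, hη j, fun k hk ↦ hj k (mem_range.2 (Nat.lt_succ_of_le hk))⟩

/-- The conclusion of the strong regularity lemma: `P` is `δ`-regular, its refinement `Q` is
regular with a parameter depending on the number of parts of `P`, and the densities of `Q` are on
average within `δ` of those of `P`, as measured by the energy. -/
structure IsStronglyRegularPair {V : Type u} [Fintype V] (G : SimpleGraph V) (δ : ℝ) (η : ℕ → ℝ)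
    (P Q : Finpartition (univ : Finset V)) : Prop where
  le : Q ≤ P
  card_irregularPairs_left : (#(irregularPairs G δ P) : ℝ) ≤ δ * (Fintype.card V : ℝ) ^ 2
  card_irregularPairs_right :
    (#(irregularPairs G (η #P.parts) Q) : ℝ) ≤ η #P.parts * (Fintype.card V : ℝ) ^ 2
  energy_le : partitionEnergy G Q ≤ partitionEnergy G P + δ * (Fintype.card V : ℝ) ^ 2

lemma exists_isStronglyRegularPair_or_energy_ge {δ : ℝ} (hδ : 0 < δ) (η : ℕ → ℝ)
    (hη : ∀ k, 0 < η k) (T : ℕ) :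
    ∃ K : ℕ, ∀ (V : Type u) [Fintype V] (G : SimpleGraph V),
      (∃ P Q, #Q.parts ≤ K ∧ IsStronglyRegularPair G δ η P Q) ∨
      ∃ P : Finpartition (univ : Finset V), #P.parts ≤ K ∧
        (#(irregularPairs G δ P) : ℝ) ≤ δ * (Fintype.card V : ℝ) ^ 2 ∧
        T * δ * (Fintype.card V : ℝ) ^ 2 ≤ partitionEnergy G P := by
  induction T with
  | zero =>
    obtain ⟨K, hK⟩ := exists_regular_refinement.{u} 1 hδ
    refine ⟨K, fun V _ G ↦ Or.inr ?_⟩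
    obtain ⟨P, -, hPK, hP⟩ := hK V G ⊤ ((card_le_card (Finpartition.parts_top_subset _)).trans
      (card_singleton _).le)
    exact ⟨P, hPK, hP, by simpa using partitionEnergy_nonneg G P⟩
  | succ T ih =>
    obtain ⟨K, hK⟩ := ih
    obtain ⟨η₀, hη₀, hη₀K⟩ := exists_pos_le_of_le η hη K
    obtain ⟨K', hK'⟩ := exists_regular_refinement.{u} K (lt_min hη₀ hδ)
    refine ⟨max K K', fun V _ G ↦ ?_⟩
    obtain ⟨P, Q, hQK, hPQ⟩ | ⟨P, hPK, hP, hEP⟩ := hK V G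
    · exact Or.inl ⟨P, Q, hQK.trans (le_max_left _ _), hPQ⟩
    obtain ⟨Q, hQP, hQK', hQ⟩ := hK' V G P hPK
    have hQ' {η' : ℝ} (hη' : min η₀ δ ≤ η') :
        (#(irregularPairs G η' Q) : ℝ) ≤ η' * (Fintype.card V : ℝ) ^ 2 :=
      (Nat.cast_le.2 (card_le_card (irregularPairs_anti G Q hη'))).trans (hQ.trans (by gcongr))
    by_cases hE : partitionEnergy G Q ≤ partitionEnergy G P + δ * (Fintype.card V : ℝ) ^ 2
    · exact Or.inl ⟨P, Q, hQK'.trans (le_max_right _ _), hQP, hP,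
        hQ' ((min_le_left _ _).trans (hη₀K _ hPK)), hE⟩
    · refine Or.inr ⟨Q, hQK'.trans (le_max_right _ _), hQ' (min_le_right _ _), ?_⟩
      push_cast
      linarith

theorem exists_isStronglyRegularPair {δ : ℝ} (hδ : 0 < δ) (η : ℕ → ℝ) (hη : ∀ k, 0 < η k) :
    ∃ K : ℕ, ∀ (V : Type u) [Fintype V] [Nonempty V] (G : SimpleGraph V),
      ∃ P Q, #Q.parts ≤ K ∧ IsStronglyRegularPair G δ η P Q := by
  obtain ⟨T, hT⟩ := exists_nat_gt (1 / δ)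
  obtain ⟨K, hK⟩ := exists_isStronglyRegularPair_or_energy_ge.{u} hδ η hη T
  refine ⟨K, fun V _ _ G ↦ (hK V G).resolve_right ?_⟩
  rintro ⟨P, -, -, hE⟩
  have hTδ : 1 < T * δ := (div_lt_iff₀ hδ).1 hT
  have hV : (0 : ℝ) < (Fintype.card V : ℝ) ^ 2 := by
    have := Fintype.card_pos (α := V)
    positivity
  nlinarith [partitionEnergy_le G P]

/-! ### Averaging over representatives -/

section
variable {ι R : Type*} {α : ι → Type*} [Fintype ι] [DecidableEq ι] [CommSemiring R]

lemma sum_piFinset_sum_update (S : ∀ i, Finset (α i)) (p : ι) (g : (∀ i, α i) → R) :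
    ∑ x ∈ Fintype.piFinset S, ∑ s ∈ S p, g (Function.update x p s) =
      #(S p) * ∑ x ∈ Fintype.piFinset S, g x := by
  have hconst : #(S p) * ∑ x ∈ Fintype.piFinset S, g x =
      ∑ x ∈ Fintype.piFinset S, ∑ _s ∈ S p, g x := by
    simp only [sum_const, nsmul_eq_mul, mul_sum]
  have hmem : ∀ a ∈ Fintype.piFinset S ×ˢ S p,
      (Function.update a.1 p a.2, a.1 p) ∈ Fintype.piFinset S ×ˢ S p := by
    rintro ⟨x, s⟩ h
    simp only [mem_product, Fintype.mem_piFinset] at h ⊢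
    refine ⟨fun i ↦ ?_, h.1 p⟩
    rcases eq_or_ne i p with rfl | hi
    · simpa using h.2
    · simpa [hi] using h.1 i
  rw [hconst, ← sum_product', ← sum_product']
  exact sum_nbij' (fun a ↦ (Function.update a.1 p a.2, a.1 p))
    (fun a ↦ (Function.update a.1 p a.2, a.1 p)) hmem hmem (by simp) (by simp) (by simp)

lemma sum_piFinset_sum_update₂ (S : ∀ i, Finset (α i)) (p q : ι) (g : (∀ i, α i) → R) :
    ∑ x ∈ Fintype.piFinset S, ∑ s ∈ S p, ∑ t ∈ S q,
        g (Function.update (Function.update x p s) q t) =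
      #(S p) * #(S q) * ∑ x ∈ Fintype.piFinset S, g x := by
  rw [sum_piFinset_sum_update S p fun x ↦ ∑ t ∈ S q, g (Function.update x q t),
    sum_piFinset_sum_update S q g, mul_assoc]

lemma card_mul_card_mul_sum_piFinset (S : ∀ i, Finset (α i)) {p q : ι} (hpq : p ≠ q)
    (g : α p → α q → R) :
    #(S p) * #(S q) * ∑ x ∈ Fintype.piFinset S, g (x p) (x q) =
      #(Fintype.piFinset S) * ∑ s ∈ S p, ∑ t ∈ S q, g s t := by
  rw [← sum_piFinset_sum_update₂ S p q fun x ↦ g (x p) (x q)]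
  simp [hpq]

end

/-- The pairs of vertices of `A` which the coloring `c` separates. -/
def crossPairs {V κ : Type*} [DecidableEq κ] (A : Finset V) (c : V → κ) : Finset (V × V) :=
  {e ∈ A ×ˢ A | c e.1 ≠ c e.2}

lemma mem_crossPairs {V κ : Type*} [DecidableEq κ] {A : Finset V} {c : V → κ} {e : V × V} :
    e ∈ crossPairs A c ↔ e.1 ∈ A ∧ e.2 ∈ A ∧ c e.1 ≠ c e.2 := by
  simp only [crossPairs, mem_filter, mem_product, and_assoc]

lemma sum_crossPairs {V κ M : Type*} [Fintype κ] [DecidableEq κ] [AddCommMonoid M] (A : Finset V)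
    (c : V → κ) (g : V → V → M) :
    ∑ e ∈ crossPairs A c, g e.1 e.2 =
      ∑ i ∈ (univ : Finset κ).offDiag, ∑ u ∈ A with c u = i.1, ∑ v ∈ A with c v = i.2, g u v := by
  rw [← sum_fiberwise_of_maps_to (t := (univ : Finset κ).offDiag)
    (g := fun e : V × V ↦ (c e.1, c e.2)) fun e he ↦ by simpa using (mem_crossPairs.1 he).2.2]
  refine sum_congr rfl fun i hi ↦ ?_
  rw [← sum_product']
  refine sum_congr ?_ fun _ _ ↦ rfl
  ext e
  have hi' : i.1 ≠ i.2 := (mem_offDiag.1 hi).2.2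
  simp only [mem_filter, mem_crossPairs, mem_product, Prod.ext_iff]
  constructor
  · rintro ⟨⟨h₁, h₂, -⟩, h₃, h₄⟩
    exact ⟨⟨h₁, h₃⟩, h₂, h₄⟩
  · rintro ⟨⟨h₁, h₃⟩, h₂, h₄⟩
    exact ⟨⟨h₁, h₂, by rwa [h₃, h₄]⟩, h₃, h₄⟩

/-- Averaging over independent uniform representatives of the color classes. -/
lemma exists_representatives {V κ : Type*} [Finite κ] [DecidableEq κ] (A : Finset V)
    (c : V → κ) (hc : ∀ i, ∃ v ∈ A, c v = i) (F : V → V → ℝ) :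
    ∃ y : κ → V, (∀ i, y i ∈ A ∧ c (y i) = i) ∧
      ∑ e ∈ crossPairs A c, F (y (c e.1)) (y (c e.2)) ≤
        ∑ e ∈ crossPairs A c, F e.1 e.2 := by
  cases nonempty_fintype κ
  set S : κ → Finset V := fun i ↦ {v ∈ A | c v = i} with hS
  have hne : (Fintype.piFinset S).Nonempty :=
    Fintype.piFinset_nonempty.2 fun i ↦ (hc i).imp fun v hv ↦ mem_filter.2 hv
  have hmean : ∑ y ∈ Fintype.piFinset S,
      ∑ e ∈ crossPairs A c, F (y (c e.1)) (y (c e.2)) =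
      ∑ _y ∈ Fintype.piFinset S, ∑ e ∈ crossPairs A c, F e.1 e.2 := by
    rw [sum_const, nsmul_eq_mul, sum_crossPairs A c F, mul_sum]
    calc _ = ∑ y ∈ Fintype.piFinset S, ∑ i ∈ (univ : Finset κ).offDiag,
          #(S i.1) * #(S i.2) * F (y i.1) (y i.2) := by
          refine sum_congr rfl fun y _ ↦ ?_
          rw [sum_crossPairs A c fun u v ↦ F (y (c u)) (y (c v))]
          refine sum_congr rfl fun i _ ↦ ?_
          rw [sum_congr rfl fun u hu ↦ sum_congr rfl fun v hv ↦ by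
            rw [(mem_filter.1 hu).2, (mem_filter.1 hv).2]]
          simp only [sum_const, nsmul_eq_mul, mul_assoc, hS]
      _ = _ := by
          rw [sum_comm]
          refine sum_congr rfl fun i hi ↦ ?_
          rw [← mul_sum, card_mul_card_mul_sum_piFinset S (mem_offDiag.1 hi).2.2]
  obtain ⟨y, hy, hle⟩ := exists_le_of_sum_le hne hmean.le
  exact ⟨y, fun i ↦ mem_filter.1 (Fintype.mem_piFinset.1 hy i), hle⟩

lemma card_mul_card_mul_le_sum_crossPairs {V κ : Type*} [Finite κ] [DecidableEq κ] (A : Finset V)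
    (c : V → κ) {g : κ → κ → ℝ} (hg : ∀ i j, 0 ≤ g i j) {i j : κ} (hij : i ≠ j) :
    #{v ∈ A | c v = i} * #{v ∈ A | c v = j} * g i j ≤
      ∑ e ∈ crossPairs A c, g (c e.1) (c e.2) := by
  cases nonempty_fintype κ
  rw [sum_crossPairs A c fun u v ↦ g (c u) (c v)]
  have hclass : ∑ u ∈ A with c u = i, ∑ v ∈ A with c v = j, g (c u) (c v) =
      #{v ∈ A | c v = i} * #{v ∈ A | c v = j} * g i j := by
    rw [sum_congr rfl fun u hu ↦ sum_congr rfl fun v hv ↦ by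
      rw [(mem_filter.1 hu).2, (mem_filter.1 hv).2]]
    simp only [sum_const, nsmul_eq_mul, mul_assoc]
  rw [← hclass]
  exact single_le_sum (f := fun p : κ × κ ↦
    ∑ u ∈ A with c u = p.1, ∑ v ∈ A with c v = p.2, g (c u) (c v))
    (fun _ _ ↦ sum_nonneg fun _ _ ↦ sum_nonneg fun _ _ ↦ hg _ _)
    ((mem_offDiag (x := (i, j))).2 ⟨mem_univ i, mem_univ j, hij⟩)

lemma exists_representatives_avoiding {V κ : Type*} [Finite κ] [DecidableEq κ]
    (A : Finset V) (c : V → κ) {t M : ℝ} (ht : 0 < t) (hM : 0 < M)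
    (htc : ∀ i j, t ≤ #{v ∈ A | c v = i} * #{v ∈ A | c v = j}) {F : V → V → ℝ}
    (hF₀ : ∀ u v, 0 ≤ F u v) (hF : ∑ e ∈ crossPairs A c, F e.1 e.2 ≤ M) {B : Finset (V × V)}
    (hB : 3 * (#B : ℝ) ≤ t) :
    ∃ y : κ → V, (∀ i, y i ∈ A ∧ c (y i) = i) ∧ (∀ i j, i ≠ j → (y i, y j) ∉ B) ∧
      ∑ e ∈ crossPairs A c, F (y (c e.1)) (y (c e.2)) ≤ 2 * M := by
  have hc (i : κ) : ∃ v ∈ A, c v = i := by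
    by_contra! h
    have := htc i i
    rw [filter_false_of_mem h, card_empty, Nat.cast_zero, mul_zero] at this
    exact ht.not_ge this
  -- With this penalty a single pair of representatives in `B` costs more than the average.
  set penalty : V → V → ℝ := fun u v ↦ if (u, v) ∈ B then 3 * M / t else 0 with hpenalty_def
  have hpenalty (u v : V) : 0 ≤ penalty u v := by
    simp only [penalty]
    split_ifs <;> positivity
  obtain ⟨y, hy, hle⟩ := exists_representatives A c hc fun u v ↦ F u v + penalty u v
  have hmean : ∑ e ∈ crossPairs A c, (F e.1 e.2 + penalty e.1 e.2) ≤ 2 * M := by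
    have hpen : ∑ e ∈ crossPairs A c, penalty e.1 e.2 ≤ M :=
      calc _ ≤ #B * (3 * M / t) := by
            rw [← sum_filter, sum_const, nsmul_eq_mul]
            gcongr
            exact fun e he ↦ (mem_filter.1 he).2
        _ = M * (3 * #B / t) := by ring
        _ ≤ M := mul_le_of_le_one_right hM.le (div_le_one_of_le₀ hB ht.le)
    rw [sum_add_distrib]
    linarith
  refine ⟨y, hy, fun i j hij hmem ↦ ?_, (sum_le_sum fun e _ ↦ ?_).trans (hle.trans hmean)⟩
  · have hcost := card_mul_card_mul_le_sum_crossPairs A c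
      (g := fun i j ↦ F (y i) (y j) + penalty (y i) (y j))
      (fun _ _ ↦ add_nonneg (hF₀ _ _) (hpenalty _ _)) hij
    have hpen : 3 * M / t ≤ F (y i) (y j) + penalty (y i) (y j) := by
      simp only [hpenalty_def, if_pos hmem, le_add_iff_nonneg_left, hF₀]
    have : 3 * M ≤ 2 * M :=
      calc 3 * M = t * (3 * M / t) := by field_simp
        _ ≤ #{v ∈ A | c v = i} * #{v ∈ A | c v = j} * (F (y i) (y j) + penalty (y i) (y j)) :=
            mul_le_mul (htc i j) hpen (by positivity) (by positivity)
        _ ≤ 2 * M := hcost.trans (hle.trans hmean)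
    linarith
  · exact le_add_of_nonneg_right (hpenalty _ _)

section
variable {V : Type u}

/-- The graph `G` and its complement, indexed by the truth value of adjacency in `G`. -/
def signedGraph (G : SimpleGraph V) : Bool → SimpleGraph V
  | true => G
  | false => Gᶜ

lemma signedGraph_adj_decide (G : SimpleGraph V) {u v : V} (h : u ≠ v) :
    (signedGraph G (decide (G.Adj u v))).Adj u v := by
  by_cases huv : G.Adj u v <;> simp [signedGraph, huv, h]

lemma eq_decide_of_signedGraph_adj {G : SimpleGraph V} {b : Bool} {u v : V}
    (h : (signedGraph G b).Adj u v) : b = decide (G.Adj u v) := by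
  cases b
  · exact (decide_eq_false ((SimpleGraph.compl_adj G u v).1 h).2).symm
  · exact (decide_eq_true h).symm

lemma signedGraph_adj_of_comap {U : Type*} {G : SimpleGraph V} {f : U → V}
    (hf : Function.Injective f) {b : Bool} {u v : U} (h : (signedGraph (G.comap f) b).Adj u v) :
    (signedGraph G b).Adj (f u) (f v) := by
  cases b
  · exact (SimpleGraph.compl_adj ..).2 ⟨hf.ne h.ne, ((SimpleGraph.compl_adj ..).1 h).2⟩
  · exact h

lemma card_interedges_signedGraph_false (G : SimpleGraph V) {X Y : Finset V}
    (hXY : Disjoint X Y) :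
    (#((signedGraph G false).interedges X Y) : ℝ) = #X * #Y - #(G.interedges X Y) := by
  rw [eq_sub_iff_add_eq', ← Nat.cast_mul, ← G.card_interedges_add_card_interedges_compl hXY]
  push_cast
  congr!

lemma edgeDensity_signedGraph_false (G : SimpleGraph V) {X Y : Finset V} (hX : X.Nonempty)
    (hY : Y.Nonempty) (hXY : Disjoint X Y) :
    ((signedGraph G false).edgeDensity X Y : ℝ) = 1 - G.edgeDensity X Y := by
  rw [eq_sub_iff_add_eq', ← Rat.cast_one, ← G.edgeDensity_add_edgeDensity_compl hX hY hXY]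
  push_cast
  congr!

lemma IsCutRegular.signedGraph {G : SimpleGraph V} {η : ℝ} {X Y : Finset V}
    (h : IsCutRegular G η X Y) (hXY : Disjoint X Y) (b : Bool) :
    IsCutRegular (signedGraph G b) η X Y := by
  cases b
  · intro A hA B hB
    have hcompl := card_interedges_signedGraph_false G (hXY.mono hA hB)
    rcases X.eq_empty_or_nonempty with rfl | hX
    · simp [subset_empty.1 hA]
    rcases Y.eq_empty_or_nonempty with rfl | hY
    · simp [subset_empty.1 hB, SimpleGraph.interedges_def]
    rw [hcompl, edgeDensity_signedGraph_false G hX hY hXY]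
    convert h A hA B hB using 1
    rw [← abs_neg]
    congr 1
    ring
  · exact h

lemma abs_edgeDensity_signedGraph_sub (G : SimpleGraph V) (b : Bool) {X Y X' Y' : Finset V}
    (hX : X.Nonempty) (hY : Y.Nonempty) (hXY : Disjoint X Y)
    (hX' : X'.Nonempty) (hY' : Y'.Nonempty) (hXY' : Disjoint X' Y') :
    |((signedGraph G b).edgeDensity X Y : ℝ) - (signedGraph G b).edgeDensity X' Y'| =
      |(G.edgeDensity X Y : ℝ) - G.edgeDensity X' Y'| := by
  cases b
  · rw [edgeDensity_signedGraph_false G hX hY hXY, edgeDensity_signedGraph_false G hX' hY' hXY',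
      ← abs_neg]
    congr 1
    ring
  · rfl

end

/-! ### Cores and regular models -/

section
variable {V : Type u} [Fintype V]

lemma card_filter_card_part_inter_lt_le (P : Finpartition (univ : Finset V)) (L : Finset V) {t : ℝ}
    (ht : 0 ≤ t) : (#{v ∈ L | (#(P.part v ∩ L) : ℝ) < t} : ℝ) ≤ #P.parts * t := by
  have hcover : {v ∈ L | (#(P.part v ∩ L) : ℝ) < t} ⊆
      {X ∈ P.parts | (#(X ∩ L) : ℝ) < t}.biUnion (· ∩ L) := fun v hv ↦ by
    obtain ⟨hvL, hlt⟩ := mem_filter.1 hv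
    exact mem_biUnion.2 ⟨P.part v, mem_filter.2 ⟨P.part_mem.2 (mem_univ v), hlt⟩,
      mem_inter.2 ⟨P.mem_part (mem_univ v), hvL⟩⟩
  calc (#{v ∈ L | (#(P.part v ∩ L) : ℝ) < t} : ℝ)
      ≤ ∑ X ∈ P.parts with (#(X ∩ L) : ℝ) < t, (#(X ∩ L) : ℝ) :=
        mod_cast (card_le_card hcover).trans card_biUnion_le
    _ ≤ ∑ X ∈ P.parts with (#(X ∩ L) : ℝ) < t, t := sum_le_sum fun X hX ↦ (mem_filter.1 hX).2.le
    _ ≤ #P.parts * t := by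
        rw [sum_const, nsmul_eq_mul]
        gcongr
        exact filter_subset _ _

/-- `A` is a union of parts of `Q` of relative size at least `β`, and `c` colors it by the parts
of `P` so that every color class in `A` has relative size at least `s / #P.parts`. -/
structure IsCore {κ : Type*} [DecidableEq κ] (P Q : Finpartition (univ : Finset V)) (β s : ℝ)
    (c : V → κ) (A : Finset V) : Prop where
  mem_of_part_eq : ∀ u ∈ A, ∀ v, Q.part u = Q.part v → v ∈ A
  color_eq_iff : ∀ u ∈ A, ∀ v ∈ A, c u = c v ↔ P.part u = P.part v
  le_card_part : ∀ v ∈ A, β * Fintype.card V ≤ #(Q.part v)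
  le_card_color : ∀ i, s * Fintype.card V ≤ #P.parts * #{v ∈ A | c v = i}

lemma exists_color_of_parts (P : Finpartition (univ : Finset V)) {A : Finset V}
    (hA : A.Nonempty) : ∃ k ≤ #P.parts, ∃ c : V → Fin k, (∀ i, ∃ v ∈ A, c v = i) ∧
      ∀ u ∈ A, ∀ v ∈ A, c u = c v ↔ P.part u = P.part v := by
  obtain ⟨a, ha⟩ := hA
  set I := A.image P.part
  have hI {v : V} (hv : v ∈ A) : P.part v ∈ I := mem_image_of_mem _ hv
  let c (v : V) : Fin #I :=
    I.equivFin (if h : P.part v ∈ I then ⟨P.part v, h⟩ else ⟨P.part a, hI ha⟩)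
  have hc {v : V} (hv : v ∈ A) : c v = I.equivFin ⟨P.part v, hI hv⟩ := by
    simp only [c, dif_pos (hI hv)]
  refine ⟨#I, card_le_card ?_, c, fun i ↦ ?_, fun u hu v hv ↦ ?_⟩
  · exact image_subset_iff.2 fun v _ ↦ P.part_mem.2 (mem_univ v)
  · obtain ⟨v, hv, hvi⟩ := mem_image.1 (I.equivFin.symm i).2
    refine ⟨v, hv, ?_⟩
    rw [hc hv, ← Equiv.eq_symm_apply]
    exact Subtype.ext hvi
  · rw [hc hu, hc hv, I.equivFin.apply_eq_iff_eq, Subtype.mk.injEq]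

lemma exists_subset_of_le [Nonempty V] {P Q : Finpartition (univ : Finset V)} (hQP : Q ≤ P) {s : ℝ}
    (hs : 0 < s) {K : ℕ} (hK : #Q.parts ≤ K) :
    ∃ A : Finset V, (∀ u ∈ A, ∀ v, Q.part u = Q.part v → v ∈ A) ∧
      (∀ v ∈ A, s / K * Fintype.card V ≤ #(Q.part v)) ∧
      (∀ v ∈ A, s * Fintype.card V ≤ #P.parts * #{u ∈ A | P.part u = P.part v}) ∧
      (#Aᶜ : ℝ) ≤ 2 * s * Fintype.card V := by
  set n : ℝ := (Fintype.card V : ℝ)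
  have hpos {P : Finpartition (univ : Finset V)} : (0 : ℝ) < #P.parts :=
    Nat.cast_pos.2 (P.parts_nonempty univ_nonempty.ne_empty).card_pos
  have hK' : (0 : ℝ) < K := hpos.trans_le (Nat.cast_le.2 hK)
  set L : Finset V := {v | s / K * n ≤ #(Q.part v)}
  set A : Finset V := {v ∈ L | s * n / #P.parts ≤ #(P.part v ∩ L)}
  have hL : (#Lᶜ : ℝ) ≤ s * n := by
    have h := card_filter_card_part_inter_lt_le Q univ (t := s / K * n) (by positivity)
    simp only [inter_univ] at h
    rw [show Lᶜ = ({v | (#(Q.part v) : ℝ) < s / K * n} : Finset V) by ext; simp [L]]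
    refine h.trans ((mul_le_mul_of_nonneg_right (Nat.cast_le.2 hK) (by positivity)).trans_eq ?_)
    field_simp
  have hLA : (#(L \ A) : ℝ) ≤ s * n := by
    have h := card_filter_card_part_inter_lt_le P L (t := s * n / #P.parts) (by positivity)
    rw [show L \ A = {v ∈ L | (#(P.part v ∩ L) : ℝ) < s * n / #P.parts} by
      ext v; by_cases v ∈ L <;> simp_all [A]]
    exact h.trans_eq (mul_div_cancel₀ _ hpos.ne')
  refine ⟨A, fun u hu v huv ↦ ?_, fun v hv ↦ ?_, fun v hv ↦ ?_, ?_⟩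
  · have hPuv := part_eq_of_le hQP huv
    simp only [A, L, mem_filter, mem_univ, true_and] at hu ⊢
    rwa [← huv, ← hPuv]
  · exact (mem_filter.1 (mem_filter.1 hv).1).2
  · have hsub : P.part v ∩ L ⊆ {u ∈ A | P.part u = P.part v} := fun u hu ↦ by
      obtain ⟨huv, huL⟩ := mem_inter.1 hu
      have hPuv : P.part u = P.part v := P.part_eq_of_mem (P.part_mem.2 (mem_univ v)) huv
      exact mem_filter.2 ⟨mem_filter.2 ⟨huL, hPuv ▸ (mem_filter.1 hv).2⟩, hPuv⟩
    rw [← div_le_iff₀' hpos]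
    exact (mem_filter.1 hv).2.trans (Nat.cast_le.2 (card_le_card hsub))
  · have hsub : Aᶜ ⊆ Lᶜ ∪ L \ A := fun v hv ↦ by
      by_cases hvL : v ∈ L <;> simp_all
    have := Nat.cast_le (α := ℝ) |>.2 ((card_le_card hsub).trans (card_union_le _ _))
    push_cast at this
    linarith

lemma exists_isCore [Nonempty V] {P Q : Finpartition (univ : Finset V)} (hQP : Q ≤ P) {s : ℝ}
    (hs₀ : 0 < s) (hs₁ : s < 1 / 2) {K : ℕ} (hK : #Q.parts ≤ K) :
    ∃ k ≤ #P.parts, ∃ (c : V → Fin k) (A : Finset V), IsCore P Q (s / K) s c A ∧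
      (#Aᶜ : ℝ) ≤ 2 * s * Fintype.card V := by
  obtain ⟨A, hmem, hQcard, hPcard, hAc⟩ := exists_subset_of_le hQP hs₀ hK
  have hn : (0 : ℝ) < Fintype.card V := Nat.cast_pos.2 Fintype.card_pos
  have hA : A.Nonempty := by
    rw [nonempty_iff_ne_empty]
    rintro rfl
    rw [compl_empty, card_univ] at hAc
    nlinarith
  obtain ⟨k, hk, c, hsurj, hc⟩ := exists_color_of_parts P hA
  refine ⟨k, hk, c, A, ⟨hmem, hc, hQcard, fun i ↦ ?_⟩, hAc⟩
  obtain ⟨v, hv, rfl⟩ := hsurj i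
  rw [filter_congr fun u hu ↦ hc u hu v hv]
  exact hPcard v hv

end

section
variable {V : Type u} [Fintype V] {κ : Type*} [DecidableEq κ] {P Q : Finpartition (univ : Finset V)}
  {β s : ℝ} {c : V → κ} {A : Finset V} {y : κ → V}

/-- The change in the density around the pair `(u, v)` when the partition `P` is refined to `Q`. -/
noncomputable def densityShift (G : SimpleGraph V) (P Q : Finpartition (univ : Finset V))
    (u v : V) : ℝ :=
  G.edgeDensity (Q.part u) (Q.part v) - G.edgeDensity (P.part u) (P.part v)

lemma disjoint_part {u v : V} (h : P.part u ≠ P.part v) : Disjoint (P.part u) (P.part v) :=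
  P.disjoint (P.part_mem.2 (mem_univ u)) (P.part_mem.2 (mem_univ v)) h

lemma densityShift_sq_signedGraph (G : SimpleGraph V) (hQP : Q ≤ P) (b : Bool) {u v : V}
    (huv : P.part u ≠ P.part v) :
    densityShift (signedGraph G b) P Q u v ^ 2 = densityShift G P Q u v ^ 2 := by
  have hne (P : Finpartition (univ : Finset V)) (v : V) : (P.part v).Nonempty :=
    ⟨v, P.mem_part (mem_univ v)⟩
  rw [← sq_abs, ← sq_abs (densityShift G P Q u v)]
  congr 1
  exact abs_edgeDensity_signedGraph_sub G b (hne Q u) (hne Q v)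
    (disjoint_part (mt (part_eq_of_le hQP) huv)) (hne P u) (hne P v) (disjoint_part huv)

lemma IsCore.edgeDensity_part_le (hA : IsCore P Q β s c A) (H : SimpleGraph V)
    (hy : ∀ i, y i ∈ A ∧ c (y i) = i) {a : ℝ} (ha : 0 < a) {u v : V} (hu : u ∈ A) (hv : v ∈ A)
    (hd : (H.edgeDensity (Q.part (y (c u))) (Q.part (y (c v))) : ℝ) < a) :
    (H.edgeDensity (Q.part u) (Q.part v) : ℝ) ≤ 2 * a +
      (densityShift H P Q u v ^ 2 + densityShift H P Q (y (c u)) (y (c v)) ^ 2) / (2 * a) := by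
  have hpart {v : V} (hv : v ∈ A) : P.part (y (c v)) = P.part v :=
    (hA.color_eq_iff _ (hy (c v)).1 _ hv).1 (hy (c v)).2
  have hshift : (H.edgeDensity (Q.part u) (Q.part v) : ℝ) =
      H.edgeDensity (Q.part (y (c u))) (Q.part (y (c v))) +
        densityShift H P Q u v - densityShift H P Q (y (c u)) (y (c v)) := by
    simp only [densityShift, hpart hu, hpart hv]
    ring
  -- By AM-GM a shift `t` is at most `a / 2 + t ^ 2 / (2 * a)` in absolute value.
  rw [hshift, ← sub_le_iff_le_add', le_div_iff₀ (by positivity)]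
  nlinarith [sq_nonneg (densityShift H P Q u v - a),
    sq_nonneg (densityShift H P Q (y (c u)) (y (c v)) + a)]

lemma card_filter_adj_eq_sum_edgeDensity (H : SimpleGraph V) (S : Finset (V × V))
    (hS : ∀ u u' v v', Q.part u = Q.part u' → Q.part v = Q.part v' → ((u, v) ∈ S ↔ (u', v') ∈ S)) :
    (#{e ∈ S | H.Adj e.1 e.2} : ℝ) =
      ∑ e ∈ S, (H.edgeDensity (Q.part e.1) (Q.part e.2) : ℝ) := by
  have h := sum_edgeDensity_part_mul H Q (fun u v ↦ if (u, v) ∈ S then 1 else 0)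
    fun u u' v v' hu hv ↦ by simp only [hS u u' v v' hu hv]
  simp only [← Fintype.sum_prod_type', mul_ite, mul_one, mul_zero, sum_ite_mem, univ_inter] at h
  rw [h, sum_boole]

lemma IsCore.card_sparse_edges_le (hA : IsCore P Q β s c A) (hQP : Q ≤ P) (H : SimpleGraph V)
    (hy : ∀ i, y i ∈ A ∧ c (y i) = i) {a : ℝ} (ha : 0 < a) :
    (#{e ∈ crossPairs A c | (H.edgeDensity (Q.part (y (c e.1))) (Q.part (y (c e.2))) : ℝ) < a ∧
        H.Adj e.1 e.2} : ℝ) ≤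
      2 * a * (Fintype.card V : ℝ) ^ 2 + (∑ e ∈ crossPairs A c, densityShift H P Q e.1 e.2 ^ 2 +
        ∑ e ∈ crossPairs A c, densityShift H P Q (y (c e.1)) (y (c e.2)) ^ 2) / (2 * a) := by
  set S : Finset (V × V) := {e ∈ crossPairs A c |
    (H.edgeDensity (Q.part (y (c e.1))) (Q.part (y (c e.2))) : ℝ) < a} with hS
  have hSmem (u u' v v' : V) (hu : Q.part u = Q.part u') (hv : Q.part v = Q.part v') :
      (u, v) ∈ S ↔ (u', v') ∈ S := by
    have hmem {u u' : V} (hu : Q.part u = Q.part u') : u ∈ A ↔ u' ∈ A :=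
      ⟨fun h ↦ hA.mem_of_part_eq u h u' hu, fun h ↦ hA.mem_of_part_eq u' h u hu.symm⟩
    have hcol {u u' : V} (hu : Q.part u = Q.part u') (h : u ∈ A) : c u = c u' :=
      (hA.color_eq_iff u h u' ((hmem hu).1 h)).2 (part_eq_of_le hQP hu)
    simp only [hS, mem_filter, mem_crossPairs, ← hmem hu, ← hmem hv]
    by_cases huv : u ∈ A ∧ v ∈ A
    · rw [hcol hu huv.1, hcol hv huv.2]
    · tauto
  have hcard : #(univ : Finset (V × V)) = Fintype.card V ^ 2 := by
    rw [card_univ, Fintype.card_prod, sq]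
  rw [← filter_filter, card_filter_adj_eq_sum_edgeDensity H S hSmem, ← sum_add_distrib, sum_div,
    ← Nat.cast_pow, ← hcard, mul_comm (2 * a), ← nsmul_eq_mul, ← sum_const]
  calc _ ≤ ∑ e ∈ S, (2 * a + (densityShift H P Q e.1 e.2 ^ 2 +
          densityShift H P Q (y (c e.1)) (y (c e.2)) ^ 2) / (2 * a)) :=
        sum_le_sum fun e he ↦ by
          obtain ⟨he, hd⟩ := mem_filter.1 he
          obtain ⟨hu, hv, -⟩ := mem_crossPairs.1 he
          exact hA.edgeDensity_part_le H hy ha hu hv hd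
    _ ≤ _ := by
        rw [sum_add_distrib]
        refine add_le_add ?_ ?_ <;>
          refine sum_le_sum_of_subset_of_nonneg ?_ fun _ _ _ ↦ by positivity
        · exact subset_univ S
        · exact filter_subset _ _

lemma sum_densityShift_sq_le (hQP : Q ≤ P) {G : SimpleGraph V} {δ : ℝ}
    (hE : partitionEnergy G Q ≤ partitionEnergy G P + δ * (Fintype.card V : ℝ) ^ 2)
    (S : Finset (V × V)) :
    ∑ e ∈ S, densityShift G P Q e.1 e.2 ^ 2 ≤ δ * (Fintype.card V : ℝ) ^ 2 :=
  calc _ ≤ ∑ e, densityShift G P Q e.1 e.2 ^ 2 :=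
        sum_le_sum_of_subset_of_nonneg (subset_univ S) fun _ _ _ ↦ sq_nonneg _
    _ = partitionEnergy G Q - partitionEnergy G P := by
        rw [← sum_sq_edgeDensity_sub G hQP, Fintype.sum_prod_type]
        rfl
    _ ≤ _ := by linarith

lemma IsCore.le_card_color_mul (hA : IsCore P Q β s c A) (hs : 0 ≤ s) (i j : κ) :
    s ^ 2 * (Fintype.card V : ℝ) ^ 2 ≤
      (#P.parts : ℝ) ^ 2 * (#{v ∈ A | c v = i} * #{v ∈ A | c v = j}) :=
  calc s ^ 2 * (Fintype.card V : ℝ) ^ 2 = (s * Fintype.card V) * (s * Fintype.card V) := by ring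
    _ ≤ (#P.parts * #{v ∈ A | c v = i}) * (#P.parts * #{v ∈ A | c v = j}) :=
        mul_le_mul (hA.le_card_color i) (hA.le_card_color j) (by positivity) (by positivity)
    _ = _ := by ring

lemma IsCore.exists_regular_representatives [Finite κ] [Nonempty V] (hA : IsCore P Q β s c A)
    (hQP : Q ≤ P) {G : SimpleGraph V} (hs : 0 < s) {δ η : ℝ} (hδ : 0 < δ)
    (hE : partitionEnergy G Q ≤ partitionEnergy G P + δ * (Fintype.card V : ℝ) ^ 2)
    (hQ : (#(irregularPairs G η Q) : ℝ) ≤ η * (Fintype.card V : ℝ) ^ 2)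
    (hη : 3 * (#P.parts : ℝ) ^ 2 * η ≤ s ^ 2) :
    ∃ y : κ → V, (∀ i, y i ∈ A ∧ c (y i) = i) ∧
      (∀ i j, i ≠ j → IsCutRegular G η (Q.part (y i)) (Q.part (y j))) ∧
      ∑ e ∈ crossPairs A c, densityShift G P Q (y (c e.1)) (y (c e.2)) ^ 2 ≤
        2 * δ * (Fintype.card V : ℝ) ^ 2 := by
  have : (0 : ℝ) < Fintype.card V := Nat.cast_pos.2 Fintype.card_pos
  have : (0 : ℝ) < #P.parts :=
    Nat.cast_pos.2 (P.parts_nonempty univ_nonempty.ne_empty).card_pos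
  obtain ⟨y, hy, havoid, hsum⟩ := exists_representatives_avoiding A c
    (t := s ^ 2 * (Fintype.card V : ℝ) ^ 2 / (#P.parts : ℝ) ^ 2) (B := irregularPairs G η Q)
    (by positivity) (M := δ * (Fintype.card V : ℝ) ^ 2) (by positivity)
    (fun i j ↦ (div_le_iff₀' (by positivity)).2 (hA.le_card_color_mul hs.le i j))
    (fun _ _ ↦ sq_nonneg _) (sum_densityShift_sq_le hQP hE (crossPairs A c)) (by
      rw [le_div_iff₀ (by positivity)]
      nlinarith [mul_le_mul_of_nonneg_left hQ (sq_nonneg (#P.parts : ℝ)),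
        mul_le_mul_of_nonneg_right hη (sq_nonneg (Fintype.card V : ℝ))])
  refine ⟨y, hy, fun i j hij ↦ not_not.1 fun hirr ↦ havoid i j hij ?_,
    hsum.trans_eq (mul_assoc _ _ _).symm⟩
  exact mem_filter.2 ⟨mem_univ _, fun h ↦ hij ((hy i).2 ▸ (hy j).2 ▸ congrArg c h), Or.inr hirr⟩

end

section
variable {V : Type u} [Fintype V] {κ : Type*} [DecidableEq κ]

/-- The ordered pairs of distinct vertices whose status in `G` is not recorded by the densities of
the pairs of representatives `W`: pairs of one color, and pairs of two colors whose status occurs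
with density less than `a` between the representatives of these colors. -/
noncomputable def misrepresentedPairs (G : SimpleGraph V) (a : ℝ) (c : V → κ) (W : κ → Finset V) :
    Finset (V × V) :=
  {e | e.1 ≠ e.2 ∧ (c e.1 = c e.2 ∨ ∃ b, (signedGraph G b).Adj e.1 e.2 ∧
    ((signedGraph G b).edgeDensity (W (c e.1)) (W (c e.2)) : ℝ) < a)}

/-- A coloring `c` of the vertices together with large, disjoint and pairwise regular sets `W`
representing the colors, such that at most `ε * n ^ 2` pairs are misrepresented. -/
structure IsRegularModel (G : SimpleGraph V) (a ε η β : ℝ) (c : V → κ) (W : κ → Finset V) :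
    Prop where
  le_card : ∀ i, β * Fintype.card V ≤ #(W i)
  disjoint : ∀ i j, i ≠ j → Disjoint (W i) (W j)
  isCutRegular : ∀ i j, i ≠ j → IsCutRegular G η (W i) (W j)
  card_misrepresentedPairs_le :
    (#(misrepresentedPairs G a c W) : ℝ) ≤ ε * (Fintype.card V : ℝ) ^ 2

variable {P Q : Finpartition (univ : Finset V)} {β s : ℝ} {c : V → κ} {A : Finset V} {y : κ → V}

lemma IsCore.part_ne_part (hA : IsCore P Q β s c A) {u v : V} (hu : u ∈ A) (hv : v ∈ A)
    (huv : c u ≠ c v) : P.part u ≠ P.part v :=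
  mt (hA.color_eq_iff u hu v hv).2 huv

lemma IsCore.card_sparse_edges_signedGraph_le (hA : IsCore P Q β s c A) (hQP : Q ≤ P)
    {G : SimpleGraph V} (hy : ∀ i, y i ∈ A ∧ c (y i) = i) {a : ℝ} (ha : 0 < a)
    (hQ : ∑ e ∈ crossPairs A c, densityShift G P Q e.1 e.2 ^ 2 ≤
      a ^ 2 / 3 * (Fintype.card V : ℝ) ^ 2)
    (hy' : ∑ e ∈ crossPairs A c, densityShift G P Q (y (c e.1)) (y (c e.2)) ^ 2 ≤
      2 * (a ^ 2 / 3) * (Fintype.card V : ℝ) ^ 2) (b : Bool) :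
    (#{e ∈ crossPairs A c |
        ((signedGraph G b).edgeDensity (Q.part (y (c e.1))) (Q.part (y (c e.2))) : ℝ) < a ∧
        (signedGraph G b).Adj e.1 e.2} : ℝ) ≤ 5 / 2 * a * (Fintype.card V : ℝ) ^ 2 := by
  refine (hA.card_sparse_edges_le hQP _ hy ha).trans ?_
  have hshift (e) (he : e ∈ crossPairs A c) := by
    obtain ⟨hu, hv, huv⟩ := mem_crossPairs.1 he
    exact densityShift_sq_signedGraph G hQP b (hA.part_ne_part hu hv huv)
  have hshift' (e) (he : e ∈ crossPairs A c) :=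
    densityShift_sq_signedGraph G hQP b <| hA.part_ne_part (hy (c e.1)).1 (hy (c e.2)).1 <| by
      rw [(hy _).2, (hy _).2]
      exact (mem_crossPairs.1 he).2.2
  rw [sum_congr rfl hshift, sum_congr rfl hshift', ← le_sub_iff_add_le',
    div_le_iff₀ (by positivity)]
  nlinarith

lemma IsCore.misrepresentedPairs_subset (hA : IsCore P Q β s c A) (G : SimpleGraph V) (δ a : ℝ)
    (W : κ → Finset V) :
    misrepresentedPairs G a c W ⊆ Aᶜ ×ˢ univ ∪ univ ×ˢ Aᶜ ∪ irregularPairs G δ P ∪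
      univ.biUnion fun b ↦ {e ∈ crossPairs A c |
        ((signedGraph G b).edgeDensity (W (c e.1)) (W (c e.2)) : ℝ) < a ∧
        (signedGraph G b).Adj e.1 e.2} := by
  rintro ⟨u, v⟩ he
  obtain ⟨huv, he⟩ := (mem_filter.1 he).2
  simp only [mem_union, mem_product, mem_compl, mem_univ, and_true, true_and, irregularPairs,
    mem_filter, mem_biUnion, mem_crossPairs]
  by_cases hu : u ∈ A; swap
  · exact Or.inl <| Or.inl <| Or.inl hu
  by_cases hv : v ∈ A; swap
  · exact Or.inl <| Or.inl <| Or.inr hv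
  by_cases hc : c u = c v
  · exact Or.inl <| Or.inr ⟨huv, Or.inl ((hA.color_eq_iff u hu v hv).1 hc)⟩
  · obtain ⟨b, hadj, hd⟩ := he.resolve_left hc
    exact Or.inr ⟨b, ⟨hu, hv, hc⟩, hd, hadj⟩

lemma IsCore.card_misrepresentedPairs_le (hA : IsCore P Q β s c A) (G : SimpleGraph V) {δ a t : ℝ}
    (hAc : (#Aᶜ : ℝ) ≤ 2 * s * Fintype.card V)
    (hP : (#(irregularPairs G δ P) : ℝ) ≤ δ * (Fintype.card V : ℝ) ^ 2) (W : κ → Finset V)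
    (hW : ∀ b, (#{e ∈ crossPairs A c |
        ((signedGraph G b).edgeDensity (W (c e.1)) (W (c e.2)) : ℝ) < a ∧
        (signedGraph G b).Adj e.1 e.2} : ℝ) ≤ t * (Fintype.card V : ℝ) ^ 2) :
    (#(misrepresentedPairs G a c W) : ℝ) ≤ (4 * s + δ + 2 * t) * (Fintype.card V : ℝ) ^ 2 := by
  have h := (card_le_card (hA.misrepresentedPairs_subset G δ a W)).trans <|
    (card_union_le _ _).trans <| Nat.add_le_add ((card_union_le _ _).trans <| Nat.add_le_add_right
      (card_union_le _ _) _) card_biUnion_le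
  rw [card_product, card_product, card_univ, Fintype.sum_bool] at h
  have h' := Nat.cast_le (α := ℝ) |>.2 h
  push_cast at h'
  nlinarith [hW true, hW false, mul_le_mul_of_nonneg_right hAc (Nat.cast_nonneg (Fintype.card V))]

lemma IsStronglyRegularPair.exists_isRegularModel [Nonempty V] {G : SimpleGraph V} {a : ℝ}
    {η : ℕ → ℝ} (hPQ : IsStronglyRegularPair G (a ^ 2 / 3) η P Q) (ha₀ : 0 < a) (ha₁ : 10 * a ≤ 1)
    (hη : 3 * (#P.parts : ℝ) ^ 2 * η #P.parts ≤ a ^ 2) {K : ℕ} (hK : #Q.parts ≤ K) :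
    ∃ k ≤ #P.parts, ∃ (c : V → Fin k) (W : Fin k → Finset V),
      IsRegularModel G a (10 * a) (η #P.parts) (a / K) c W := by
  obtain ⟨k, hk, c, A, hA, hAc⟩ := exists_isCore hPQ.le ha₀ (by linarith) hK
  obtain ⟨y, hy, hreg, hsum⟩ := hA.exists_regular_representatives hPQ.le ha₀ (by positivity)
    hPQ.energy_le hPQ.card_irregularPairs_right hη
  have hsparse := hA.card_sparse_edges_signedGraph_le hPQ.le hy ha₀
    (sum_densityShift_sq_le hPQ.le hPQ.energy_le _) hsum
  refine ⟨k, hk, c, fun i ↦ Q.part (y i), fun i ↦ hA.le_card_part _ (hy i).1,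
    fun i j hij ↦ ?_, hreg, ?_⟩
  · refine disjoint_part (mt (part_eq_of_le hPQ.le) (hA.part_ne_part (hy i).1 (hy j).1 ?_))
    rwa [(hy i).2, (hy j).2]
  · have h := hA.card_misrepresentedPairs_le G hAc hPQ.card_irregularPairs_left
      (fun i ↦ Q.part (y i)) hsparse
    refine h.trans ?_
    gcongr
    nlinarith

lemma IsRegularModel.mono {G : SimpleGraph V} {a ε ε' η η' : ℝ} {W : κ → Finset V}
    (h : IsRegularModel G a ε η β c W) (hε : ε ≤ ε') (hη : η ≤ η') :
    IsRegularModel G a ε' η' β c W where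
  le_card := h.le_card
  disjoint := h.disjoint
  isCutRegular i j hij := (h.isCutRegular i j hij).mono hη
  card_misrepresentedPairs_le := h.card_misrepresentedPairs_le.trans (by gcongr)

end

theorem exists_isRegularModel {ε : ℝ} (hε : 0 < ε) :
    ∃ a > 0, a ≤ 1 / 2 ∧ ∀ η : ℕ → ℝ, (∀ k, 0 < η k) → ∃ K : ℕ, ∃ β > 0,
      ∀ (V : Type u) [Fintype V] [Nonempty V] (G : SimpleGraph V),
        ∃ k ≤ K, ∃ (c : V → Fin k) (W : Fin k → Finset V), IsRegularModel G a ε (η k) β c W := by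
  set a : ℝ := min ε 1 / 10 with ha_def
  have ha : 0 < a := by positivity
  have haε : 10 * a ≤ ε := by linarith [min_le_left ε 1]
  have ha₁ : 10 * a ≤ 1 := by linarith [min_le_right ε 1]
  refine ⟨a, ha, by linarith, fun η hη ↦ ?_⟩
  choose η' hη' hη'_le using exists_pos_le_of_le
    (fun k ↦ min (η k) (a ^ 2 / (3 * ((k : ℝ) + 1) ^ 2))) fun k ↦ lt_min (hη k) (by positivity)
  have hη'_sq (m : ℕ) : 3 * (m : ℝ) ^ 2 * η' m ≤ a ^ 2 := by
    have h := (hη'_le m m le_rfl).trans (min_le_right _ _)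
    rw [le_div_iff₀' (by positivity)] at h
    refine le_trans ?_ h
    have := (hη' m).le
    gcongr
    linarith
  obtain ⟨K, hK⟩ := exists_isStronglyRegularPair.{u} (δ := a ^ 2 / 3) (by positivity) η' hη'
  refine ⟨K, a / (K + 1 : ℕ), div_pos ha (Nat.cast_pos.2 K.succ_pos), fun V _ _ G ↦ ?_⟩
  obtain ⟨P, Q, hQK, hPQ⟩ := hK V G
  obtain ⟨k, hk, c, W, hW⟩ :=
    hPQ.exists_isRegularModel ha ha₁ (hη'_sq _) (hQK.trans K.le_succ)
  exact ⟨k, hk.trans ((Finpartition.card_mono hPQ.le).trans hQK), c, W,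
    hW.mono haε ((hη'_le _ k hk).trans (min_le_left _ _))⟩

/-! ### The counting lemma -/

section
variable {ι V : Type*} [DecidableEq ι] {p q : ι}

/-- With the other coordinates fixed, the values at `p` and `q` for which `Ψ` holds form a
combinatorial rectangle. -/
def IsRectangular (Ψ : (ι → V) → Prop) (p q : ι) : Prop :=
  ∀ x s s' t t', Ψ (Function.update (Function.update x p s) q t) →
    Ψ (Function.update (Function.update x p s') q t') →
    Ψ (Function.update (Function.update x p s) q t')

lemma IsRectangular.and {Ψ Φ : (ι → V) → Prop} (hΨ : IsRectangular Ψ p q)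
    (hΦ : IsRectangular Φ p q) : IsRectangular (fun x ↦ Ψ x ∧ Φ x) p q :=
  fun x s s' t t' h h' ↦ ⟨hΨ x s s' t t' h.1 h'.1, hΦ x s s' t t' h.2 h'.2⟩

lemma IsRectangular.forall {τ : Sort*} {Ψ : τ → (ι → V) → Prop}
    (h : ∀ i, IsRectangular (Ψ i) p q) : IsRectangular (fun x ↦ ∀ i, Ψ i x) p q :=
  fun x s s' t t' h₁ h₂ i ↦ h i x s s' t t' (h₁ i) (h₂ i)

lemma IsRectangular.of_dependsOn {Ψ : (ι → V) → Prop} {I : Set ι} (hΨ : DependsOn Ψ I)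
    (hpq : p ∉ I ∨ q ∉ I) : IsRectangular Ψ p q := by
  intro x s s' t t' h h'
  rcases hpq with hp | hq
  · refine (hΨ fun i hi ↦ ?_).mp h'
    have hip : i ≠ p := fun h ↦ hp (h ▸ hi)
    simp only [Function.update_apply, if_neg hip]
  · refine (hΨ fun i hi ↦ ?_).mp h
    have hiq : i ≠ q := fun h ↦ hq (h ▸ hi)
    simp only [Function.update_apply, if_neg hiq]

lemma IsRectangular.exists_rectangle {Ψ : (ι → V) → Prop} (h : IsRectangular Ψ p q)
    (X Y : Finset V) (x : ι → V) :
    ∃ A ⊆ X, ∃ B ⊆ Y, ∀ s ∈ X, ∀ t ∈ Y,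
      Ψ (Function.update (Function.update x p s) q t) ↔ s ∈ A ∧ t ∈ B := by
  refine ⟨{s ∈ X | ∃ t ∈ Y, Ψ (Function.update (Function.update x p s) q t)}, filter_subset _ _,
    {t ∈ Y | ∃ s ∈ X, Ψ (Function.update (Function.update x p s) q t)}, filter_subset _ _,
    fun s hs t ht ↦ ?_⟩
  simp only [mem_filter, hs, ht, true_and]
  constructor
  · exact fun hst ↦ ⟨⟨t, ht, hst⟩, s, hs, hst⟩
  · rintro ⟨⟨t', -, hst'⟩, s', -, hs't⟩
    exact h x s s' t' t hst' hs't

lemma IsCutRegular.card_interedges_ge {G : SimpleGraph V} {a η : ℝ} {X Y A B : Finset V}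
    (h : IsCutRegular G η X Y) (ha : a ≤ G.edgeDensity X Y) (hA : A ⊆ X) (hB : B ⊆ Y) :
    a * (#A * #B) - η * (#X * #Y) ≤ #(G.interedges A B) := by
  have := (abs_le.1 (h A hA B hB)).1
  nlinarith [mul_le_mul_of_nonneg_right ha (by positivity : (0 : ℝ) ≤ #A * #B)]

lemma IsCutRegular.sum_sum_excess_nonneg {G : SimpleGraph V} {a η : ℝ} {X Y A B : Finset V}
    (h : IsCutRegular G η X Y) (ha : a ≤ G.edgeDensity X Y) (hA : A ⊆ X) (hB : B ⊆ Y) :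
    0 ≤ ∑ s ∈ X, ∑ t ∈ Y, ((if (s ∈ A ∧ t ∈ B) ∧ G.Adj s t then 1 else 0) -
      (a * (if s ∈ A ∧ t ∈ B then 1 else 0) - η)) := by
  have hrect : {e ∈ X ×ˢ Y | e.1 ∈ A ∧ e.2 ∈ B} = A ×ˢ B := by
    ext e
    simp only [mem_filter, mem_product]
    exact ⟨fun h ↦ h.2, fun h ↦ ⟨⟨hA h.1, hB h.2⟩, h⟩⟩
  have hge := h.card_interedges_ge ha hA hB
  rw [SimpleGraph.interedges_def] at hge
  rw [← sum_product']
  simp only [sum_sub_distrib, ← mul_sum, sum_boole, sum_const, nsmul_eq_mul, ← filter_filter,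
    hrect, card_product, Nat.cast_mul]
  linarith

variable [Fintype ι]

lemma card_filter_and_adj_ge {G : SimpleGraph V} {a η : ℝ} {S : ι → Finset V} (hpq : p ≠ q)
    (hreg : IsCutRegular G η (S p) (S q)) (ha : a ≤ G.edgeDensity (S p) (S q))
    {Ψ : (ι → V) → Prop} [DecidablePred Ψ] (hΨ : IsRectangular Ψ p q) :
    a * #{x ∈ Fintype.piFinset S | Ψ x} - η * #(Fintype.piFinset S) ≤
      #{x ∈ Fintype.piFinset S | Ψ x ∧ G.Adj (x p) (x q)} := by
  rcases (Fintype.piFinset S).eq_empty_or_nonempty with hempty | hne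
  · simp [hempty]
  set excess : (ι → V) → ℝ := fun x ↦
    (if Ψ x ∧ G.Adj (x p) (x q) then 1 else 0) - (a * (if Ψ x then 1 else 0) - η) with hexcess
  have hsum : ∑ x ∈ Fintype.piFinset S, excess x =
      #{x ∈ Fintype.piFinset S | Ψ x ∧ G.Adj (x p) (x q)} -
        (a * #{x ∈ Fintype.piFinset S | Ψ x} - η * #(Fintype.piFinset S)) := by
    simp only [hexcess, sum_sub_distrib, ← mul_sum, sum_boole, sum_const, nsmul_eq_mul]
    ring
  have hslice (x : ι → V) : 0 ≤ ∑ s ∈ S p, ∑ t ∈ S q,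
      excess (Function.update (Function.update x p s) q t) := by
    obtain ⟨A, hA, B, hB, hAB⟩ := hΨ.exists_rectangle (S p) (S q) x
    have hcongr (s) (hs : s ∈ S p) (t) (ht : t ∈ S q) :
        excess (Function.update (Function.update x p s) q t) =
          (if (s ∈ A ∧ t ∈ B) ∧ G.Adj s t then 1 else 0) -
            (a * (if s ∈ A ∧ t ∈ B then 1 else 0) - η) := by
      simp only [hexcess, hAB s hs t ht, Function.update_self, Function.update_of_ne hpq]
    rw [sum_congr rfl fun s hs ↦ sum_congr rfl (hcongr s hs)]
    exact hreg.sum_sum_excess_nonneg ha hA hB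
  rw [← sub_nonneg, ← hsum]
  refine nonneg_of_mul_nonneg_right (a := (#(S p) * #(S q) : ℝ)) ?_ ?_
  · rw [← sum_piFinset_sum_update₂]
    exact sum_nonneg fun x _ ↦ hslice x
  · have hpos (i : ι) : (0 : ℝ) < #(S i) :=
      Nat.cast_pos.2 (Fintype.piFinset_nonempty.1 hne i).card_pos
    exact mul_pos (hpos p) (hpos q)

lemma card_filter_forall_adj_ge {H : ι × ι → SimpleGraph V} {a η : ℝ} (ha₀ : 0 ≤ a) (ha₁ : a ≤ 1)
    (hη : 0 ≤ η) {S : ι → Finset V} {Ψ : (ι → V) → Prop} [DecidablePred Ψ]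
    (E : Finset (ι × ι))
    (hE : ∀ e ∈ E, e.swap ∉ E) (hreg : ∀ e ∈ E, IsCutRegular (H e) η (S e.1) (S e.2))
    (hdens : ∀ e ∈ E, a ≤ (H e).edgeDensity (S e.1) (S e.2))
    (hΨ : ∀ e ∈ E, IsRectangular Ψ e.1 e.2) :
    a ^ #E * #{x ∈ Fintype.piFinset S | Ψ x} - #E * η * #(Fintype.piFinset S) ≤
      #{x ∈ Fintype.piFinset S | Ψ x ∧ ∀ e ∈ E, (H e).Adj (x e.1) (x e.2)} := by
  induction E using Finset.induction_on with
  | empty => simp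
  | insert e E he ih =>
    simp only [mem_insert, forall_eq_or_imp] at hreg hdens hΨ
    have hself : e.swap ∉ insert e E := hE e (mem_insert_self e E)
    have hne : e.1 ≠ e.2 := fun h ↦ hself (mem_insert.2 (Or.inl (Prod.ext h.symm h)))
    have hswap {e' : ι × ι} (he' : e' ∈ E) :
        e.1 ∉ ({e'.1, e'.2} : Set ι) ∨ e.2 ∉ ({e'.1, e'.2} : Set ι) := by
      have h₁ : e ≠ e' := fun h ↦ he (h ▸ he')
      have h₂ : e.swap ≠ e' := fun h ↦ hself (mem_insert_of_mem (h ▸ he'))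
      simp only [Set.mem_insert_iff, Set.mem_singleton_iff]
      grind [Prod.ext_iff]
    have hrect : IsRectangular (fun x ↦ Ψ x ∧ ∀ e ∈ E, (H e).Adj (x e.1) (x e.2)) e.1 e.2 :=
      hΨ.1.and <| .forall fun e' ↦ .forall fun he' ↦ .of_dependsOn
        (fun x x' h ↦ by rw [h e'.1 (by simp), h e'.2 (by simp)]) (hswap he')
    have hstep := card_filter_and_adj_ge hne hreg.1 hdens.1 hrect
    have hih := mul_le_mul_of_nonneg_left (ih (fun e' he' h ↦ hE e' (mem_insert_of_mem he')
      (mem_insert_of_mem h)) hreg.2 hdens.2 hΨ.2) ha₀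
    have herr : a * (#E * η * #(Fintype.piFinset S)) ≤ #E * η * #(Fintype.piFinset S) :=
      mul_le_of_le_one_left (by positivity) ha₁
    have hset : {x ∈ Fintype.piFinset S | Ψ x ∧ ∀ e' ∈ insert e E, (H e').Adj (x e'.1) (x e'.2)} =
        {x ∈ Fintype.piFinset S | (Ψ x ∧ ∀ e' ∈ E, (H e').Adj (x e'.1) (x e'.2)) ∧
          (H e).Adj (x e.1) (x e.2)} :=
      filter_congr fun x _ ↦ by rw [forall_mem_insert]; tauto
    rw [hset, card_insert_of_notMem he, pow_succ']
    push_cast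
    linarith

end

/-! ### Homogeneous tuples -/

section
variable {V : Type u}

theorem exists_ramsey (a b : ℕ) : ∃ N, ∀ {V : Type u} (G : SimpleGraph V) (S : Finset V), N ≤ #S →
    (∃ T ⊆ S, G.IsNClique a T) ∨ ∃ T ⊆ S, Gᶜ.IsNClique b T := by
  induction a generalizing b with
  | zero => exact ⟨0, fun G S _ ↦ .inl ⟨∅, empty_subset S, by simp⟩⟩
  | succ a iha =>
    induction b with
    | zero => exact ⟨0, fun G S _ ↦ .inr ⟨∅, empty_subset S, by simp⟩⟩
    | succ b ihb =>
      obtain ⟨N₁, hN₁⟩ := iha (b + 1)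
      obtain ⟨N₂, hN₂⟩ := ihb
      refine ⟨N₁ + N₂ + 1, fun {V} G S hS ↦ ?_⟩
      obtain ⟨v, hv⟩ : S.Nonempty := card_pos.1 (by lia)
      have hsplit : #{w ∈ S.erase v | G.Adj v w} + #{w ∈ S.erase v | ¬G.Adj v w} = #S - 1 := by
        rw [card_filter_add_card_filter_not, card_erase_of_mem hv]
      have hsub (p : V → Prop) [DecidablePred p] : {w ∈ S.erase v | p w} ⊆ S :=
        (filter_subset _ _).trans (erase_subset v S)
      have hinsert {p : V → Prop} [DecidablePred p] {T : Finset V}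
          (hT : T ⊆ {w ∈ S.erase v | p w}) : insert v T ⊆ S := insert_subset hv (hT.trans (hsub p))
      rcases (by lia : N₁ ≤ #{w ∈ S.erase v | G.Adj v w} ∨ N₂ ≤ #{w ∈ S.erase v | ¬G.Adj v w})
        with hN | hN
      · rcases hN₁ G _ hN with ⟨T, hTS, hT⟩ | ⟨T, hTS, hT⟩
        · exact .inl ⟨insert v T, hinsert hTS, hT.insert fun w hw ↦ (mem_filter.1 (hTS hw)).2⟩
        · exact .inr ⟨T, hTS.trans (hsub _), hT⟩
      · rcases hN₂ G _ hN with ⟨T, hTS, hT⟩ | ⟨T, hTS, hT⟩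
        · exact .inl ⟨T, hTS.trans (hsub _), hT⟩
        · refine .inr ⟨insert v T, hinsert hTS, hT.insert fun w hw ↦ ?_⟩
          have hw := mem_filter.1 (hTS hw)
          exact (SimpleGraph.compl_adj ..).2 ⟨(ne_of_mem_erase hw.1).symm, hw.2⟩

/-- The tuple `x` spans a complete subgraph of `G` if `s` is true, and an independent set of
distinct vertices if `s` is false. -/
def IsHomogeneous {ι : Type*} (G : SimpleGraph V) (s : Bool) (x : ι → V) : Prop :=
  Pairwise fun i j ↦ (signedGraph G s).Adj (x i) (x j)

theorem exists_isHomogeneous_comp_embedding (h : ℕ) : ∃ N, ∀ {V : Type u} (G : SimpleGraph V)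
    (x : Fin N ↪ V), ∃ (s : Bool) (e : Fin h ↪ Fin N), IsHomogeneous G s (x ∘ e) := by
  obtain ⟨N, hN⟩ := exists_ramsey h h
  refine ⟨N, fun G x ↦ ?_⟩
  have hclique {s : Bool} {T : Finset (Fin N)} (hT : (signedGraph (G.comap x) s).IsNClique h T) :
      ∃ (s : Bool) (e : Fin h ↪ Fin N), IsHomogeneous G s (x ∘ e) :=
    ⟨s, (T.orderEmbOfFin hT.card_eq).toEmbedding, fun i j hij ↦
      signedGraph_adj_of_comap x.injective <| hT.isClique (T.orderEmbOfFin_mem hT.card_eq i)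
        (T.orderEmbOfFin_mem hT.card_eq j) ((T.orderEmbOfFin hT.card_eq).injective.ne hij)⟩
  rcases hN (G.comap x) univ (by simp) with ⟨T, -, hT⟩ | ⟨T, -, hT⟩
  · exact hclique (s := true) hT
  · exact hclique (s := false) hT

theorem card_filter_comp_embedding {ι ι' : Type*} [Fintype ι] [Fintype ι'] [DecidableEq ι]
    [DecidableEq ι'] [Fintype V] (e : ι ↪ ι') (A : (ι → V) → Prop) :
    #{x : ι' → V | A (x ∘ e)} * Fintype.card V ^ Fintype.card ι =
      #{x : ι → V | A x} * Fintype.card V ^ Fintype.card ι' := by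
  let rest := ((Set.range e)ᶜ : Set ι')
  let split : (ι' → V) ≃ (ι → V) × (rest → V) :=
    ((((Equiv.ofInjective e e.injective).sumCongr (Equiv.refl rest)).trans
      (Equiv.Set.sumCompl (Set.range e))).symm.arrowCongr (Equiv.refl V)).trans
      (Equiv.sumArrowEquivProdArrow ι rest V)
  have hsplit (x : ι' → V) : (split x).1 = x ∘ e := rfl
  have hcard : #{x : ι' → V | A (x ∘ e)} =
      #{x : ι → V | A x} * Fintype.card (rest → V) := by
    rw [← card_univ, ← card_product]
    refine card_equiv split fun x ↦ ?_
    simp [hsplit]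
  have hpow : Fintype.card V ^ Fintype.card ι' =
      Fintype.card V ^ Fintype.card ι * Fintype.card (rest → V) := by
    simpa [Fintype.card_prod, Fintype.card_fun] using Fintype.card_congr split
  rw [hcard, hpow]
  ring

theorem pow_le_two_mul_descFactorial {n t : ℕ} (h : 2 * t ^ 2 ≤ n) :
    n ^ t ≤ 2 * n.descFactorial t := by
  rcases n.eq_zero_or_pos with rfl | hn
  · obtain rfl : t = 0 := by simpa using h
    simp
  have htn : t ≤ n := by nlinarith
  have hn' : (0 : ℝ) < n := Nat.cast_pos.2 hn
  have hbernoulli : (1 : ℝ) / 2 ≤ (1 - t / n) ^ t := by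
    have hcast : 2 * (t : ℝ) ^ 2 ≤ n := mod_cast h
    have ht : (t : ℝ) * (t / n) ≤ 1 / 2 := by
      rw [← mul_div_assoc, div_le_div_iff₀ hn' two_pos]
      linarith
    have ht₁ : (t : ℝ) / n ≤ 1 := div_le_one_of_le₀ (mod_cast htn) hn'.le
    have := one_add_mul_le_pow (a := -((t : ℝ) / n)) (by linarith) t
    rw [← sub_eq_add_neg] at this
    linarith
  have hpow : ((n - t : ℕ) : ℝ) ^ t = n ^ t * (1 - t / n) ^ t := by
    rw [← mul_pow, mul_sub, mul_div_cancel₀ _ hn'.ne', mul_one, Nat.cast_sub htn]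
  have hdesc : ((n - t : ℕ) : ℝ) ^ t ≤ n.descFactorial t := mod_cast
    (Nat.pow_le_pow_left (by lia) t).trans (Nat.pow_sub_le_descFactorial n t)
  have : (n : ℝ) ^ t ≤ 2 * n.descFactorial t := by nlinarith [pow_pos hn' t]
  exact_mod_cast this

theorem card_embedding_le_sum_isHomogeneous [Fintype V] {G : SimpleGraph V} {h T : ℕ}
    (hT : ∀ x : Fin T ↪ V, ∃ (s : Bool) (e : Fin h ↪ Fin T), IsHomogeneous G s (x ∘ e)) :
    Fintype.card (Fin T ↪ V) ≤
      ∑ se : Bool × (Fin h ↪ Fin T), #{x : Fin T → V | IsHomogeneous G se.1 (x ∘ se.2)} := by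
  refine le_trans ?_ card_biUnion_le
  rw [← card_univ]
  refine card_le_card_of_injOn (fun x ↦ ⇑x) (fun x _ ↦ ?_) DFunLike.coe_injective.injOn
  obtain ⟨s, e, hse⟩ := hT x
  simp only [coe_biUnion, Set.mem_iUnion]
  exact ⟨(s, e), by simp, by simpa using hse⟩

theorem exists_isHomogeneous_supersaturation (h : ℕ) : ∃ ζ > (0 : ℝ), ∃ N : ℕ,
    ∀ {V : Type u} [Fintype V] (G : SimpleGraph V), N ≤ Fintype.card V → ∃ s,
      ζ * Fintype.card V ^ h ≤ #{x : Fin h → V | IsHomogeneous G s x} := by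
  obtain ⟨T, hT⟩ := exists_isHomogeneous_comp_embedding.{u} h
  set M := Fintype.card (Fin h ↪ Fin T) with hM
  refine ⟨1 / (4 * (M + 1)), by positivity, 2 * T ^ 2 + 1, fun {V} _ G hV ↦ ?_⟩
  set n := Fintype.card V
  by_contra! hfew
  have hn : (0 : ℝ) < n := by exact_mod_cast (by lia : 0 < n)
  have hpow : (n : ℝ) ^ T ≤ 2 * Fintype.card (Fin T ↪ V) := by
    rw [Fintype.card_embedding_eq, Fintype.card_fin]
    exact_mod_cast pow_le_two_mul_descFactorial (by lia : 2 * T ^ 2 ≤ n)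
  have hterm (se : Bool × (Fin h ↪ Fin T)) :
      (#{x : Fin T → V | IsHomogeneous G se.1 (x ∘ se.2)} : ℝ) ≤ 1 / (4 * (M + 1)) * n ^ T := by
    have hmarg := card_filter_comp_embedding se.2 (IsHomogeneous G se.1)
    rw [Fintype.card_fin, Fintype.card_fin] at hmarg
    have hmarg : (#{x : Fin T → V | IsHomogeneous G se.1 (x ∘ se.2)} : ℝ) * n ^ h =
      #{x | IsHomogeneous G se.1 x} * n ^ T := mod_cast hmarg
    refine le_of_mul_le_mul_right ?_ (pow_pos hn h)
    rw [hmarg]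
    nlinarith [mul_le_mul_of_nonneg_right (hfew se.1).le (pow_pos hn T).le]
  have hsum : (Fintype.card (Fin T ↪ V) : ℝ) ≤ (2 * M) * (1 / (4 * (M + 1)) * n ^ T) := by
    calc (Fintype.card (Fin T ↪ V) : ℝ)
        ≤ ∑ se : Bool × (Fin h ↪ Fin T),
          (#{x : Fin T → V | IsHomogeneous G se.1 (x ∘ se.2)} : ℝ) :=
        mod_cast card_embedding_le_sum_isHomogeneous (hT G)
      _ ≤ ∑ se : Bool × (Fin h ↪ Fin T), 1 / (4 * (M + 1)) * (n : ℝ) ^ T :=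
        sum_le_sum fun se _ ↦ hterm se
      _ = (2 * M) * (1 / (4 * (M + 1)) * n ^ T) := by simp [hM]
  have hlt : (2 * (M : ℝ)) * (1 / (4 * (M + 1))) < 1 / 2 := by
    rw [mul_one_div, div_lt_div_iff₀ (by positivity) two_pos]
    linarith
  nlinarith [pow_pos hn T]

end

section
variable {V : Type u}

lemma exists_embedding_of_signedGraph_adj {U : Type*} [LinearOrder U] {F : SimpleGraph U}
    {G : SimpleGraph V} {x : U → V}
    (h : ∀ u v, u < v → (signedGraph G (decide (F.Adj u v))).Adj (x u) (x v)) :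
    ∃ f : F ↪g G, ⇑f = x := by
  have hadj {u v : U} (huv : u ≠ v) : (signedGraph G (decide (F.Adj u v))).Adj (x u) (x v) := by
    rcases huv.lt_or_gt with hlt | hgt
    · exact h u v hlt
    · rw [F.adj_comm]
      exact (h v u hgt).symm
  have hinj : Function.Injective x := fun u v huv ↦ by
    by_contra hne
    exact (hadj hne).ne huv
  refine ⟨⟨⟨x, hinj⟩, fun {u v} ↦ ?_⟩, rfl⟩
  rcases eq_or_ne u v with rfl | huv
  · simp
  · simpa using (eq_decide_of_signedGraph_adj (hadj huv)).symm

lemma card_filter_exists_embedding_ge {ι κ U : Type*} [Fintype ι] [DecidableEq ι] [Fintype U]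
    [LinearOrder U] {F : SimpleGraph U} {G : SimpleGraph V} {a η : ℝ} {S : ι → Finset V}
    {Ψ : (ι → V) → Prop} [DecidablePred Ψ] (e : U ↪ ι) (c : ι → κ) (ha₀ : 0 ≤ a) (ha₁ : a ≤ 1)
    (hη : 0 ≤ η)
    (hdisj : ∀ p q, c p ≠ c q → Disjoint (S p) (S q))
    (hreg : ∀ p q, c p ≠ c q → IsCutRegular G η (S p) (S q))
    (hΨ : ∀ p q, c p ≠ c q → IsRectangular Ψ p q)
    (hdens : ∀ u v, c (e u) ≠ c (e v) →
      a ≤ (signedGraph G (decide (F.Adj u v))).edgeDensity (S (e u)) (S (e v)))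
    (hsame : ∀ x, Ψ x → ∀ u v, u ≠ v → c (e u) = c (e v) →
      (signedGraph G (decide (F.Adj u v))).Adj (x (e u)) (x (e v))) :
    a ^ Fintype.card U ^ 2 * #{x ∈ Fintype.piFinset S | Ψ x} -
        Fintype.card U ^ 2 * η * #(Fintype.piFinset S) ≤
      #{x ∈ Fintype.piFinset S | ∃ f : F ↪g G, ⇑f = x ∘ e} := by
  let pairs : Finset (U × U) := {uv | uv.1 < uv.2 ∧ c (e uv.1) ≠ c (e uv.2)}
  let E : Finset (ι × ι) := pairs.image (Prod.map e e)
  have hE {p : ι × ι} (hp : p ∈ E) :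
      ∃ u v, u < v ∧ c (e u) ≠ c (e v) ∧ p = (e u, e v) := by
    obtain ⟨⟨u, v⟩, huv, rfl⟩ := mem_image.1 hp
    exact ⟨u, v, (mem_filter.1 huv).2.1, (mem_filter.1 huv).2.2, rfl⟩
  have hcardE : #E ≤ Fintype.card U ^ 2 := card_image_le.trans <|
    (card_le_univ pairs).trans_eq (by rw [Fintype.card_prod, sq])
  have hcount := card_filter_forall_adj_ge (S := S) (Ψ := Ψ) (η := η)
    (H := fun p ↦ signedGraph G (decide ((F.map e).Adj p.1 p.2))) ha₀ ha₁ hη E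
    (fun p hp hp' ↦ by
      obtain ⟨u, v, huv, -, rfl⟩ := hE hp
      obtain ⟨u', v', huv', -, h⟩ := hE hp'
      simp only [Prod.swap_prod_mk, Prod.mk.injEq, e.injective.eq_iff] at h
      exact lt_asymm huv (h.1 ▸ h.2 ▸ huv'))
    (fun p hp ↦ by
      obtain ⟨u, v, -, hc, rfl⟩ := hE hp
      exact (hreg _ _ hc).signedGraph (hdisj _ _ hc) _)
    (fun p hp ↦ by
      obtain ⟨u, v, -, hc, rfl⟩ := hE hp
      simpa only [SimpleGraph.map_adj_apply] using hdens u v hc)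
    (fun p hp ↦ by
      obtain ⟨u, v, -, hc, rfl⟩ := hE hp
      exact hΨ _ _ hc)
  have hsub : {x ∈ Fintype.piFinset S | Ψ x ∧ ∀ p ∈ E,
        (signedGraph G (decide ((F.map e).Adj p.1 p.2))).Adj (x p.1) (x p.2)} ⊆
      {x ∈ Fintype.piFinset S | ∃ f : F ↪g G, ⇑f = x ∘ e} := by
    refine monotone_filter_right _ fun x _ hx ↦ exists_embedding_of_signedGraph_adj fun u v huv ↦ ?_
    by_cases hc : c (e u) = c (e v)
    · exact hsame x hx.1 u v huv.ne hc
    · simpa only [SimpleGraph.map_adj_apply, Function.comp_apply] using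
        hx.2 (e u, e v) (mem_image.2 ⟨(u, v), by simp [pairs, huv, hc], rfl⟩)
  calc _ ≤ a ^ #E * #{x ∈ Fintype.piFinset S | Ψ x} - #E * η * #(Fintype.piFinset S) := by
        have hpow : a ^ Fintype.card U ^ 2 ≤ a ^ #E := pow_le_pow_of_le_one ha₀ ha₁ hcardE
        have hcast : (#E : ℝ) ≤ Fintype.card U ^ 2 := mod_cast hcardE
        gcongr
    _ ≤ _ := hcount.trans (mod_cast card_le_card hsub)

lemma exists_isHomogeneous_supersaturation_of_finset (h : ℕ) : ∃ ζ > (0 : ℝ), ∃ N : ℕ,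
    ∀ {V : Type u} (G : SimpleGraph V) (W : Finset V), N ≤ #W → ∃ s,
      ζ * #(Fintype.piFinset fun _ : Fin h ↦ W) ≤
        #{x ∈ Fintype.piFinset fun _ : Fin h ↦ W | IsHomogeneous G s x} := by
  obtain ⟨ζ, hζ, N, hN⟩ := exists_isHomogeneous_supersaturation.{u} h
  refine ⟨ζ, hζ, N, fun G W hW ↦ ?_⟩
  obtain ⟨s, hs⟩ := hN (G.comap ((↑) : W → _)) (by rwa [Fintype.card_coe])
  refine ⟨s, ?_⟩
  rw [Fintype.card_piFinset_const, Nat.cast_pow]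
  rw [Fintype.card_coe] at hs
  refine hs.trans (Nat.cast_le.2 (card_le_card_of_injOn (fun x i ↦ (x i : _)) ?_ ?_))
  · intro x hx
    have hx : IsHomogeneous _ s x := (mem_filter.1 hx).2
    exact mem_filter.2 ⟨Fintype.mem_piFinset.2 fun i ↦ (x i).2,
      fun i j hij ↦ signedGraph_adj_of_comap Subtype.val_injective (hx hij)⟩
  · exact fun x _ y _ hxy ↦ funext fun i ↦ Subtype.ext (congrFun hxy i)

lemma card_filter_forall_row {κ τ : Type*} [Fintype κ] [DecidableEq κ] [Fintype τ] [DecidableEq τ]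
    (W : κ → Finset V) (A : κ → (τ → V) → Prop) :
    #{x ∈ Fintype.piFinset fun p : κ × τ ↦ W p.1 | ∀ i, A i fun j ↦ x (i, j)} =
      ∏ i, #{y ∈ Fintype.piFinset fun _ : τ ↦ W i | A i y} := by
  rw [← Fintype.card_piFinset]
  refine card_equiv (Equiv.curry κ τ V) fun x ↦ ?_
  simp only [mem_filter, Fintype.mem_piFinset, Prod.forall, forall_and, Equiv.curry_apply]
  rfl

end

/-! ### Compatible graphs -/

section
variable {V : Type u} {κ : Type*}

/-- The graph `F`, with its vertices colored by `c`, uses between any two colors only the signs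
(`true` for edges, `false` for non-edges) permitted by `R`. -/
def IsCompatible {U : Type*} (R : κ → κ → Set Bool) (c : U → κ) (F : SimpleGraph U) : Prop :=
  ∀ u v, u ≠ v → decide (F.Adj u v) ∈ R (c u) (c v)

lemma exists_isCompatible_repair {R : κ → κ → Set Bool} (hsymm : ∀ i j, R i j = R j i)
    (hne : ∀ i j, (R i j).Nonempty) (c : V → κ) (G : SimpleGraph V) :
    ∃ G' : SimpleGraph V, IsCompatible R c G' ∧
      ∀ u v, decide (G.Adj u v) ∈ R (c u) (c v) → (G'.Adj u v ↔ G.Adj u v) := by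
  refine ⟨⟨fun u v ↦ u ≠ v ∧ (G.Adj u v ↔ decide (G.Adj u v) ∈ R (c u) (c v)),
    ⟨fun u v h ↦ ?_⟩, ⟨fun u h ↦ h.1 rfl⟩⟩, fun u v huv ↦ ?_, fun u v h ↦ ?_⟩
  · rw [G.adj_comm, hsymm]
    exact ⟨h.1.symm, h.2⟩
  · obtain ⟨b, hb⟩ := hne (c u) (c v)
    by_cases hadj : G.Adj u v <;> cases b <;>
      by_cases hR : decide (G.Adj u v) ∈ R (c u) (c v) <;> simp_all
  · simp only [h, iff_true]
    exact ⟨And.right, fun hadj ↦ ⟨hadj.ne, hadj⟩⟩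

lemma card_edgeFinset_symmDiff_le [Fintype V] [DecidableEq V] {G G' : SimpleGraph V}
    {B : Finset (V × V)} (h : ∀ u v, u ≠ v → (u, v) ∉ B → (G'.Adj u v ↔ G.Adj u v)) :
    #(G.edgeFinset ∆ G'.edgeFinset) ≤ #B := by
  refine (card_le_card fun e he ↦ ?_).trans (card_image_le (s := B) (f := fun p ↦ s(p.1, p.2)))
  induction e with | h u v =>
  rw [mem_symmDiff, SimpleGraph.mem_edgeFinset, SimpleGraph.mem_edgeFinset,
    SimpleGraph.mem_edgeSet, SimpleGraph.mem_edgeSet] at he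
  have hne : u ≠ v := he.elim (fun h ↦ h.1.ne) fun h ↦ h.1.ne
  by_contra hB
  have := h u v hne fun huv ↦ hB (mem_image_of_mem _ huv)
  tauto

/-- The signs permitted between the parts of the model `W` of `G`: those of density at least `a`
between different parts, and the sign `s i` inside the part `W i`. -/
def modelSigns (G : SimpleGraph V) (a : ℝ) (W : κ → Finset V) (s : κ → Bool) (i j : κ) :
    Set Bool :=
  if i = j then {s i} else {b | a ≤ (signedGraph G b).edgeDensity (W i) (W j)}

lemma mem_modelSigns_self {G : SimpleGraph V} {a : ℝ} {W : κ → Finset V} {s : κ → Bool} {i : κ}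
    {b : Bool} : b ∈ modelSigns G a W s i i ↔ b = s i := by
  simp [modelSigns]

lemma mem_modelSigns_of_ne {G : SimpleGraph V} {a : ℝ} {W : κ → Finset V} {s : κ → Bool} {i j : κ}
    {b : Bool} (hij : i ≠ j) :
    b ∈ modelSigns G a W s i j ↔ a ≤ (signedGraph G b).edgeDensity (W i) (W j) := by
  rw [modelSigns, if_neg hij, Set.mem_ofPred_eq]

lemma modelSigns_comm (G : SimpleGraph V) (a : ℝ) (W : κ → Finset V) (s : κ → Bool) (i j : κ) :
    modelSigns G a W s i j = modelSigns G a W s j i := by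
  rcases eq_or_ne i j with rfl | hij
  · rfl
  · simp only [modelSigns, if_neg hij, if_neg hij.symm, SimpleGraph.edgeDensity_comm]

lemma modelSigns_nonempty {G : SimpleGraph V} {a : ℝ} {W : κ → Finset V} (s : κ → Bool)
    (ha : a ≤ 1 / 2) (hne : ∀ i, (W i).Nonempty) (hW : ∀ i j, i ≠ j → Disjoint (W i) (W j))
    (i j : κ) : (modelSigns G a W s i j).Nonempty := by
  rcases eq_or_ne i j with rfl | hij
  · exact ⟨s i, mem_modelSigns_self.2 rfl⟩
  · rcases le_total a (G.edgeDensity (W i) (W j)) with h | h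
    · exact ⟨true, (mem_modelSigns_of_ne hij).2 h⟩
    · refine ⟨false, (mem_modelSigns_of_ne hij).2 ?_⟩
      rw [edgeDensity_signedGraph_false G (hne i) (hne j) (hW i j hij)]
      linarith

variable [DecidableEq κ]

lemma IsRegularModel.exists_isCompatible [Fintype V] [DecidableEq V] {G : SimpleGraph V}
    {a ε η β : ℝ} {c : V → κ} {W : κ → Finset V} (h : IsRegularModel G a ε η β c W) (ha : a ≤ 1 / 2)
    (hne : ∀ i, (W i).Nonempty) (s : κ → Bool) :
    ∃ G' : SimpleGraph V, IsCompatible (modelSigns G a W s) c G' ∧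
      (#(G.edgeFinset ∆ G'.edgeFinset) : ℝ) ≤ ε * (Fintype.card V : ℝ) ^ 2 := by
  obtain ⟨G', hG', hrepair⟩ := exists_isCompatible_repair (modelSigns_comm G a W s)
    (modelSigns_nonempty s ha hne h.disjoint) c G
  refine ⟨G', hG', le_trans (mod_cast card_edgeFinset_symmDiff_le fun u v huv hB ↦ hrepair u v ?_)
    h.card_misrepresentedPairs_le⟩
  simp only [misrepresentedPairs, mem_filter, mem_univ, true_and, not_and, not_or, not_exists,
    not_lt] at hB
  obtain ⟨hc, hdens⟩ := hB huv
  exact (mem_modelSigns_of_ne hc).2 (hdens _ (signedGraph_adj_decide G huv))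

lemma pow_mul_card_piFinset_le [Fintype κ] {G : SimpleGraph V} {ζ : ℝ} {W : κ → Finset V}
    {s : κ → Bool} {τ : Type*} [Fintype τ] [DecidableEq τ] (hζ : 0 ≤ ζ)
    (hs : ∀ i, ζ * #(Fintype.piFinset fun _ : τ ↦ W i) ≤
      #{x ∈ Fintype.piFinset fun _ : τ ↦ W i | IsHomogeneous G (s i) x}) :
    ζ ^ Fintype.card κ * #(Fintype.piFinset fun p : κ × τ ↦ W p.1) ≤
      #{x ∈ Fintype.piFinset fun p : κ × τ ↦ W p.1 |
        ∀ i, IsHomogeneous G (s i) fun j ↦ x (i, j)} := by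
  rw [card_filter_forall_row, Fintype.card_piFinset, Fintype.prod_prod_type]
  push_cast
  calc ζ ^ Fintype.card κ * ∏ i, ∏ _j : τ, (#(W i) : ℝ)
      = ∏ i, ζ * #(Fintype.piFinset fun _ : τ ↦ W i) := by
        simp only [prod_mul_distrib, prod_const, card_univ, Fintype.card_piFinset, Nat.cast_pow]
    _ ≤ _ := prod_le_prod (fun i _ ↦ by positivity) fun i _ ↦ hs i

lemma card_filter_exists_embedding_ge_of_isCompatible [Fintype κ] {G : SimpleGraph V} {a η ζ : ℝ}
    {W : κ → Finset V} {s : κ → Bool} {h m : ℕ} (hmh : m ≤ h) {F : SimpleGraph (Fin m)}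
    {c : Fin m → κ} (ha₀ : 0 ≤ a) (ha₁ : a ≤ 1) (hη : 0 ≤ η) (hζ : 0 ≤ ζ)
    (hF : IsCompatible (modelSigns G a W s) c F) (hW : ∀ i j, i ≠ j → Disjoint (W i) (W j))
    (hreg : ∀ i j, i ≠ j → IsCutRegular G η (W i) (W j))
    (hs : ∀ i, ζ * #(Fintype.piFinset fun _ : Fin h ↦ W i) ≤
      #{x ∈ Fintype.piFinset fun _ : Fin h ↦ W i | IsHomogeneous G (s i) x}) :
    (a ^ h ^ 2 * ζ ^ Fintype.card κ - h ^ 2 * η) *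
        #(Fintype.piFinset fun p : κ × Fin h ↦ W p.1) ≤
      #{x ∈ Fintype.piFinset fun p : κ × Fin h ↦ W p.1 |
        ∃ f : F ↪g G, ⇑f = fun u ↦ x (c u, Fin.castLE hmh u)} := by
  let e : Fin m ↪ κ × Fin h :=
    ⟨fun u ↦ (c u, Fin.castLE hmh u),
      fun u v huv ↦ Fin.castLE_injective hmh (congrArg Prod.snd huv)⟩
  have hcount := card_filter_exists_embedding_ge (F := F) (G := G)
    (Ψ := fun x ↦ ∀ i, IsHomogeneous G (s i) fun j ↦ x (i, j)) e Prod.fst ha₀ ha₁ hη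
    (fun p q hpq ↦ hW _ _ hpq) (fun p q hpq ↦ hreg _ _ hpq) ?_ ?_ ?_
  · refine le_trans ?_ hcount
    rw [Fintype.card_fin, sub_mul]
    refine sub_le_sub ?_ ?_
    · rw [mul_assoc]
      exact mul_le_mul (pow_le_pow_of_le_one ha₀ ha₁ (Nat.pow_le_pow_left hmh 2))
        (pow_mul_card_piFinset_le hζ hs) (by positivity) (by positivity)
    · gcongr
  · refine fun p q hpq ↦ .forall fun i ↦ .of_dependsOn (I := {r | r.1 = i}) ?_ ?_
    · intro x y hxy
      simp only [funext fun j ↦ hxy (i, j) rfl]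
    · by_contra! hi
      exact hpq (hi.1.trans hi.2.symm)
  · intro u v huv
    exact (mem_modelSigns_of_ne huv).1 (hF u v fun h ↦ huv (by rw [h]))
  · intro x hx u v huv hc
    have hsign := hF u v huv
    replace hc : c u = c v := hc
    rw [← hc, mem_modelSigns_self] at hsign
    rw [hsign]
    change (signedGraph G (s (c u))).Adj (x (c u, _)) (x (c v, _))
    rw [← hc]
    exact hx (c u) ((Fin.castLE_injective hmh).ne huv)

end

/-! ### Forbidden subgraphs -/

section
variable {P : ∀ n : ℕ, Set (SimpleGraph (Fin n))} {V : Type*}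

/-- The graph induced by `G` on the vertex set `X` contains an induced copy of a graph outside
`P`. -/
def ContainsForbidden (P : ∀ n : ℕ, Set (SimpleGraph (Fin n))) (G : SimpleGraph V) (X : Set V) :
    Prop :=
  ∃ m, ∃ F ∉ P m, ∃ f : F ↪g G, Set.range f ⊆ X

lemma ContainsForbidden.mono {G : SimpleGraph V} {X Y : Set V} (h : ContainsForbidden P G X)
    (hXY : X ⊆ Y) : ContainsForbidden P G Y :=
  let ⟨m, F, hF, f, hf⟩ := h
  ⟨m, F, hF, f, hf.trans hXY⟩

lemma exists_forbidden_size_bound (P : ∀ n : ℕ, Set (SimpleGraph (Fin n))) (κ : Type*) [Finite κ] :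
    ∃ h, ∀ R : κ → κ → Set Bool, (∃ n, ∃ F ∉ P n, ∃ c, IsCompatible R c F) →
      ∃ m ≤ h, ∃ F ∉ P m, ∃ c, IsCompatible R c F := by
  have hsize (R : κ → κ → Set Bool) : ∃ m, (∃ n, ∃ F ∉ P n, ∃ c, IsCompatible R c F) →
      ∃ F ∉ P m, ∃ c, IsCompatible R c F := by
    by_cases hR : ∃ n, ∃ F ∉ P n, ∃ c, IsCompatible R c F
    · exact hR.imp fun m hm _ ↦ hm
    · exact ⟨0, fun h ↦ absurd h hR⟩
  choose size hsize using hsize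
  obtain ⟨h, hh⟩ := Finite.exists_le size
  exact ⟨h, fun R hR ↦ ⟨size R, hh R, hsize R hR⟩⟩

lemma card_le_card_containsForbidden [Fintype V] {ι : Type*} [Fintype ι] [DecidableEq ι]
    {G : SimpleGraph V} {m : ℕ} {F : SimpleGraph (Fin m)} (hF : F ∉ P m) (e : Fin m → ι)
    {A : Finset (ι → V)} (hA : ∀ x ∈ A, ∃ f : F ↪g G, ⇑f = fun u ↦ x (e u)) :
    #A ≤ #{x : ι → V | ContainsForbidden P G (Set.range x)} := by
  refine card_le_card fun x hx ↦ ?_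
  obtain ⟨f, hf⟩ := hA x hx
  exact mem_filter.2 ⟨mem_univ x, m, F, hF, f, hf ▸ Set.range_comp_subset_range e x⟩

lemma half_le_sub_mul_div {x y : ℝ} (hx : 0 ≤ x) (hy : 0 ≤ y) :
    x / 2 ≤ x - y * (x / (2 * (y + 1))) := by
  have hfrac : y / (2 * (y + 1)) ≤ 1 / 2 := by
    rw [div_le_div_iff₀ (by positivity) two_pos]
    linarith
  linear_combination mul_le_mul_of_nonneg_left hfrac hx

lemma exists_card_filter_containsForbidden_ge (P : ∀ n : ℕ, Set (SimpleGraph (Fin n))) {a : ℝ}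
    (ha₀ : 0 < a) (ha₁ : a ≤ 1 / 2) (k : ℕ) :
    ∃ h : ℕ, ∃ η > 0, ∃ θ > 0, ∃ N : ℕ, ∀ {n : ℕ} {G : SimpleGraph (Fin n)} {ε β : ℝ}
      {c : Fin n → Fin k} {W : Fin k → Finset (Fin n)}, IsRegularModel G a ε η β c W →
      0 ≤ β → N ≤ β * n →
      (∀ G' ∈ P n, ε * (n : ℝ) ^ 2 < #(G.edgeFinset ∆ G'.edgeFinset)) →
      θ * (β * n) ^ (k * h) ≤
        #{x : Fin k × Fin h → Fin n | ContainsForbidden P G (Set.range x)} := by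
  obtain ⟨h, hh⟩ := exists_forbidden_size_bound P (Fin k)
  obtain ⟨ζ, hζ, N, hN⟩ := exists_isHomogeneous_supersaturation_of_finset.{0} h
  refine ⟨h, a ^ h ^ 2 * ζ ^ k / (2 * (h ^ 2 + 1)), by positivity, a ^ h ^ 2 * ζ ^ k / 2,
    by positivity, N + 1, fun {n G ε β c W} hmodel hβ hn hfar ↦ ?_⟩
  have hle_card (i : Fin k) : β * n ≤ #(W i) := by simpa using hmodel.le_card i
  have hW (i : Fin k) : N + 1 ≤ #(W i) := by exact_mod_cast hn.trans (hle_card i)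
  choose s hs using fun i ↦ hN G (W i) (N.le_succ.trans (hW i))
  obtain ⟨G', hG', hclose⟩ := hmodel.exists_isCompatible ha₁
    (fun i ↦ card_pos.1 (N.succ_pos.trans_le (hW i))) s
  rw [Fintype.card_fin] at hclose
  obtain ⟨m, hm, F, hFP, c', hF⟩ := hh _ ⟨n, G', fun hG'P ↦ (hfar G' hG'P).not_ge hclose, c, hG'⟩
  have hcount := card_filter_exists_embedding_ge_of_isCompatible hm ha₀.le (by linarith)
    (by positivity) hζ.le hF hmodel.disjoint hmodel.isCutRegular hs
  have hpi : (β * n) ^ (k * h) ≤ #(Fintype.piFinset fun p : Fin k × Fin h ↦ W p.1) := by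
    rw [Fintype.card_piFinset, Nat.cast_prod]
    calc (β * n) ^ (k * h) = ∏ _p : Fin k × Fin h, β * (n : ℝ) := by simp
      _ ≤ _ := prod_le_prod (fun p _ ↦ by positivity) fun p _ ↦ hle_card p.1
  rw [Fintype.card_fin] at hcount
  calc _ ≤ _ := mul_le_mul (half_le_sub_mul_div (by positivity) (by positivity)) hpi
        (by positivity)
        (half_le_sub_mul_div (by positivity) (by positivity) |>.trans' (by positivity))
    _ ≤ _ := hcount
    _ ≤ _ := Nat.cast_le.2 <|
        card_le_card_containsForbidden hFP (fun u ↦ (c' u, Fin.castLE hm u))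
          fun x hx ↦ by simp only [mem_filter] at hx; exact hx.2

lemma card_containsForbidden_ge_of_embedding [Fintype V] [Nonempty V] {G : SimpleGraph V}
    {ι ι' : Type*} [Fintype ι] [Fintype ι'] [DecidableEq ι] [DecidableEq ι'] (e : ι ↪ ι') {δ : ℝ}
    (h : δ * (Fintype.card V : ℝ) ^ Fintype.card ι ≤
      #{x : ι → V | ContainsForbidden P G (Set.range x)}) :
    δ * (Fintype.card V : ℝ) ^ Fintype.card ι' ≤
      #{x : ι' → V | ContainsForbidden P G (Set.range x)} := by
  have hpos : (0 : ℝ) < (Fintype.card V : ℝ) ^ Fintype.card ι :=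
    pow_pos (Nat.cast_pos.2 Fintype.card_pos) _
  have hmarg : (#{x : ι' → V | ContainsForbidden P G (Set.range (x ∘ e))} : ℝ) *
      (Fintype.card V : ℝ) ^ Fintype.card ι = #{x : ι → V | ContainsForbidden P G (Set.range x)} *
        (Fintype.card V : ℝ) ^ Fintype.card ι' :=
    mod_cast card_filter_comp_embedding e fun x : ι → V ↦ ContainsForbidden P G (Set.range x)
  have hle : δ * (Fintype.card V : ℝ) ^ Fintype.card ι' ≤
      #{x : ι' → V | ContainsForbidden P G (Set.range (x ∘ e))} := by
    refine le_of_mul_le_mul_right ?_ hpos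
    rw [hmarg, mul_right_comm]
    gcongr
  refine hle.trans (Nat.cast_le.2 (card_le_card (monotone_filter_right _ fun x _ hx ↦ ?_)))
  exact hx.mono (Set.range_comp_subset_range e x)

theorem exists_removal (P : ∀ n : ℕ, Set (SimpleGraph (Fin n))) {ε : ℝ} (hε : 0 < ε) :
    ∃ M : ℕ, ∃ δ > 0, ∃ N : ℕ, ∀ {n : ℕ} (G : SimpleGraph (Fin n)), N ≤ n →
      (∀ G' ∈ P n, ε * (n : ℝ) ^ 2 ≤ #(G.edgeFinset ∆ G'.edgeFinset)) →
      δ * (n : ℝ) ^ M ≤ #{x : Fin M → Fin n | ContainsForbidden P G (Set.range x)} := by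
  obtain ⟨a, ha₀, ha₁, hmodel⟩ := exists_isRegularModel.{0} (half_pos hε)
  choose h η hη θ hθ N hN using exists_card_filter_containsForbidden_ge P ha₀ ha₁
  obtain ⟨K, β, hβ, hK⟩ := hmodel η hη
  obtain ⟨δ, hδ, hδ_le⟩ := exists_pos_le_of_le (fun k ↦ θ k * β ^ (k * h k))
    (fun k ↦ mul_pos (hθ k) (pow_pos hβ _)) K
  have hsup {f : ℕ → ℕ} {k : ℕ} (hk : k ≤ K) : f k ≤ (range (K + 1)).sup f :=
    le_sup (mem_range.2 (Nat.lt_succ_of_le hk))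
  refine ⟨(range (K + 1)).sup fun k ↦ k * h k, δ, hδ, ⌈(range (K + 1)).sup N / β⌉₊ + 1,
    fun {n} G hn hfar ↦ ?_⟩
  have : Nonempty (Fin n) := ⟨⟨0, by lia⟩⟩
  obtain ⟨k, hk, c, W, hW⟩ := hK (Fin n) G
  have hn₀ : (0 : ℝ) < n := by exact_mod_cast (by lia : 0 < n)
  have hNn : (N k : ℝ) ≤ β * n := by
    calc (N k : ℝ) ≤ (range (K + 1)).sup N := mod_cast hsup hk
      _ ≤ β * n := (div_le_iff₀' hβ).1 (Nat.ceil_le.1 (Nat.le_of_succ_le hn))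
  have hcount := hN k hW hβ.le hNn fun G' hG' ↦
    (mul_lt_mul_of_pos_right (half_lt_self hε) (pow_pos hn₀ 2)).trans_le (hfar G' hG')
  obtain ⟨e⟩ : Nonempty (Fin k × Fin (h k) ↪ Fin ((range (K + 1)).sup fun k ↦ k * h k)) :=
    Function.Embedding.nonempty_of_card_le (by simpa using hsup (f := fun k ↦ k * h k) hk)
  have hδ' : δ * (n : ℝ) ^ (k * h k) ≤
      #{x : Fin k × Fin (h k) → Fin n | ContainsForbidden P G (Set.range x)} := by
    refine le_trans ?_ hcount
    rw [mul_pow, ← mul_assoc]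
    gcongr
    exact hδ_le k hk
  simpa using card_containsForbidden_ge_of_embedding (V := Fin n) (P := P) (G := G) (δ := δ) e
    (by simpa using hδ')

end

/-! ### Amplification and monotonicity -/

section
variable {V : Type*} [Fintype V] {good : Finset V → Prop}

lemma card_filter_powersetCard_div_anti (hgood : Antitone good) {r k : ℕ} (hrk : r ≤ k) :
    (#{S ∈ powersetCard k (univ : Finset V) | good S} : ℝ) / (Fintype.card V).choose k ≤
      #{S ∈ powersetCard r (univ : Finset V) | good S} / (Fintype.card V).choose r := by
  induction k, hrk using Nat.le_induction with
  | base => exact le_rfl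
  | succ k _ ih =>
    refine (local_lubell_yamamoto_meshalkin_inequality_div k.succ_ne_zero ?_).trans (le_trans ?_ ih)
    · exact fun S hS ↦ (mem_powersetCard.1 (mem_filter.1 hS).1).2
    · rw [Nat.succ_sub_one]
      gcongr
      intro S hS
      obtain ⟨T, hT, v, hv, rfl⟩ := mem_shadow_iff.1 hS
      obtain ⟨hTk, hTgood⟩ := mem_filter.1 hT
      refine mem_filter.2 ⟨mem_powersetCard.2 ⟨subset_univ _, ?_⟩, hgood (erase_subset v T) hTgood⟩
      rw [card_erase_of_mem hv, (mem_powersetCard.1 hTk).2, Nat.succ_sub_one]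

variable {ι κ τ : Type*} [Fintype ι] [DecidableEq ι] [Fintype κ] [DecidableEq κ] [Fintype τ]
  [DecidableEq τ]

lemma factorial_le_card_filter_image_eq {S : Finset V} (hS : #S = Fintype.card ι) :
    (Fintype.card ι).factorial ≤ #{x : ι → V | univ.image x = S} := by
  have hcard : Fintype.card ι = Fintype.card S := by rw [Fintype.card_coe, hS]
  rw [← Fintype.card_equiv (Fintype.equivOfCardEq hcard), ← card_univ]
  refine card_le_card_of_injOn (fun e i ↦ (e i : V)) (fun e _ ↦ ?_) ?_
  · have : univ.image (fun i ↦ (e i : V)) = S := by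
      ext v
      simp only [mem_image, mem_univ, true_and]
      exact ⟨fun ⟨i, hi⟩ ↦ hi ▸ (e i).2, fun hv ↦ ⟨e.symm ⟨v, hv⟩, by simp⟩⟩
    exact mem_filter.2 ⟨mem_univ _, this⟩
  · exact fun e _ e' _ h ↦ Equiv.ext fun i ↦ Subtype.ext (congrFun h i)

lemma factorial_mul_card_powersetCard_le (good : Finset V → Prop) :
    (Fintype.card ι).factorial * #{S ∈ powersetCard (Fintype.card ι) (univ : Finset V) | good S} ≤
      #{x : ι → V | good (univ.image x)} := by
  set A := {S ∈ powersetCard (Fintype.card ι) (univ : Finset V) | good S}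
  calc (Fintype.card ι).factorial * #A = ∑ _S ∈ A, (Fintype.card ι).factorial := by
        rw [sum_const, smul_eq_mul, mul_comm]
    _ ≤ ∑ S ∈ A, #{x : ι → V | univ.image x = S} := sum_le_sum fun S hS ↦
        factorial_le_card_filter_image_eq (mem_powersetCard.1 (mem_filter.1 hS).1).2
    _ = #{x : ι → V | univ.image x ∈ A} := sum_card_fiberwise_eq_card_filter _ _ _
    _ ≤ #{x : ι → V | good (univ.image x)} :=
        card_le_card (monotone_filter_right _ fun x _ hx ↦ (mem_filter.1 hx).2)

lemma card_filter_image_prod_le (hgood : Antitone good) :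
    #{x : κ × τ → V | good (univ.image x)} ≤
      #{y : τ → V | good (univ.image y)} ^ Fintype.card κ := by
  have hrows := card_filter_forall_row (fun _ : κ ↦ (univ : Finset V))
    fun _ (y : τ → V) ↦ good (univ.image y)
  simp only [Fintype.piFinset_univ, prod_const, card_univ] at hrows
  rw [← hrows]
  exact card_le_card (monotone_filter_right _ fun x _ hx i ↦
    hgood (image_subset_iff.2 fun j _ ↦ mem_image_of_mem x (mem_univ (i, j))) hx)

lemma card_filter_powersetCard_div_choose_le (good : Finset V → Prop)
    (hcard : 2 * Fintype.card ι ^ 2 ≤ Fintype.card V) :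
    (#{S ∈ powersetCard (Fintype.card ι) (univ : Finset V) | good S} : ℝ) /
        (Fintype.card V).choose (Fintype.card ι) ≤
      2 * #{x : ι → V | good (univ.image x)} / (Fintype.card V : ℝ) ^ Fintype.card ι := by
  set t := Fintype.card ι
  set n := Fintype.card V
  have hpow : (n : ℝ) ^ t ≤ 2 * (t.factorial * n.choose t) := by
    exact_mod_cast (pow_le_two_mul_descFactorial hcard).trans_eq
      (by rw [Nat.descFactorial_eq_factorial_mul_choose])
  have hfact : (t.factorial : ℝ) * #{S ∈ powersetCard t (univ : Finset V) | good S} ≤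
      #{x : ι → V | good (univ.image x)} := mod_cast factorial_mul_card_powersetCard_le good
  have htn : t ≤ n := by nlinarith
  have hchoose : (0 : ℝ) < n.choose t := Nat.cast_pos.2 (Nat.choose_pos htn)
  have hn : (0 : ℝ) < (n : ℝ) ^ t := by
    rcases n.eq_zero_or_pos with hn | hn
    · simp [Nat.le_zero.1 (hn ▸ htn)]
    · positivity
  rw [div_le_div_iff₀ hchoose hn]
  calc _ ≤ (#{S ∈ powersetCard t (univ : Finset V) | good S} : ℝ) *
        (2 * (t.factorial * n.choose t)) := by gcongr
    _ = 2 * (t.factorial * #{S ∈ powersetCard t (univ : Finset V) | good S}) * n.choose t := by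
        ring
    _ ≤ _ := by gcongr

theorem exists_sampling_bound (M : ℕ) {δ : ℝ} (hδ : 0 < δ) :
    ∃ k₀, ∀ {V : Type*} [Fintype V] {good : Finset V → Prop}, Antitone good →
      δ * (Fintype.card V : ℝ) ^ M ≤ #{x : Fin M → V | ¬good (univ.image x)} →
      ∀ k, k₀ ≤ k → k ≤ Fintype.card V →
        (#{S ∈ powersetCard k (univ : Finset V) | good S} : ℝ) ≤
          1 / 3 * #(powersetCard k (univ : Finset V)) := by
  obtain ⟨t, ht⟩ := exists_pow_lt_of_lt_one (by norm_num : (0 : ℝ) < 1 / 6) (sub_lt_self 1 hδ)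
  refine ⟨2 * (t * M) ^ 2, fun {V} _ good hgood hbad k hk hkn ↦ ?_⟩
  set n := Fintype.card V
  have hgood_card : (#{x : Fin M → V | good (univ.image x)} : ℝ) ≤ (1 - δ) * n ^ M := by
    have := card_filter_add_card_filter_not (s := (univ : Finset (Fin M → V)))
      (fun x ↦ good (univ.image x))
    rw [card_univ, Fintype.card_fun, Fintype.card_fin] at this
    have : (#{x : Fin M → V | good (univ.image x)} : ℝ) +
      #{x : Fin M → V | ¬good (univ.image x)} = n ^ M := mod_cast this
    linarith
  have htuples : (#{x : Fin t × Fin M → V | good (univ.image x)} : ℝ) ≤ 1 / 6 * n ^ (t * M) := by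
    calc (#{x : Fin t × Fin M → V | good (univ.image x)} : ℝ)
        ≤ (#{x : Fin M → V | good (univ.image x)} : ℝ) ^ t := by
          have := card_filter_image_prod_le (κ := Fin t) (τ := Fin M) hgood
          rw [Fintype.card_fin] at this
          exact_mod_cast this
      _ ≤ ((1 - δ) * n ^ M) ^ t := by gcongr
      _ = (1 - δ) ^ t * n ^ (t * M) := by rw [mul_pow, ← pow_mul, mul_comm M]
      _ ≤ 1 / 6 * n ^ (t * M) := by gcongr
  have hle : t * M ≤ k := by nlinarith
  have hsets := card_filter_powersetCard_div_choose_le (ι := Fin t × Fin M) good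
    (by simpa using hk.trans hkn)
  rw [Fintype.card_prod, Fintype.card_fin, Fintype.card_fin] at hsets
  have hthird := (card_filter_powersetCard_div_anti hgood hle).trans hsets
  rw [card_powersetCard, card_univ, ← div_le_iff₀ (Nat.cast_pos.2 (Nat.choose_pos hkn))]
  refine hthird.trans (div_le_of_le_mul₀ (by positivity) (by norm_num) ?_)
  linarith

end

section
variable {P : ∀ n : ℕ, Set (SimpleGraph (Fin n))} {m n : ℕ}

lemma IsGraphProperty.mem_of_iso (hP : IsGraphProperty P) {F : SimpleGraph (Fin m)}
    {G : SimpleGraph (Fin n)} (e : F ≃g G) (hF : F ∈ P m) : G ∈ P n := by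
  obtain rfl : m = n := Fin.equiv_iff_eq.1 ⟨e.toEquiv⟩
  exact hP m F G ⟨e⟩ hF

/-- The inclusion of the induced subgraph on `S`. -/
noncomputable def inducedCopyEmbedding (G : SimpleGraph (Fin n)) (S : Finset (Fin n)) :
    inducedCopy G S ↪g G :=
  ⟨(S.orderEmbOfFin rfl).toEmbedding, Iff.rfl⟩

lemma range_inducedCopyEmbedding (G : SimpleGraph (Fin n)) (S : Finset (Fin n)) :
    Set.range (inducedCopyEmbedding G S) = S :=
  S.range_orderEmbOfFin rfl

lemma nonempty_embedding_inducedCopy {F : SimpleGraph (Fin m)} {G : SimpleGraph (Fin n)}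
    {S : Finset (Fin n)} (f : F ↪g G) (hf : Set.range f ⊆ S) : Nonempty (F ↪g inducedCopy G S) := by
  rw [← range_inducedCopyEmbedding G S] at hf
  choose g hg using fun u ↦ hf ⟨u, rfl⟩
  refine ⟨⟨⟨g, fun u v huv ↦ f.injective ?_⟩, fun {u v} ↦ ?_⟩⟩
  · rw [← hg u, ← hg v, huv]
  · rw [← f.map_adj_iff, ← hg u, ← hg v, (inducedCopyEmbedding G S).map_adj_iff]
    rfl

lemma IsHereditary.mem_of_embedding (hP : IsHereditary P) {F : SimpleGraph (Fin m)}
    {G : SimpleGraph (Fin n)} (f : F ↪g G) (hG : G ∈ P n) : F ∈ P m := by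
  obtain ⟨g⟩ := nonempty_embedding_inducedCopy (S := univ.map f.toEmbedding) f (by simp)
  have hg : Function.Bijective g :=
    (Fintype.bijective_iff_injective_and_card g).2 ⟨g.injective, by simp⟩
  exact hP.1.mem_of_iso (RelIso.ofSurjective g hg.2).symm (hP.2 n G hG _)

lemma IsHereditary.antitone_inducedCopy (hP : IsHereditary P) (G : SimpleGraph (Fin n)) :
    Antitone fun S : Finset (Fin n) ↦ inducedCopy G S ∈ P #S := by
  intro S T hST hT
  obtain ⟨f⟩ := nonempty_embedding_inducedCopy (inducedCopyEmbedding G S)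
    ((range_inducedCopyEmbedding G S).trans_subset (coe_subset.2 hST))
  exact hP.mem_of_embedding f hT

lemma IsHereditary.notMem_of_containsForbidden (hP : IsHereditary P) {G : SimpleGraph (Fin n)}
    {S : Finset (Fin n)} (h : ContainsForbidden P G S) : inducedCopy G S ∉ P #S := by
  obtain ⟨m, F, hF, f, hf⟩ := h
  obtain ⟨g⟩ := nonempty_embedding_inducedCopy f hf
  exact fun hS ↦ hF (hP.mem_of_embedding g hS)

end

theorem IsHereditary.exists_sample_size {P : ∀ n : ℕ, Set (SimpleGraph (Fin n))}
    (hP : IsHereditary P) {ε : ℝ} (hε : 0 < ε) :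
    ∃ k₀ : ℕ, ∀ (n : ℕ) (G : SimpleGraph (Fin n)),
      (∀ G' ∈ P n, ε * (n : ℝ) ^ 2 ≤ #(G.edgeFinset ∆ G'.edgeFinset)) →
      ∀ k, k₀ ≤ k → k ≤ n →
        (#{S ∈ powersetCard k (univ : Finset (Fin n)) | inducedCopy G S ∈ P #S} : ℝ) ≤
          1 / 3 * #(powersetCard k (univ : Finset (Fin n))) := by
  obtain ⟨M, δ, hδ, N, hremoval⟩ := exists_removal P hε
  obtain ⟨k₀, hsample⟩ := exists_sampling_bound M hδ
  refine ⟨max k₀ N, fun n G hfar k hk hkn ↦ hsample (hP.antitone_inducedCopy G) ?_ k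
    (le_of_max_le_left hk) (by rwa [Fintype.card_fin])⟩
  rw [Fintype.card_fin]
  refine (hremoval G ((le_of_max_le_right hk).trans hkn) hfar).trans
    (mod_cast card_le_card (monotone_filter_right _ fun x _ hx ↦ ?_))
  exact hP.notMem_of_containsForbidden (by simpa using hx)

/-- Alon–Shapira theorem: every hereditary graph property is testable. -/
theorem alon_shapira (P : ∀ n : ℕ, Set (SimpleGraph (Fin n))) (hP : IsHereditary P) :
    ∃ P' : ∀ n : ℕ, Set (SimpleGraph (Fin n)),
      (∀ (n : ℕ) (G : SimpleGraph (Fin n)), G ∈ P n →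
        ∀ k : ℕ, 1 ≤ k → k ≤ n →
          (2/3 : ℝ) * ((Finset.powersetCard k (Finset.univ : Finset (Fin n))).card : ℝ) ≤
            (((Finset.powersetCard k (Finset.univ : Finset (Fin n))).filter
              (fun S : Finset (Fin n) => inducedCopy G S ∈ P' S.card)).card : ℝ)) ∧
      (∀ ε : ℝ, 0 < ε → ∃ kε : ℕ, 1 ≤ kε ∧
        ∀ (n : ℕ) (G : SimpleGraph (Fin n)),
          (∀ G' : SimpleGraph (Fin n), G' ∈ P n →
            ε * (n : ℝ) ^ 2 ≤ ((G.edgeFinset ∆ G'.edgeFinset).card : ℝ)) →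
          ∀ k : ℕ, kε ≤ k → k ≤ n →
            (((Finset.powersetCard k (Finset.univ : Finset (Fin n))).filter
                (fun S : Finset (Fin n) => inducedCopy G S ∈ P' S.card)).card : ℝ) ≤
              (1/3 : ℝ) * ((Finset.powersetCard k (Finset.univ : Finset (Fin n))).card : ℝ)) := by
  refine ⟨P, fun n G hG k _ _ ↦ ?_, fun ε hε ↦ ?_⟩
  · rw [filter_true_of_mem fun S _ ↦ hP.2 n G hG S]
    exact mul_le_of_le_one_left (Nat.cast_nonneg _) (by norm_num)
  · obtain ⟨k₀, hk₀⟩ := hP.exists_sample_size hε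
    exact ⟨max k₀ 1, le_max_right k₀ 1, fun n G hfar k hk hkn ↦
      hk₀ n G hfar k (le_of_max_le_left hk) hkn⟩
end
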